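/- Let μ be a Borel probability measure on SL₂(ℝ) with a finite exponential moment whose support generates a Zariski dense subgroup. There exist constants C > 0 and ε' > 0 such that for all s > 0, a > 0, t > 5s, and all x, x' ∈ X, Σ_{n≥0} μ^{*n}{ g : d(gx, x') ≤ e^{−s} and σ(g,x) − t ∈ [0, a] } ≤ C (1 + a)² e^{−ε' s}. -/

import Mathlib

open MeasureTheory Filter

noncomputable section

abbrev SL2 := Matrix.SpecialLinearGroup (Fin 2) ℝ

abbrev PX := Projectivization ℝ (Fin 2 → ℝ)

instance : TopologicalSpace SL2 := instTopologicalSpaceSubtype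
instance : TopologicalSpace PX := instTopologicalSpaceQuotient
instance : MeasurableSpace SL2 := borel _
instance : MeasurableSpace PX := borel _

/-- Euclidean norm on ℝ². -/
def enorm2 (v : Fin 2 → ℝ) : ℝ := Real.sqrt (v 0 ^ 2 + v 1 ^ 2)

/-- Operator norm of g ∈ SL₂(ℝ) w.r.t. the Euclidean norm on ℝ². -/
def opNorm (g : SL2) : ℝ :=
  ‖Matrix.toEuclideanCLM (𝕜 := ℝ) (n := Fin 2) (g : Matrix (Fin 2) (Fin 2) ℝ)‖

/-- Cartan projection κ(g) = log ‖g‖. -/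
def kappa (g : SL2) : ℝ := Real.log (opNorm g)

/-- The projective action of SL₂(ℝ) on ℙ(ℝ²). -/
def act (g : SL2) (x : PX) : PX :=
  Projectivization.map ((Matrix.SpecialLinearGroup.toLin' g).toLinearMap)
    (LinearEquiv.injective _) x

/-- The norm cocycle σ(g, ℝv) = log (‖gv‖/‖v‖). -/
def cocycle (g : SL2) (x : PX) : ℝ :=
  Real.log (enorm2 ((g : Matrix (Fin 2) (Fin 2) ℝ).mulVec x.rep) / enorm2 x.rep)

/-- The sine distance d(ℝv, ℝw) = |det(v,w)|/(‖v‖‖w‖) on ℙ(ℝ²). -/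
def projDist (x y : PX) : ℝ :=
  |x.rep 0 * y.rep 1 - x.rep 1 * y.rep 0| / (enorm2 x.rep * enorm2 y.rep)

/-- An angle θ(x) ∈ ℝ representing x = ℝ(cos θ, sin θ). -/
def pangle (x : PX) : ℝ := Complex.arg (x.rep 0 + x.rep 1 * Complex.I)

/-- The (topological) support of a measure. -/
def measSupp (μ : Measure SL2) : Set SL2 :=
  {g | ∀ U : Set SL2, IsOpen U → g ∈ U → 0 < μ U}

/-- μ has a finite exponential moment. -/
def HasExpMoment (μ : Measure SL2) : Prop :=
  ∃ ε₁ > (0 : ℝ), ∫⁻ g, ENNReal.ofReal (opNorm g ^ ε₁) ∂μ < ⊤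

/-- The group generated by the support of μ is Zariski dense in SL₂(ℝ),
equivalently it is not solvable. -/
def ZariskiDense (μ : Measure SL2) : Prop :=
  ¬ IsSolvable (Subgroup.closure (measSupp μ))

/-- ν is μ-stationary: μ ∗ ν = ν. -/
def IsStationaryMeas (μ : Measure SL2) (ν : Measure PX) : Prop :=
  μ.bind (fun g => ν.map (act g)) = ν

/-- The product g₁ ⋯ gₙ of a word (g₁, …, gₙ). -/
def word {n : ℕ} (g : Fin n → SL2) : SL2 := (List.ofFn g).prod

/-- The product measure μ^{⊗n} on words of length n. -/
def μpi (μ : Measure SL2) (n : ℕ) : Measure (Fin n → SL2) := Measure.pi fun _ => μ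


/-! ### Basic instances and matrix entries -/

instance instTopGroupSL2 : IsTopologicalGroup SL2 := Matrix.SpecialLinearGroup.topologicalGroup
instance instSCMat2 : SecondCountableTopology (Matrix (Fin 2) (Fin 2) ℝ) :=
  inferInstanceAs (SecondCountableTopology (Fin 2 → Fin 2 → ℝ))
instance instSCSL2 : SecondCountableTopology SL2 :=
  TopologicalSpace.Subtype.secondCountableTopology _
instance instT2SL2 : T2Space SL2 :=
  inferInstanceAs (T2Space {A : Matrix (Fin 2) (Fin 2) ℝ // A.det = 1})
instance instBorelSL2 : BorelSpace SL2 := ⟨rfl⟩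

def eA (g : SL2) : ℝ := g.1 0 0
def eB (g : SL2) : ℝ := g.1 0 1
def eC (g : SL2) : ℝ := g.1 1 0
def eD (g : SL2) : ℝ := g.1 1 1

@[fun_prop] lemma continuous_eA : Continuous eA := by unfold eA; fun_prop
@[fun_prop] lemma continuous_eB : Continuous eB := by unfold eB; fun_prop
@[fun_prop] lemma continuous_eC : Continuous eC := by unfold eC; fun_prop
@[fun_prop] lemma continuous_eD : Continuous eD := by unfold eD; fun_prop

lemma e_det (g : SL2) : eA g * eD g - eB g * eC g = 1 := by
  have := g.2
  rw [Matrix.det_fin_two] at this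
  exact this

lemma eA_mul (g h : SL2) : eA (g * h) = eA g * eA h + eB g * eC h := by
  simp [eA, eB, eC, Matrix.mul_apply, Fin.sum_univ_two]
lemma eB_mul (g h : SL2) : eB (g * h) = eA g * eB h + eB g * eD h := by
  simp [eA, eB, eD, Matrix.mul_apply, Fin.sum_univ_two]
lemma eC_mul (g h : SL2) : eC (g * h) = eC g * eA h + eD g * eC h := by
  simp [eA, eC, eD, Matrix.mul_apply, Fin.sum_univ_two]
lemma eD_mul (g h : SL2) : eD (g * h) = eC g * eB h + eD g * eD h := by
  simp [eB, eC, eD, Matrix.mul_apply, Fin.sum_univ_two]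
lemma eA_one : eA 1 = 1 := by simp [eA]
lemma eB_one : eB 1 = 0 := by simp [eB]
lemma eC_one : eC 1 = 0 := by simp [eC]
lemma eD_one : eD 1 = 1 := by simp [eD]
lemma eA_inv (g : SL2) : eA g⁻¹ = eD g := by
  simp [eA, eD, Matrix.SpecialLinearGroup.coe_inv, Matrix.adjugate_fin_two]
lemma eB_inv (g : SL2) : eB g⁻¹ = - eB g := by
  simp [eB, Matrix.SpecialLinearGroup.coe_inv, Matrix.adjugate_fin_two]
lemma eC_inv (g : SL2) : eC g⁻¹ = - eC g := by
  simp [eC, Matrix.SpecialLinearGroup.coe_inv, Matrix.adjugate_fin_two]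
lemma eD_inv (g : SL2) : eD g⁻¹ = eA g := by
  simp [eA, eD, Matrix.SpecialLinearGroup.coe_inv, Matrix.adjugate_fin_two]

lemma SL2_ext {g h : SL2} (a : eA g = eA h) (b : eB g = eB h) (c : eC g = eC h)
    (d : eD g = eD h) : g = h := by
  apply Matrix.SpecialLinearGroup.ext
  intro i j
  fin_cases i <;> fin_cases j
  · exact a
  · exact b
  · exact c
  · exact d

/-- squared Hilbert-Schmidt norm -/
def hs (g : SL2) : ℝ := eA g ^ 2 + eB g ^ 2 + eC g ^ 2 + eD g ^ 2

@[fun_prop] lemma continuous_hs : Continuous hs := by unfold hs; fun_prop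

lemma two_le_hs (g : SL2) : 2 ≤ hs g := by
  have := e_det g
  unfold hs
  nlinarith [sq_nonneg (eA g - eD g), sq_nonneg (eB g + eC g)]

lemma hs_pos (g : SL2) : 0 < hs g := by linarith [two_le_hs g]
lemma one_le_hs (g : SL2) : 1 ≤ hs g := by linarith [two_le_hs g]

lemma hs_inv (g : SL2) : hs g⁻¹ = hs g := by
  unfold hs; rw [eA_inv, eB_inv, eC_inv, eD_inv]; ring

lemma hs_mul_le (g h : SL2) : hs (g * h) ≤ hs g * hs h := by
  unfold hs; rw [eA_mul, eB_mul, eC_mul, eD_mul]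
  nlinarith [sq_nonneg (eA g * eC h - eB g * eA h), sq_nonneg (eA g * eD h - eB g * eB h),
    sq_nonneg (eC g * eC h - eD g * eA h), sq_nonneg (eC g * eD h - eD g * eB h)]

/-! ### The circle -/

abbrev Sph := {p : ℝ × ℝ // p.1 ^ 2 + p.2 ^ 2 = 1}

instance instCompactSph : CompactSpace Sph := by
  refine (isCompact_iff_compactSpace (s := {p : ℝ × ℝ | p.1 ^ 2 + p.2 ^ 2 = 1})).1 ?_
  apply Metric.isCompact_of_isClosed_isBounded
  · exact isClosed_eq (by fun_prop) (by fun_prop)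
  · rw [isBounded_iff_forall_norm_le]
    refine ⟨1, fun p hp => ?_⟩
    have hp' : p.1 ^ 2 + p.2 ^ 2 = 1 := hp
    rw [Prod.norm_def]
    apply max_le
    · rw [Real.norm_eq_abs, abs_le]; constructor <;> nlinarith [sq_nonneg p.1, sq_nonneg p.2]
    · rw [Real.norm_eq_abs, abs_le]; constructor <;> nlinarith [sq_nonneg p.1, sq_nonneg p.2]

instance instNonemptySph : Nonempty Sph := ⟨⟨(1, 0), by norm_num⟩⟩

def sx (v : Sph) : ℝ := v.1.1
def sy (v : Sph) : ℝ := v.1.2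
@[fun_prop] lemma continuous_sx : Continuous sx := by unfold sx; fun_prop
@[fun_prop] lemma continuous_sy : Continuous sy := by unfold sy; fun_prop
lemma s_eq (v : Sph) : sx v ^ 2 + sy v ^ 2 = 1 := v.2
lemma Sph_ext {v w : Sph} (h1 : sx v = sx w) (h2 : sy v = sy w) : v = w :=
  Subtype.ext (Prod.ext h1 h2)

/-- first coordinate of `g v` -/
def lx (g : SL2) (v : Sph) : ℝ := eA g * sx v + eB g * sy v
def ly (g : SL2) (v : Sph) : ℝ := eC g * sx v + eD g * sy v
/-- norm of `g v` -/
def nv (g : SL2) (v : Sph) : ℝ := Real.sqrt (lx g v ^ 2 + ly g v ^ 2)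

lemma nv_sq_pos (g : SL2) (v : Sph) : 0 < lx g v ^ 2 + ly g v ^ 2 := by
  have hd := e_det g
  have hv := s_eq v
  by_contra h
  have h1 : lx g v = 0 := by nlinarith [sq_nonneg (lx g v), sq_nonneg (ly g v)]
  have h2 : ly g v = 0 := by nlinarith [sq_nonneg (lx g v), sq_nonneg (ly g v)]
  have h3 : sx v = eD g * lx g v - eB g * ly g v := by
    unfold lx ly; linear_combination (-sx v) * hd
  have h4 : sy v = -eC g * lx g v + eA g * ly g v := by
    unfold lx ly; linear_combination (-sy v) * hd
  rw [h1, h2] at h3 h4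
  simp at h3 h4
  rw [h3, h4] at hv; norm_num at hv

lemma nv_pos (g : SL2) (v : Sph) : 0 < nv g v := Real.sqrt_pos.2 (nv_sq_pos g v)
lemma nv_ne (g : SL2) (v : Sph) : nv g v ≠ 0 := (nv_pos g v).ne'
lemma nv_sq (g : SL2) (v : Sph) : nv g v ^ 2 = lx g v ^ 2 + ly g v ^ 2 :=
  Real.sq_sqrt (nv_sq_pos g v).le

/-- action on the circle -/
def sact (g : SL2) (v : Sph) : Sph :=
  ⟨(lx g v / nv g v, ly g v / nv g v), by
    have := nv_sq g v
    have h0 := nv_ne g v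
    field_simp
    linarith⟩

lemma sx_sact (g : SL2) (v : Sph) : sx (sact g v) = lx g v / nv g v := rfl
lemma sy_sact (g : SL2) (v : Sph) : sy (sact g v) = ly g v / nv g v := rfl

lemma continuous_lx : Continuous (fun p : SL2 × Sph => lx p.1 p.2) := by unfold lx; fun_prop
lemma continuous_ly : Continuous (fun p : SL2 × Sph => ly p.1 p.2) := by unfold ly; fun_prop
lemma continuous_nv : Continuous (fun p : SL2 × Sph => nv p.1 p.2) := by
  unfold nv
  have := continuous_lx; have := continuous_ly
  fun_prop
lemma continuous_sact : Continuous (fun p : SL2 × Sph => sact p.1 p.2) := by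
  unfold sact
  refine Continuous.subtype_mk ?_ _
  exact (continuous_lx.div continuous_nv (fun p => nv_ne _ _)).prodMk
    (continuous_ly.div continuous_nv (fun p => nv_ne _ _))

@[fun_prop] lemma Continuous.nv' {α : Type*} [TopologicalSpace α] {f : α → SL2} {k : α → Sph}
    (hf : Continuous f) (hk : Continuous k) : Continuous (fun a => nv (f a) (k a)) :=
  continuous_nv.comp (hf.prodMk hk)
@[fun_prop] lemma Continuous.sact' {α : Type*} [TopologicalSpace α] {f : α → SL2} {k : α → Sph}
    (hf : Continuous f) (hk : Continuous k) : Continuous (fun a => sact (f a) (k a)) :=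
  continuous_sact.comp (hf.prodMk hk)
@[fun_prop] lemma Measurable.nv' {α : Type*} [MeasurableSpace α] {f : α → SL2} {k : α → Sph}
    (hf : Measurable f) (hk : Measurable k) : Measurable (fun a => nv (f a) (k a)) :=
  continuous_nv.measurable.comp (hf.prodMk hk)
@[fun_prop] lemma Measurable.sact' {α : Type*} [MeasurableSpace α] {f : α → SL2} {k : α → Sph}
    (hf : Measurable f) (hk : Measurable k) : Measurable (fun a => sact (f a) (k a)) :=
  continuous_sact.measurable.comp (hf.prodMk hk)
@[fun_prop] lemma measurable_hs : Measurable hs := continuous_hs.measurable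

/-- the cocycle -/
def sg (g : SL2) (v : Sph) : ℝ := Real.log (nv g v)

@[fun_prop] lemma Continuous.sg' {α : Type*} [TopologicalSpace α] {f : α → SL2} {k : α → Sph}
    (hf : Continuous f) (hk : Continuous k) : Continuous (fun a => sg (f a) (k a)) := by
  unfold sg
  exact Continuous.log (hf.nv' hk) (fun a => nv_ne _ _)
@[fun_prop] lemma Measurable.sg' {α : Type*} [MeasurableSpace α] {f : α → SL2} {k : α → Sph}
    (hf : Measurable f) (hk : Measurable k) : Measurable (fun a => sg (f a) (k a)) := by
  unfold sg
  exact Real.measurable_log.comp (hf.nv' hk)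

lemma exp_sg (g : SL2) (v : Sph) : Real.exp (sg g v) = nv g v := Real.exp_log (nv_pos g v)

lemma lx_mul (g h : SL2) (v : Sph) : lx (g * h) v = nv h v * lx g (sact h v) := by
  have := nv_ne h v
  unfold lx; rw [sx_sact, sy_sact, eA_mul, eB_mul]; field_simp; unfold lx ly; ring
lemma ly_mul (g h : SL2) (v : Sph) : ly (g * h) v = nv h v * ly g (sact h v) := by
  have := nv_ne h v
  unfold ly; rw [sx_sact, sy_sact, eC_mul, eD_mul]; field_simp; unfold lx ly; ring

lemma nv_mul (g h : SL2) (v : Sph) : nv (g * h) v = nv g (sact h v) * nv h v := by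
  rw [← sq_eq_sq₀ (nv_pos _ _).le (mul_pos (nv_pos _ _) (nv_pos _ _)).le, nv_sq, mul_pow,
    nv_sq g, lx_mul, ly_mul]; ring
lemma sact_mul (g h : SL2) (v : Sph) : sact (g * h) v = sact g (sact h v) := by
  have h1 := nv_ne h v
  have h2 := nv_ne g (sact h v)
  apply Sph_ext
  · rw [sx_sact, sx_sact g, lx_mul, nv_mul]; field_simp
  · rw [sy_sact, sy_sact g, ly_mul, nv_mul]; field_simp
lemma nv_one (v : Sph) : nv 1 v = 1 := by
  unfold nv lx ly; rw [eA_one, eB_one, eC_one, eD_one]; simp [s_eq]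
lemma sact_one (v : Sph) : sact 1 v = v := by
  apply Sph_ext
  · rw [sx_sact, nv_one]; simp [lx, eA_one, eB_one]
  · rw [sy_sact, nv_one]; simp [ly, eC_one, eD_one]
lemma sg_mul (g h : SL2) (v : Sph) : sg (g * h) v = sg g (sact h v) + sg h v := by
  unfold sg; rw [nv_mul, Real.log_mul (nv_ne _ _) (nv_ne _ _)]
lemma sg_one (v : Sph) : sg 1 v = 0 := by unfold sg; rw [nv_one]; simp

lemma nv_sq_le (g : SL2) (v : Sph) : nv g v ^ 2 ≤ hs g := by
  rw [nv_sq]; have := s_eq v; unfold lx ly hs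
  have h1 : (eA g * sx v + eB g * sy v) ^ 2 ≤ (eA g ^ 2 + eB g ^ 2) * (sx v ^ 2 + sy v ^ 2) := by
    nlinarith [sq_nonneg (eA g * sy v - eB g * sx v)]
  have h2 : (eC g * sx v + eD g * sy v) ^ 2 ≤ (eC g ^ 2 + eD g ^ 2) * (sx v ^ 2 + sy v ^ 2) := by
    nlinarith [sq_nonneg (eC g * sy v - eD g * sx v)]
  rw [this] at h1 h2
  linarith

lemma nv_inv_sact (g : SL2) (v : Sph) : nv g⁻¹ (sact g v) * nv g v = 1 := by
  rw [← nv_mul, inv_mul_cancel, nv_one]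
lemma sact_inv_sact (g : SL2) (v : Sph) : sact g⁻¹ (sact g v) = v := by
  rw [← sact_mul, inv_mul_cancel, sact_one]
lemma sact_sact_inv (g : SL2) (v : Sph) : sact g (sact g⁻¹ v) = v := by
  rw [← sact_mul, mul_inv_cancel, sact_one]

lemma one_le_hs_mul_nv (g : SL2) (v : Sph) : 1 ≤ hs g * nv g v ^ 2 := by
  have h1 := nv_inv_sact g v
  have h2 := nv_sq_le g⁻¹ (sact g v)
  rw [hs_inv] at h2
  calc (1:ℝ) = (nv g⁻¹ (sact g v) * nv g v) ^ 2 := by rw [h1]; norm_num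
    _ = nv g⁻¹ (sact g v) ^ 2 * nv g v ^ 2 := by ring
    _ ≤ _ := by gcongr

/-- log of the HS norm -/
def ln (g : SL2) : ℝ := Real.log (hs g) / 2
lemma ln_nonneg (g : SL2) : 0 ≤ ln g := by
  unfold ln; have := Real.log_nonneg (one_le_hs g); linarith
@[fun_prop] lemma continuous_ln : Continuous ln := by
  unfold ln; exact (Continuous.log continuous_hs (fun g => (hs_pos g).ne')).div_const _
@[fun_prop] lemma measurable_ln : Measurable ln := continuous_ln.measurable

lemma sg_le (g : SL2) (v : Sph) : sg g v ≤ ln g := by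
  have := Real.log_le_log (pow_pos (nv_pos g v) 2) (nv_sq_le g v)
  rw [Real.log_pow] at this
  unfold sg ln; push_cast at this; linarith
lemma neg_ln_le_sg (g : SL2) (v : Sph) : - ln g ≤ sg g v := by
  have := Real.log_le_log one_pos (one_le_hs_mul_nv g v)
  rw [Real.log_mul (hs_pos g).ne' (pow_pos (nv_pos g v) 2).ne', Real.log_pow] at this
  unfold sg ln; push_cast at this; simp at this; linarith
lemma abs_sg_le (g : SL2) (v : Sph) : |sg g v| ≤ ln g :=
  abs_le.2 ⟨neg_ln_le_sg g v, sg_le g v⟩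
lemma exp_ln (g : SL2) (r : ℝ) : Real.exp (r * ln g) = hs g ^ (r / 2) := by
  unfold ln; rw [Real.rpow_def_of_pos (hs_pos g)]; ring_nf
lemma ln_inv (g : SL2) : ln g⁻¹ = ln g := by unfold ln; rw [hs_inv]
lemma ln_mul_le (g h : SL2) : ln (g * h) ≤ ln g + ln h := by
  unfold ln
  have := Real.log_le_log (hs_pos _) (hs_mul_le g h)
  rw [Real.log_mul (hs_pos g).ne' (hs_pos h).ne'] at this
  linarith

/-- determinant of two points -/
def dt (v w : Sph) : ℝ := sx v * sy w - sy v * sx w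
def dp (v w : Sph) : ℝ := sx v * sx w + sy v * sy w
@[fun_prop] lemma Continuous.dt' {α : Type*} [TopologicalSpace α] {f : α → Sph} {k : α → Sph}
    (hf : Continuous f) (hk : Continuous k) : Continuous (fun a => dt (f a) (k a)) := by
  unfold dt; fun_prop
@[fun_prop] lemma Continuous.dp' {α : Type*} [TopologicalSpace α] {f : α → Sph} {k : α → Sph}
    (hf : Continuous f) (hk : Continuous k) : Continuous (fun a => dp (f a) (k a)) := by
  unfold dp; fun_prop
@[fun_prop] lemma Measurable.dt' {α : Type*} [MeasurableSpace α] {f : α → Sph} {k : α → Sph}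
    (hf : Measurable f) (hk : Measurable k) : Measurable (fun a => dt (f a) (k a)) :=
  (show Continuous (fun p : Sph × Sph => dt p.1 p.2) by fun_prop).measurable.comp (hf.prodMk hk)

lemma dt_dp (v w : Sph) : dt v w ^ 2 + dp v w ^ 2 = 1 := by
  unfold dt dp
  have h1 := s_eq v
  have h2 := s_eq w
  linear_combination (sx w ^ 2 + sy w ^ 2) * h1 + h2

lemma dt_sact (g : SL2) (v w : Sph) : dt (sact g v) (sact g w) * (nv g v * nv g w) = dt v w := by
  have h1 := nv_ne g v
  have h2 := nv_ne g w
  unfold dt; rw [sx_sact, sy_sact, sx_sact, sy_sact]; field_simp; unfold lx ly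
  linear_combination (sx v * sy w - sy v * sx w) * e_det g

lemma dt_sact_left (g : SL2) (v w : Sph) : dt (sact g v) w * nv g v = dt v (sact g⁻¹ w) * nv g⁻¹ w := by
  have h1 := nv_ne g v
  have h2 := nv_ne g⁻¹ w
  unfold dt; rw [sx_sact, sy_sact, sx_sact, sy_sact]; field_simp; unfold lx ly
  rw [eA_inv, eB_inv, eC_inv, eD_inv]; ring

lemma dt_tri (a b c : Sph) : |dt a c| ≤ |dt b c| + |dt a b| := by
  have e : dt a c = dt b c * dp a b + dt a b * dp b c := by
    unfold dt dp
    have := s_eq b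
    linear_combination (-(sx a * sy c - sy a * sx c)) * this
  have c1 : |dp a b| ≤ 1 := by
    rw [abs_le]; constructor <;> nlinarith [dt_dp a b, sq_nonneg (dt a b), sq_nonneg (dp a b)]
  have c2 : |dp b c| ≤ 1 := by
    rw [abs_le]; constructor <;> nlinarith [dt_dp b c, sq_nonneg (dt b c), sq_nonneg (dp b c)]
  rw [e]
  refine (abs_add_le _ _).trans ?_
  rw [abs_mul, abs_mul]
  nlinarith [abs_nonneg (dt b c), abs_nonneg (dt a b)]

/-- Key inequality for the non-concentration estimate. -/
lemma nv_inv_le (g : SL2) (v w : Sph) :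
    nv g⁻¹ w ≤ 2 * Real.exp (ln g) * |dt (sact g v) w| + 1 / nv g v := by
  -- the orthogonal vector
  let u : Sph := ⟨(-sy v, sx v), by have := s_eq v; simp; linarith⟩
  have hux : sx u = - sy v := rfl
  have huy : sy u = sx v := rfl
  have hE : ∀ z, nv g z ≤ Real.exp (ln g) := fun z => by
    rw [← exp_sg]; exact Real.exp_le_exp.2 (sg_le g z)
  have h1 := dt_sact_left g v w
  have h2 := dt_sact_left g u w
  have hvu : dt v u = 1 := by unfold dt; rw [hux, huy]; have := s_eq v; linarith
  have h3 := dt_sact g v u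
  rw [hvu] at h3
  set y := sact g⁻¹ w
  have hy : |dt v y| + |dt u y| ≥ 1 := by
    have e : dt v y ^ 2 + dt u y ^ 2 = 1 := by
      have a1 := s_eq v
      have a2 := s_eq y
      unfold dt; rw [hux, huy]
      linear_combination (sx y ^ 2 + sy y ^ 2) * a1 + a2
    have b1 : |dt v y| ≤ 1 := by rw [abs_le]; constructor <;> nlinarith [sq_nonneg (dt u y)]
    have b2 : |dt u y| ≤ 1 := by rw [abs_le]; constructor <;> nlinarith [sq_nonneg (dt v y)]
    nlinarith [sq_abs (dt v y), sq_abs (dt u y), abs_nonneg (dt v y), abs_nonneg (dt u y)]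
  have t := dt_tri (sact g u) (sact g v) w
  have nvp := nv_pos g v
  have nup := nv_pos g u
  have nip := nv_pos g⁻¹ w
  have e1 : |dt (sact g v) w| * nv g v = |dt v y| * nv g⁻¹ w := by
    rw [← abs_of_pos nvp, ← abs_of_pos nip, ← abs_mul, ← abs_mul, h1]
  have e2 : |dt (sact g u) w| * nv g u = |dt u y| * nv g⁻¹ w := by
    rw [← abs_of_pos nup, ← abs_of_pos nip, ← abs_mul, ← abs_mul, h2]
  have e3 : |dt (sact g u) (sact g v)| * nv g u = 1 / nv g v := by
    have : |dt (sact g v) (sact g u)| * (nv g v * nv g u) = 1 := by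
      rw [← abs_of_pos (mul_pos nvp nup), ← abs_mul, h3]; simp
    have sw : dt (sact g u) (sact g v) = - dt (sact g v) (sact g u) := by unfold dt; ring
    rw [sw, abs_neg]; field_simp; linarith
  have := abs_nonneg (dt (sact g v) w)
  calc nv g⁻¹ w ≤ (|dt v y| + |dt u y|) * nv g⁻¹ w := by nlinarith
    _ = |dt (sact g v) w| * nv g v + |dt (sact g u) w| * nv g u := by rw [e1, e2]; ring
    _ ≤ |dt (sact g v) w| * nv g v + (|dt (sact g v) w| + |dt (sact g u) (sact g v)|) * nv g u := by
        gcongr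
    _ = |dt (sact g v) w| * (nv g v + nv g u) + 1 / nv g v := by rw [← e3]; ring
    _ ≤ |dt (sact g v) w| * (Real.exp (ln g) + Real.exp (ln g)) + 1 / nv g v := by
        gcongr
        · exact hE v
        · exact hE u
    _ = _ := by ring



/-! ### Convolution powers -/

lemma measurable_word (n : ℕ) : Measurable (word : (Fin n → SL2) → SL2) := by
  unfold word
  induction n with
  | zero => simp
  | succ k ih =>
    simp only [List.ofFn_succ, List.prod_cons]
    exact (measurable_pi_apply 0).mul (ih.comp (measurable_pi_lambda _ fun i => measurable_pi_apply _))

lemma word_last {n : ℕ} (g : Fin (n + 1) → SL2) :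
    word g = word (fun i : Fin n => g i.castSucc) * g (Fin.last n) := by
  unfold word
  rw [List.ofFn_succ', List.concat_eq_append, List.prod_append]; simp

/-- law of the product of `n` independent letters -/
def cvp (μ : Measure SL2) (n : ℕ) : Measure SL2 := (μpi μ n).map word

instance (μ : Measure SL2) [IsProbabilityMeasure μ] (n : ℕ) : IsProbabilityMeasure (μpi μ n) := by
  unfold μpi; infer_instance
instance (μ : Measure SL2) [IsProbabilityMeasure μ] (n : ℕ) : IsProbabilityMeasure (cvp μ n) :=
  Measure.isProbabilityMeasure_map (measurable_word n).aemeasurable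

lemma lintegral_cvp_zero (μ : Measure SL2) [IsProbabilityMeasure μ] {f : SL2 → ENNReal}
    (hf : Measurable f) : ∫⁻ g, f g ∂(cvp μ 0) = f 1 := by
  unfold cvp
  rw [lintegral_map hf (measurable_word 0)]
  have : ∀ g : Fin 0 → SL2, word g = 1 := fun g => by simp [word]
  simp [this]

lemma lintegral_cvp_succ (μ : Measure SL2) [IsProbabilityMeasure μ] (n : ℕ) {f : SL2 → ENNReal}
    (hf : Measurable f) :
    ∫⁻ g, f g ∂(cvp μ (n + 1)) = ∫⁻ h, ∫⁻ g, f (g * h) ∂(cvp μ n) ∂μ := by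
  unfold cvp
  rw [lintegral_map hf (measurable_word _)]
  have mp := measurePreserving_piFinSuccAbove (fun _ : Fin (n + 1) => μ) (Fin.last n)
  have e : ∀ g : Fin (n + 1) → SL2, f (word g) =
      (fun p : SL2 × (Fin n → SL2) => f (word p.2 * p.1))
        (MeasurableEquiv.piFinSuccAbove (fun _ => SL2) (Fin.last n) g) := by
    intro g
    simp only [word_last g]
    congr 3
    simp [MeasurableEquiv.piFinSuccAbove, Fin.insertNthEquiv, Fin.removeNth]
    rfl
  simp_rw [e]
  unfold μpi
  have hm : Measurable (fun p : SL2 × (Fin n → SL2) => f (word p.2 * p.1)) :=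
    hf.comp (((measurable_word n).comp measurable_snd).mul measurable_fst)
  rw [mp.lintegral_comp hm, lintegral_prod _ hm.aemeasurable]
  congr 1; ext h
  rw [lintegral_map (by fun_prop) (measurable_word n)]

lemma cvp_apply_succ (μ : Measure SL2) [IsProbabilityMeasure μ] (n : ℕ) {A : Set SL2}
    (hA : MeasurableSet A) :
    cvp μ (n + 1) A = ∫⁻ h, cvp μ n {g | g * h ∈ A} ∂μ := by
  rw [← lintegral_indicator_one hA, lintegral_cvp_succ μ n (measurable_one.indicator hA)]
  congr 1; ext h
  have hm : MeasurableSet {g : SL2 | g * h ∈ A} := hA.preimage (measurable_mul_const h)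
  rw [← lintegral_indicator_one hm]
  rfl

lemma cvp_apply_zero (μ : Measure SL2) [IsProbabilityMeasure μ] {A : Set SL2}
    (hA : MeasurableSet A) : cvp μ 0 A = A.indicator 1 1 := by
  rw [← lintegral_indicator_one hA, lintegral_cvp_zero μ (measurable_one.indicator hA)]

/-! ### Link with the projective line -/

lemma enorm2_pos {v : Fin 2 → ℝ} (hv : v ≠ 0) : 0 < enorm2 v := by
  unfold enorm2
  apply Real.sqrt_pos.2
  by_contra h
  apply hv
  ext i
  fin_cases i
  · simp; nlinarith [sq_nonneg (v 0), sq_nonneg (v 1)]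
  · simp; nlinarith [sq_nonneg (v 0), sq_nonneg (v 1)]

lemma enorm2_sq (v : Fin 2 → ℝ) : enorm2 v ^ 2 = v 0 ^ 2 + v 1 ^ 2 :=
  Real.sq_sqrt (by positivity)

lemma enorm2_smul (c : ℝ) (v : Fin 2 → ℝ) : enorm2 (c • v) = |c| * enorm2 v := by
  unfold enorm2
  rw [← Real.sqrt_sq_eq_abs, ← Real.sqrt_mul (sq_nonneg c)]
  congr 1; simp; ring

def toS (x : PX) : Sph :=
  ⟨(x.rep 0 / enorm2 x.rep, x.rep 1 / enorm2 x.rep), by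
    have h := enorm2_pos x.rep_nonzero
    have := enorm2_sq x.rep
    field_simp; linarith⟩

lemma mulVec_0 (g : SL2) (v : Fin 2 → ℝ) :
    (g : Matrix (Fin 2) (Fin 2) ℝ).mulVec v 0 = eA g * v 0 + eB g * v 1 := by
  simp [Matrix.mulVec, dotProduct, Fin.sum_univ_two, eA, eB]
lemma mulVec_1 (g : SL2) (v : Fin 2 → ℝ) :
    (g : Matrix (Fin 2) (Fin 2) ℝ).mulVec v 1 = eC g * v 0 + eD g * v 1 := by
  simp [Matrix.mulVec, dotProduct, Fin.sum_univ_two, eC, eD]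

lemma enorm2_mulVec (g : SL2) (x : PX) :
    enorm2 ((g : Matrix (Fin 2) (Fin 2) ℝ).mulVec x.rep) = nv g (toS x) * enorm2 x.rep := by
  have h := enorm2_pos x.rep_nonzero
  have h0 : 0 ≤ enorm2 ((g : Matrix (Fin 2) (Fin 2) ℝ).mulVec x.rep) := Real.sqrt_nonneg _
  rw [← sq_eq_sq₀ h0 (mul_pos (nv_pos _ _) h).le, enorm2_sq, mul_pow, nv_sq, mulVec_0, mulVec_1]
  unfold lx ly
  have e1 : sx (toS x) = x.rep 0 / enorm2 x.rep := rfl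
  have e2 : sy (toS x) = x.rep 1 / enorm2 x.rep := rfl
  rw [e1, e2]; field_simp

lemma cocycle_eq (g : SL2) (x : PX) : cocycle g x = sg g (toS x) := by
  unfold cocycle sg
  rw [enorm2_mulVec, mul_div_assoc, div_self (enorm2_pos x.rep_nonzero).ne', mul_one]

lemma act_rep (g : SL2) (x : PX) :
    ∃ c : ℝ, c ≠ 0 ∧ (act g x).rep = c • (g : Matrix (Fin 2) (Fin 2) ℝ).mulVec x.rep := by
  have hx : (g : Matrix (Fin 2) (Fin 2) ℝ).mulVec x.rep ≠ 0 := by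
    intro h
    have := enorm2_mulVec g x
    rw [h] at this
    have h2 := mul_pos (nv_pos g (toS x)) (enorm2_pos x.rep_nonzero)
    rw [← this] at h2
    simp [enorm2] at h2
  have : act g x = Projectivization.mk ℝ _ hx := by
    unfold act
    conv_lhs => rw [← x.mk_rep]
    rw [Projectivization.map_mk]
    congr 1
  rw [this]
  obtain ⟨a, ha⟩ := Projectivization.exists_smul_eq_mk_rep ℝ _ hx
  exact ⟨a, a.ne_zero, ha.symm⟩

lemma projDist_eq (g : SL2) (x x' : PX) :
    projDist (act g x) x' = |dt (sact g (toS x)) (toS x')| := by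
  obtain ⟨c, hc, e⟩ := act_rep g x
  unfold projDist
  have h1 := enorm2_pos x.rep_nonzero
  have h2 := enorm2_pos x'.rep_nonzero
  have h3 := nv_pos g (toS x)
  have hc' : 0 < |c| := abs_pos.2 hc
  have e1 : sx (toS x) = x.rep 0 / enorm2 x.rep := rfl
  have e2 : sy (toS x) = x.rep 1 / enorm2 x.rep := rfl
  have e3 : sx (toS x') = x'.rep 0 / enorm2 x'.rep := rfl
  have e4 : sy (toS x') = x'.rep 1 / enorm2 x'.rep := rfl
  rw [e, enorm2_smul, enorm2_mulVec]
  simp only [Pi.smul_apply, smul_eq_mul, mulVec_0, mulVec_1]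
  rw [div_eq_iff (by positivity)]
  have : |c| * (nv g (toS x) * enorm2 x.rep) * enorm2 x'.rep =
     |c * (nv g (toS x) * enorm2 x.rep) * enorm2 x'.rep| := by
    rw [abs_mul, abs_mul, abs_of_pos h2, abs_of_pos (mul_pos h3 h1)]
  rw [this, ← abs_mul]
  congr 1
  unfold dt; rw [sx_sact, sy_sact]; unfold lx ly; rw [e1, e2, e3, e4]; field_simp

lemma event_eq (μ : Measure SL2) [IsProbabilityMeasure μ] (n : ℕ) (s a t : ℝ) (x x' : PX) :
    μpi μ n {g | projDist (act (word g) x) x' ≤ Real.exp (-s) ∧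
          cocycle (word g) x - t ∈ Set.Icc 0 a} =
    cvp μ n {g | |dt (sact g (toS x)) (toS x')| ≤ Real.exp (-s) ∧ t ≤ sg g (toS x) ∧
      sg g (toS x) ≤ t + a} := by
  unfold cvp
  rw [Measure.map_apply (measurable_word n)]
  · congr 1; ext g
    simp only [projDist_eq, cocycle_eq, Set.mem_Icc, Set.mem_setOf_eq, Set.mem_preimage]
    constructor
    · rintro ⟨h1, h2, h3⟩; exact ⟨h1, by linarith, by linarith⟩
    · rintro ⟨h1, h2, h3⟩; exact ⟨h1, by linarith, by linarith⟩
  · have m1 : Measurable (fun g => |dt (sact g (toS x)) (toS x')|) :=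
      (show Continuous (fun g => |dt (sact g (toS x)) (toS x')|) by fun_prop).measurable
    have m2 : Measurable (fun g => sg g (toS x)) := by fun_prop
    exact (measurableSet_le m1 measurable_const).inter
      ((measurableSet_le measurable_const m2).inter (measurableSet_le m2 measurable_const))

/-! ### moment -/

lemma hs_le_opNorm (g : SL2) : hs g ≤ 2 * opNorm g ^ 2 := by
  have key : ∀ i : Fin 2, (g.1 0 i) ^ 2 + (g.1 1 i) ^ 2 ≤ opNorm g ^ 2 := by
    intro i
    have h := (Matrix.toEuclideanCLM (𝕜 := ℝ) (n := Fin 2) (g : Matrix (Fin 2) (Fin 2) ℝ)).le_opNorm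
      (EuclideanSpace.single i 1)
    simp only [PiLp.norm_single, norm_one, mul_one] at h
    have h2 := pow_le_pow_left₀ (norm_nonneg _) h 2
    rw [EuclideanSpace.norm_sq_eq] at h2
    have e : ∀ j : Fin 2, (Matrix.toEuclideanCLM (𝕜 := ℝ) (n := Fin 2)
        (g : Matrix (Fin 2) (Fin 2) ℝ) (EuclideanSpace.single i 1)) j = g.1 j i := by
      intro j
      have := congrFun (Matrix.ofLp_toEuclideanCLM (𝕜 := ℝ) (n := Fin 2)
        (g : Matrix (Fin 2) (Fin 2) ℝ) (EuclideanSpace.single i 1)) j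
      rw [this]
      simp
    rw [Fin.sum_univ_two, e, e] at h2
    simpa [opNorm] using h2
  have := key 0
  have := key 1
  unfold hs eA eB eC eD
  linarith

lemma exists_moment (μ : Measure SL2) (hmom : HasExpMoment μ) :
    ∃ ε > (0 : ℝ), ∫⁻ g, ENNReal.ofReal (Real.exp (ε * ln g)) ∂μ < ⊤ := by
  obtain ⟨ε, hε, h⟩ := hmom
  refine ⟨ε, hε, ?_⟩
  have : ∀ g, ENNReal.ofReal (Real.exp (ε * ln g)) ≤
      ENNReal.ofReal (2 ^ (ε / 2)) * ENNReal.ofReal (opNorm g ^ ε) := by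
    intro g
    have h0 : 0 ≤ opNorm g := norm_nonneg _
    rw [← ENNReal.ofReal_mul (by positivity)]
    apply ENNReal.ofReal_le_ofReal
    rw [exp_ln]
    calc hs g ^ (ε / 2) ≤ (2 * opNorm g ^ 2) ^ (ε / 2) :=
          Real.rpow_le_rpow (hs_pos g).le (hs_le_opNorm g) (by positivity)
      _ = 2 ^ (ε / 2) * opNorm g ^ ε := by
          rw [Real.mul_rpow (by norm_num) (by positivity), ← Real.rpow_natCast, ← Real.rpow_mul h0]
          congr 2; push_cast; ring
  refine (lintegral_mono this).trans_lt ?_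
  rw [lintegral_const_mul' _ _ ENNReal.ofReal_ne_top]
  exact ENNReal.mul_lt_top ENNReal.ofReal_lt_top h


/-! ### Solvability criteria -/

def tr2 (g : SL2) : ℝ := eA g + eD g

lemma tr2_sq (g : SL2) : tr2 (g * g) = tr2 g ^ 2 - 2 := by
  unfold tr2; rw [eA_mul, eD_mul]; linear_combination (-2) * e_det g

lemma tr2_pow_lower (g : SL2) (e : ℝ) (he : 0 ≤ e) (h : 2 + e ≤ tr2 g) (n : ℕ) :
    2 + 4 ^ n * e ≤ tr2 (g ^ (2 ^ n)) := by
  induction n with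
  | zero => simpa using h
  | succ n ih =>
    rw [pow_succ 2 n, pow_mul, pow_two (g ^ 2 ^ n), tr2_sq]
    have : 0 ≤ 4 ^ n * e := by positivity
    rw [pow_succ]
    nlinarith

lemma tr2_le_of_hs (g : SL2) : tr2 g ≤ 1 + hs g := by
  unfold tr2 hs; nlinarith [sq_nonneg (eA g - 1/2), sq_nonneg (eD g - 1/2), sq_nonneg (eB g), sq_nonneg (eC g)]

lemma bdd_tr2_le {Γ : Subgroup SL2} {R : ℝ} (hR : ∀ g ∈ Γ, hs g ≤ R) {g : SL2} (hg : g ∈ Γ) :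
    tr2 g ≤ 2 := by
  by_contra hc
  push Not at hc
  have hp : 0 < tr2 g - 2 := by linarith
  obtain ⟨n, hn⟩ := pow_unbounded_of_one_lt ((1 + R) / (tr2 g - 2)) (by norm_num : (1:ℝ) < 4)
  have h1 := tr2_pow_lower g (tr2 g - 2) hp.le (by linarith) n
  have h2 := tr2_le_of_hs (g ^ (2 ^ n))
  have h3 := hR _ (Γ.pow_mem hg (2 ^ n))
  rw [div_lt_iff₀ hp] at hn
  linarith

lemma bdd_tr2_ge {Γ : Subgroup SL2} {R : ℝ} (hR : ∀ g ∈ Γ, hs g ≤ R) {g : SL2} (hg : g ∈ Γ) :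
    -2 ≤ tr2 g := by
  have h := bdd_tr2_le hR (Γ.mul_mem hg hg)
  rw [tr2_sq] at h
  nlinarith

lemma unip_pow (g : SL2) (h : tr2 g = 2) (n : ℕ) :
    eA (g ^ n) = 1 + n * (eA g - 1) ∧ eB (g ^ n) = n * eB g ∧ eC (g ^ n) = n * eC g ∧
      eD (g ^ n) = 1 + n * (eD g - 1) := by
  have hd := e_det g
  unfold tr2 at h
  have hD : eD g = 2 - eA g := by linarith
  rw [hD] at hd ⊢
  induction n with
  | zero => simp [eA_one, eB_one, eC_one, eD_one]
  | succ n ih =>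
    obtain ⟨h1, h2, h3, h4⟩ := ih
    rw [pow_succ, eA_mul, eB_mul, eC_mul, eD_mul, h1, h2, h3, h4, hD]
    push_cast
    refine ⟨?_, ?_, ?_, ?_⟩
    · linear_combination (-n) * hd
    · ring
    · ring
    · linear_combination (-n) * hd

lemma nat_mul_zero_of_bdd (x y R : ℝ) (h : ∀ n : ℕ, (y + n * x) ^ 2 ≤ R) : x = 0 := by
  by_contra hx
  have hx2 : 0 < |x| := abs_pos.2 hx
  obtain ⟨n, hn⟩ := exists_nat_gt ((1 + R + |y|) / |x|)
  rw [div_lt_iff₀ hx2] at hn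
  have h1 := h n
  have h2 : |y + n * x| ≥ n * |x| - |y| := by
    have := abs_sub_abs_le_abs_sub (n * x) (-y)
    rw [abs_mul, Nat.abs_cast, abs_neg] at this
    rw [show y + n * x = n * x - -y by ring]; exact this
  have hR : 0 ≤ R := (sq_nonneg _).trans h1
  rw [← sq_abs] at h1
  nlinarith

lemma bdd_unip {Γ : Subgroup SL2} {R : ℝ} (hR : ∀ g ∈ Γ, hs g ≤ R) {g : SL2} (hg : g ∈ Γ)
    (h : tr2 g = 2) : g = 1 := by
  have key : ∀ n : ℕ, hs (g ^ n) ≤ R := fun n => hR _ (Γ.pow_mem hg n)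
  have hA : eA g - 1 = 0 := by
    refine nat_mul_zero_of_bdd _ 1 R (fun n => ?_)
    have := key n
    rw [← (unip_pow g h n).1]
    unfold hs at this
    nlinarith [sq_nonneg (eB (g^n)), sq_nonneg (eC (g^n)), sq_nonneg (eD (g^n))]
  have hB : eB g = 0 := by
    refine nat_mul_zero_of_bdd _ 0 R (fun n => ?_)
    have := key n
    rw [zero_add, ← (unip_pow g h n).2.1]
    unfold hs at this
    nlinarith [sq_nonneg (eA (g^n)), sq_nonneg (eC (g^n)), sq_nonneg (eD (g^n))]
  have hC : eC g = 0 := by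
    refine nat_mul_zero_of_bdd _ 0 R (fun n => ?_)
    have := key n
    rw [zero_add, ← (unip_pow g h n).2.2.1]
    unfold hs at this
    nlinarith [sq_nonneg (eA (g^n)), sq_nonneg (eB (g^n)), sq_nonneg (eD (g^n))]
  apply SL2_ext
  · rw [eA_one]; linarith
  · rw [eB_one]; exact hB
  · rw [eC_one]; exact hC
  · rw [eD_one]; unfold tr2 at h; linarith

lemma ell_comm (a b c d x y z w : ℝ) (h1 : a * d - b * c = 1) (h2 : x * w - y * z = 1)
    (hτ : (a + d) ^ 2 < 4)
    (p Δ p' b' c' : ℝ) (hp : p = (a - d) / 2) (hΔ : Δ = - p ^ 2 - b * c)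
    (hp' : p' = x * p * w + y * c * w - x * b * z + y * p * z)
    (hc' : c' = c * w ^ 2 + 2 * p * z * w - b * z ^ 2)
    (hb' : b' = x ^ 2 * b - 2 * x * y * p - y ^ 2 * c)
    (htr : 0 ≤ 2 * Δ + (2 * p * p' + b * c' + c * b')) :
    (a * x + b * z = x * a + y * c) ∧ (a * y + b * w = x * b + y * d) ∧
    (c * x + d * z = z * a + w * c) ∧ (c * y + d * w = z * b + w * d) := by
  have hΔ0 : 0 < Δ := by rw [hΔ, hp]; nlinarith
  have hc0 : c ≠ 0 := by
    rintro rfl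
    rw [hΔ] at hΔ0; nlinarith [sq_nonneg p]
  have hd' : - p' ^ 2 - b' * c' = Δ := by
    rw [hp', hb', hc', hΔ]
    have e : (-p^2-b*c) * (x * w - y * z)^2 = (-p^2-b*c) := by rw [h2]; ring
    rw [← e]; ring
  have hcc : c * c' = (c * w + p * z) ^ 2 + Δ * z ^ 2 := by rw [hc', hΔ]; ring
  have hccpos : 0 < c * c' := by
    rw [hcc]
    by_cases hz : z = 0
    · have : w ≠ 0 := by rintro rfl; rw [hz] at h2; norm_num at h2
      rw [hz]; simp; positivity
    · positivity
  have hid : c * c' * (-(2 * Δ + (2 * p * p' + b * c' + c * b'))) =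
      Δ * (c' - c) ^ 2 + (p * c' - p' * c) ^ 2 := by
    linear_combination (c' ^ 2) * (-hΔ)  + c ^ 2 * hd'
  have h0 : Δ * (c' - c) ^ 2 + (p * c' - p' * c) ^ 2 ≤ 0 := by
    rw [← hid]; nlinarith
  have e1 : c' - c = 0 := by
    have := sq_nonneg (p * c' - p' * c)
    have h3 : Δ * (c' - c) ^ 2 ≤ 0 := by linarith
    by_contra hne
    have : 0 < Δ * (c' - c) ^ 2 := by positivity
    linarith
  have e1' : c' = c := by linarith
  have e2 : p' = p := by
    have h4 : (p * c' - p' * c) ^ 2 ≤ 0 := by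
      have : 0 ≤ Δ * (c' - c) ^ 2 := by positivity
      linarith
    have h5 : p * c' - p' * c = 0 := by nlinarith [sq_nonneg (p * c' - p' * c)]
    rw [e1'] at h5
    have : c * (p - p') = 0 := by linarith
    rcases mul_eq_zero.1 this with h | h
    · exact absurd h hc0
    · linarith
  have e3 : b' = b := by
    rw [e1', e2, hΔ] at hd'
    have : c * (b' - b) = 0 := by linarith
    rcases mul_eq_zero.1 this with h | h
    · exact absurd h hc0
    · linarith
  -- h g0 = g0' h = g0 h
  have f1 : x * p + y * c = p * x + b * z := by
    have : x * p + y * c = p' * x + b' * z := by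
      rw [hp', hb']; linear_combination (-(x * p + y * c)) * h2
    rw [this, e2, e3]
  have f2 : x * b - y * p = p * y + b * w := by
    have : x * b - y * p = p' * y + b' * w := by
      rw [hp', hb']; linear_combination (-(x * b - y * p)) * h2
    rw [this, e2, e3]
  have f3 : z * p + w * c = c * x - p * z := by
    have : z * p + w * c = c' * x - p' * z := by
      rw [hp', hc']; linear_combination (-(z * p + w * c)) * h2
    rw [this, e2, e1']
  have f4 : z * b - w * p = c * y - p * w := by
    have : z * b - w * p = c' * y - p' * w := by
      rw [hp', hc']; linear_combination (-(z * b - w * p)) * h2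
    rw [this, e2, e1']
  rw [hp] at f1 f2 f3 f4
  refine ⟨?_, ?_, ?_, ?_⟩ <;> linarith

lemma bdd_comm {Γ : Subgroup SL2} {R : ℝ} (hR : ∀ g ∈ Γ, hs g ≤ R) {g h : SL2} (hg : g ∈ Γ)
    (hh : h ∈ Γ) : g * h = h * g := by
  by_cases h1 : tr2 g = 2
  · rw [bdd_unip hR hg h1]; simp
  by_cases h2 : tr2 g = -2
  · have h3 : g * g = 1 := bdd_unip hR (Γ.mul_mem hg hg) (by rw [tr2_sq, h2]; norm_num)
    have hA : eA (g * g) = 1 := by rw [h3, eA_one]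
    have hB : eB (g * g) = 0 := by rw [h3, eB_one]
    have hC : eC (g * g) = 0 := by rw [h3, eC_one]
    have hd := e_det g
    unfold tr2 at h2
    rw [eA_mul] at hA; rw [eB_mul] at hB; rw [eC_mul] at hC
    have b0 : eB g = 0 := by
      have : eB g * (eA g + eD g) = 0 := by linarith
      rw [h2] at this; linarith
    have c0 : eC g = 0 := by
      have : eC g * (eA g + eD g) = 0 := by linarith
      rw [h2] at this; linarith
    have a1 : eA g = -1 := by
      rw [b0] at hA hd
      have : eD g = -2 - eA g := by linarith
      rw [this] at hd
      nlinarith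
    have d1 : eD g = -1 := by linarith
    apply SL2_ext
    · rw [eA_mul, eA_mul, b0, c0]; ring
    · rw [eB_mul, eB_mul, b0, a1, d1]; ring
    · rw [eC_mul, eC_mul, c0, a1, d1]; ring
    · rw [eD_mul, eD_mul, b0, c0]; ring
  have h3 := bdd_tr2_le hR hg
  have h4 := bdd_tr2_ge hR hg
  have h5 : tr2 g < 2 := lt_of_le_of_ne h3 h1
  have h6 : -2 < tr2 g := lt_of_le_of_ne h4 (Ne.symm h2)
  have h7 := bdd_tr2_le hR (Γ.mul_mem (Γ.mul_mem hg hh) (Γ.mul_mem (Γ.inv_mem hg) (Γ.inv_mem hh)))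
  have hd := e_det g
  have hd' := e_det h
  unfold tr2 at h5 h6
  obtain ⟨r1, r2, r3, r4⟩ := ell_comm (eA g) (eB g) (eC g) (eD g) (eA h) (eB h) (eC h) (eD h)
    hd hd' (by nlinarith) _ _ _ _ _ rfl rfl rfl rfl rfl (by
      unfold tr2 at h7
      rw [eA_mul, eD_mul, eA_mul g h, eB_mul g h, eC_mul g h, eD_mul g h, eA_mul g⁻¹,
        eB_mul g⁻¹, eC_mul g⁻¹, eD_mul g⁻¹] at h7
      simp only [eA_inv, eB_inv, eC_inv, eD_inv] at h7
      refine sub_nonneg.1 ?_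
      refine le_trans (sub_nonneg.2 h7) (le_of_eq ?_)
      linear_combination (-(eA g + eD g) ^ 2 / 2) * hd' - 2 * hd)
  apply SL2_ext
  · rw [eA_mul, eA_mul]; exact r1
  · rw [eB_mul, eB_mul]; exact r2
  · rw [eC_mul, eC_mul]; exact r3
  · rw [eD_mul, eD_mul]; exact r4



lemma solv_bdd (Γ : Subgroup SL2) (R : ℝ) (hR : ∀ g ∈ Γ, hs g ≤ R) : Group.IsSolvable Γ :=
  Group.isSolvable_of_comm (fun a b => Subtype.ext (bdd_comm hR a.2 b.2))

/-- `g w = w` -/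
def vecStab (w : Sph) : Subgroup SL2 where
  carrier := {g | sact g w = w ∧ nv g w = 1}
  mul_mem' := by
    rintro a b ⟨h1, h2⟩ ⟨h3, h4⟩
    exact ⟨by rw [sact_mul, h3, h1], by rw [nv_mul, h3, h2, h4, one_mul]⟩
  one_mem' := ⟨sact_one w, nv_one w⟩
  inv_mem' := by
    rintro a ⟨h1, h2⟩
    refine ⟨?_, ?_⟩
    · have := sact_inv_sact a w; rwa [h1] at this
    · have := nv_inv_sact a w; rwa [h1, h2, mul_one] at this

def sneg (w : Sph) : Sph := ⟨(-sx w, -sy w), by have := s_eq w; simpa using this⟩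
lemma sx_sneg (w : Sph) : sx (sneg w) = - sx w := rfl
lemma sy_sneg (w : Sph) : sy (sneg w) = - sy w := rfl
lemma sneg_sneg (w : Sph) : sneg (sneg w) = w := by
  apply Sph_ext
  · rw [sx_sneg, sx_sneg, neg_neg]
  · rw [sy_sneg, sy_sneg, neg_neg]
lemma nv_sneg (g : SL2) (w : Sph) : nv g (sneg w) = nv g w := by
  unfold nv; congr 1; unfold lx ly; rw [sx_sneg, sy_sneg]; ring
lemma sact_sneg (g : SL2) (w : Sph) : sact g (sneg w) = sneg (sact g w) := by
  apply Sph_ext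
  · rw [sx_sneg, sx_sact, sx_sact, nv_sneg]; unfold lx; rw [sx_sneg, sy_sneg]; ring
  · rw [sy_sneg, sy_sact, sy_sact, nv_sneg]; unfold ly; rw [sx_sneg, sy_sneg]; ring
lemma dt_eq_zero (v w : Sph) (h : dt v w = 0) : v = w ∨ v = sneg w := by
  have h1 := dt_dp v w
  rw [h] at h1
  have h2 := s_eq v
  have h3 := s_eq w
  have hx : sx v = dp v w * sx w := by
    unfold dp; unfold dt at h; linear_combination (-sx v) * h3 + sy w * h
  have hy : sy v = dp v w * sy w := by
    unfold dp; unfold dt at h; linear_combination (-sy v) * h3 - sx w * h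
  have h4 : (dp v w - 1) * (dp v w + 1) = 0 := by linarith
  rcases mul_eq_zero.1 h4 with h | h
  · left; have : dp v w = 1 := by linarith
    rw [this] at hx hy; exact Sph_ext (by linarith) (by linarith)
  · right; have : dp v w = -1 := by linarith
    rw [this] at hx hy
    exact Sph_ext (by rw [sx_sneg]; linarith) (by rw [sy_sneg]; linarith)
lemma dt_self (v : Sph) : dt v v = 0 := by unfold dt; ring
lemma dt_sneg_left (v w : Sph) : dt (sneg v) w = - dt v w := by
  unfold dt; rw [sx_sneg, sy_sneg]; ring
lemma dt_sneg_right (v w : Sph) : dt v (sneg w) = - dt v w := by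
  unfold dt; rw [sx_sneg, sy_sneg]; ring
lemma dt_comm' (v w : Sph) : dt v w = - dt w v := by unfold dt; ring

/-- line equivalence -/
def leq (v w : Sph) : Prop := v = w ∨ v = sneg w
lemma leq_iff (v w : Sph) : leq v w ↔ dt v w = 0 := by
  constructor
  · rintro (h | h)
    · rw [h, dt_self]
    · rw [h, dt_sneg_left, dt_self, neg_zero]
  · exact dt_eq_zero v w
lemma leq_refl (v : Sph) : leq v v := Or.inl rfl
lemma leq_symm {v w : Sph} (h : leq v w) : leq w v := by
  rw [leq_iff] at *; rw [dt_comm', h, neg_zero]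
lemma leq_trans {u v w : Sph} (h : leq u v) (h' : leq v w) : leq u w := by
  rcases h with rfl | rfl <;> rcases h' with rfl | rfl
  · exact Or.inl rfl
  · exact Or.inr rfl
  · exact Or.inr rfl
  · left; exact sneg_sneg _
lemma leq_act {v w : Sph} (g : SL2) (h : leq v w) : leq (sact g v) (sact g w) := by
  rcases h with rfl | rfl
  · exact Or.inl rfl
  · right; rw [sact_sneg]
lemma leq_inv {v w : Sph} (g : SL2) (h : leq (sact g v) w) : leq (sact g⁻¹ w) v := by
  have := leq_act g⁻¹ h
  rw [sact_inv_sact] at this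
  exact leq_symm this
lemma leq_nv {v w : Sph} (g : SL2) (h : leq v w) : nv g v = nv g w := by
  rcases h with rfl | rfl
  · rfl
  · rw [nv_sneg]

def lineStab (w : Sph) : Subgroup SL2 where
  carrier := {g | leq (sact g w) w}
  mul_mem' := by
    intro a b h1 h2
    change leq _ _
    rw [sact_mul]; exact leq_trans (leq_act a h2) h1
  one_mem' := by change leq _ _; rw [sact_one]; exact leq_refl w
  inv_mem' := by
    intro a h1
    exact leq_inv a h1

lemma line_comm {w : Sph} {a b : SL2} (ha : a ∈ lineStab w) (hb : b ∈ lineStab w) :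
    a * b * a⁻¹ * b⁻¹ ∈ vecStab w := by
  have e : a * b * a⁻¹ * b⁻¹ = (a * b) * (b * a)⁻¹ := by rw [mul_inv_rev]; group
  have ha' : leq (sact a w) w := ha
  have hb' : leq (sact b w) w := hb
  have h1 : sact (a * b) w = sact (b * a) w := by
    rw [sact_mul, sact_mul]
    rcases ha' with h | h <;> rcases hb' with h' | h' <;> rw [h, h'] <;> simp only [sact_sneg, h, h']
  have h2 : nv (a * b) w = nv (b * a) w := by
    rw [nv_mul, nv_mul, leq_nv a hb', leq_nv b ha']; ring
  have hl : leq (sact (b * a) w) w := (lineStab w).mul_mem hb ha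
  have key : ∀ c d : SL2, sact c w = sact d w → nv c w = nv d w → leq (sact d w) w →
      c * d⁻¹ ∈ vecStab w := by
    intro c d h1 h2 hl
    have hl' := leq_inv d hl
    have hi := nv_inv_sact d w
    have hi' := sact_inv_sact d w
    rw [leq_nv d⁻¹ hl] at hi
    refine ⟨?_, ?_⟩
    · rw [sact_mul]
      rcases hl' with h | h
      · have := sact_sact_inv d w
        rw [h] at this
        rw [h, h1, this]
      · rw [h, sact_sneg, h1, ← sact_sneg, ← h, sact_sact_inv]
    · rw [nv_mul, leq_nv c hl', h2, mul_comm]; exact hi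
  rw [e]
  exact key _ _ h1 h2 hl

lemma vec_comm {w : Sph} {a b : SL2} (ha : a ∈ vecStab w) (hb : b ∈ vecStab w) :
    a * b = b * a := by
  have key : ∀ g ∈ vecStab w, ∃ k : ℝ, eA g = 1 - k * sx w * sy w ∧ eB g = k * sx w ^ 2 ∧
      eC g = - k * sy w ^ 2 ∧ eD g = 1 + k * sx w * sy w := by
    rintro g ⟨h1, h2⟩
    have hx : lx g w = sx w := by
      have := sx_sact g w; rw [h1, h2, div_one] at this; exact this.symm
    have hy : ly g w = sy w := by
      have := sy_sact g w; rw [h1, h2, div_one] at this; exact this.symm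
    have hd := e_det g
    have hw := s_eq w
    unfold lx at hx; unfold ly at hy
    generalize eA g = a at *
    generalize eB g = b at *
    generalize eC g = c at *
    generalize eD g = d at *
    generalize sx w = x at *
    generalize sy w = y at *
    have htr : a + d = 2 := by
      -- (g - 1) w = 0, so det (g-1) = 0
      have hdet : (a - 1) * (d - 1) - b * c = 0 := by
        have e1 : ((a - 1) * (d - 1) - b * c) * x = 0 := by
          linear_combination (d - 1) * hx - b * hy
        have e2 : ((a - 1) * (d - 1) - b * c) * y = 0 := by
          linear_combination (a - 1) * hy - c * hx
        have : ((a - 1) * (d - 1) - b * c) * (x ^ 2 + y ^ 2) = 0 := by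
          linear_combination x * e1 + y * e2
        rwa [hw, mul_one] at this
      linarith
    have hd2 : d = 2 - a := by linarith
    subst hd2
    refine ⟨b - c, ?_, ?_, ?_, ?_⟩
    · linear_combination (-(a-1)) * hw + x * hx - y * hy
    · linear_combination (-b) * hw + y * hx + x * hy
    · linear_combination (-c) * hw + x * hy + y * hx
    · linear_combination (a-1) * hw - x * hx + y * hy
  obtain ⟨k, h1, h2, h3, h4⟩ := key a ha
  obtain ⟨l, l1, l2, l3, l4⟩ := key b hb
  apply SL2_ext
  · rw [eA_mul, eA_mul, h1, h2, h3, l1, l2, l3]; ring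
  · rw [eB_mul, eB_mul, h1, h2, h4, l1, l2, l4]; ring
  · rw [eC_mul, eC_mul, h1, h3, h4, l1, l3, l4]; ring
  · rw [eD_mul, eD_mul, h2, h3, h4, l2, l3, l4]; ring

lemma solv_two (Γ : Subgroup SL2) (w w' : Sph)
    (h : ∀ g ∈ Γ, (leq (sact g w) w ∧ leq (sact g w') w') ∨
      (leq (sact g w) w' ∧ leq (sact g w') w)) : Group.IsSolvable Γ := by
  rw [Group.isSolvable_def]
  refine ⟨3, ?_⟩
  have d1 : derivedSeries Γ 1 ≤ (lineStab w).comap Γ.subtype := by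
    rw [derivedSeries_succ, derivedSeries_zero, Subgroup.commutator_le]
    intro a _ b _
    change leq (sact ((a : SL2) * b * (a:SL2)⁻¹ * (b:SL2)⁻¹) w) w
    rw [sact_mul, sact_mul, sact_mul]
    rcases h a a.2 with ⟨a1, a2⟩ | ⟨a1, a2⟩ <;> rcases h b b.2 with ⟨b1, b2⟩ | ⟨b1, b2⟩
    · have s1 := leq_inv _ b1
      have s2 := leq_trans (leq_act (a:SL2)⁻¹ s1) (leq_inv _ a1)
      exact leq_trans (leq_act _ (leq_trans (leq_act (b:SL2) s2) b1)) a1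
    · have s1 := leq_inv _ b2
      have s2 := leq_trans (leq_act (a:SL2)⁻¹ s1) (leq_inv _ a2)
      exact leq_trans (leq_act _ (leq_trans (leq_act (b:SL2) s2) b2)) a1
    · have s1 := leq_inv _ b1
      have s2 := leq_trans (leq_act (a:SL2)⁻¹ s1) (leq_inv _ a2)
      exact leq_trans (leq_act _ (leq_trans (leq_act (b:SL2) s2) b2)) a2
    · have s1 := leq_inv _ b2
      have s2 := leq_trans (leq_act (a:SL2)⁻¹ s1) (leq_inv _ a1)
      exact leq_trans (leq_act _ (leq_trans (leq_act (b:SL2) s2) b1)) a2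
  have d2 : derivedSeries Γ 2 ≤ (vecStab w).comap Γ.subtype := by
    rw [derivedSeries_succ, Subgroup.commutator_le]
    intro a ha b hb
    exact line_comm (d1 ha) (d1 hb)
  rw [derivedSeries_succ, eq_bot_iff, Subgroup.commutator_le]
  intro a ha b hb
  rw [Subgroup.mem_bot, commutatorElement_eq_one_iff_mul_comm]
  exact Subtype.ext (vec_comm (d2 ha) (d2 hb))

/-- Finite invariant sets of points force solvability. -/
lemma solv_fin (Γ : Subgroup SL2) (F : Set Sph) (hF : F.Finite) (hne : F.Nonempty)
    (hinv : ∀ g ∈ Γ, ∀ w ∈ F, sact g w ∈ F) : Group.IsSolvable Γ := by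
  obtain ⟨w, hw⟩ := hne
  by_cases h1 : ∀ v ∈ F, leq v w
  · exact solv_two Γ w w (fun g hg => Or.inl ⟨h1 _ (hinv g hg w hw), h1 _ (hinv g hg w hw)⟩)
  push Not at h1
  obtain ⟨w', hw', hn⟩ := h1
  by_cases h2 : ∀ v ∈ F, leq v w ∨ leq v w'
  · refine solv_two Γ w w' (fun g hg => ?_)
    have hne : ¬ leq (sact g w') (sact g w) := fun hc => by
      have := leq_act g⁻¹ hc
      rw [sact_inv_sact, sact_inv_sact] at this
      exact hn this
    rcases h2 _ (hinv g hg w hw) with a | a <;> rcases h2 _ (hinv g hg w' hw') with b | b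
    · exact absurd (leq_trans b (leq_symm a)) hne
    · exact Or.inl ⟨a, b⟩
    · exact Or.inr ⟨a, b⟩
    · exact absurd (leq_trans b (leq_symm a)) hne
  push Not at h2
  obtain ⟨u, hu, hn1, hn2⟩ := h2
  -- three distinct lines
  obtain ⟨η, hη, hmin⟩ : ∃ η : ℝ, 0 < η ∧ ∀ a ∈ F, ∀ b ∈ F, ¬ leq a b → η ≤ |dt a b| := by
    have hfin : (((F ×ˢ F) ∩ {p | ¬ leq p.1 p.2}) : Set (Sph × Sph)).Finite :=
      (hF.prod hF).inter_of_left _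
    have hne : (((F ×ˢ F) ∩ {p | ¬ leq p.1 p.2}) : Set (Sph × Sph)).Nonempty := ⟨(w', w), ⟨hw', hw⟩, hn⟩
    obtain ⟨p, hp, hpm⟩ := Set.exists_min_image _ (fun p : Sph × Sph => |dt p.1 p.2|) hfin hne
    refine ⟨|dt p.1 p.2|, ?_, fun a ha b hb hab => hpm (a, b) ⟨⟨ha, hb⟩, hab⟩⟩
    rw [abs_pos]; exact fun h => hp.2 ((leq_iff _ _).2 h)
  have prodle : ∀ g ∈ Γ, ∀ a ∈ F, ∀ b ∈ F, ¬ leq a b → nv g a * nv g b ≤ 1 / η ∧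
      η ≤ nv g a * nv g b := by
    intro g hg a ha b hb hab
    have hab' : ¬ leq (sact g a) (sact g b) := fun hc => by
      have := leq_act g⁻¹ hc
      rw [sact_inv_sact, sact_inv_sact] at this
      exact hab this
    have m1 := hmin _ (hinv g hg a ha) _ (hinv g hg b hb) hab'
    have m2 := hmin _ ha _ hb hab
    have hp := mul_pos (nv_pos g a) (nv_pos g b)
    have he : |dt (sact g a) (sact g b)| * (nv g a * nv g b) = |dt a b| := by
      rw [← abs_of_pos hp, ← abs_mul, dt_sact]
    have l1 : ∀ x y : Sph, |dt x y| ≤ 1 := fun x y => by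
      rw [abs_le]; constructor <;> nlinarith [dt_dp x y, sq_nonneg (dp x y), sq_nonneg (dt x y)]
    constructor
    · rw [le_div_iff₀ hη]
      have := l1 a b
      nlinarith
    · have := l1 (sact g a) (sact g b)
      nlinarith
  have bd : ∀ g ∈ Γ, ∀ a ∈ F, ∀ b ∈ F, ∀ c ∈ F, ¬ leq a b → ¬ leq a c → ¬ leq b c →
      nv g a ^ 2 ≤ 1 / η ^ 3 := by
    intro g hg a ha b hb c hc hab hac hbc
    have p1 := (prodle g hg a ha b hb hab).1
    have p2 := (prodle g hg a ha c hc hac).1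
    have p3 := (prodle g hg b hb c hc hbc).2
    have na := nv_pos g a
    have nb := nv_pos g b
    have nc := nv_pos g c
    have : nv g a ^ 2 * η ≤ (1 / η) * (1 / η) := by
      calc nv g a ^ 2 * η ≤ nv g a ^ 2 * (nv g b * nv g c) := by gcongr
        _ = (nv g a * nv g b) * (nv g a * nv g c) := by ring
        _ ≤ _ := by gcongr
    rw [le_div_iff₀ (by positivity)]
    calc nv g a ^ 2 * η ^ 3 = (nv g a ^ 2 * η) * (η * η) := by ring
      _ ≤ (1 / η) * (1 / η) * (η * η) := by gcongr
      _ = 1 := by field_simp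
  -- two independent directions control hs
  have hD : dt w w' ≠ 0 := fun h => hn (leq_symm ((leq_iff _ _).2 h))
  refine solv_bdd Γ (4 * (1 / η ^ 3) / dt w w' ^ 2) (fun g hg => ?_)
  have b1 := bd g hg w hw w' hw' u hu (fun h => hn (leq_symm h)) (fun h => hn1 (leq_symm h))
    (fun h => hn2 (leq_symm h))
  have b2 := bd g hg w' hw' w hw u hu hn (fun h => hn2 (leq_symm h)) (fun h => hn1 (leq_symm h))
  rw [le_div_iff₀ (by positivity)]
  rw [nv_sq] at b1 b2
  have q1 := s_eq w
  have q2 := s_eq w'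
  have aux : ∀ a b x y x' y' : ℝ, x ^ 2 + y ^ 2 = 1 → x' ^ 2 + y' ^ 2 = 1 →
      (a ^ 2 + b ^ 2) * (x * y' - y * x') ^ 2 ≤ 2 * (a * x + b * y) ^ 2 + 2 * (a * x' + b * y') ^ 2 := by
    intro a b x y x' y' h h'
    set s := a * x + b * y
    set r := a * x' + b * y'
    have e1 : a * (x * y' - y * x') = s * y' - r * y := by simp only [s, r]; ring
    have e2 : b * (x * y' - y * x') = r * x - s * x' := by simp only [s, r]; ring
    calc (a ^ 2 + b ^ 2) * (x * y' - y * x') ^ 2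
        = (s * y' - r * y) ^ 2 + (r * x - s * x') ^ 2 := by rw [← e1, ← e2]; ring
      _ ≤ 2 * (s * y') ^ 2 + 2 * (r * y) ^ 2 + (2 * (r * x) ^ 2 + 2 * (s * x') ^ 2) := by
          nlinarith [sq_nonneg (s * y' + r * y), sq_nonneg (r * x + s * x')]
      _ = 2 * s ^ 2 * (x' ^ 2 + y' ^ 2) + 2 * r ^ 2 * (x ^ 2 + y ^ 2) := by ring
      _ = _ := by rw [h, h']; ring
  have k1 := aux (eA g) (eB g) _ _ _ _ q1 q2
  have k2 := aux (eC g) (eD g) _ _ _ _ q1 q2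
  unfold hs dt
  unfold lx ly at b1 b2
  nlinarith



/-! ### Supports and compact semigroups -/

lemma supp_subset_closed {μ : Measure SL2} {F : Set SL2} (hF : IsClosed F) (h : μ Fᶜ = 0) :
    measSupp μ ⊆ F := by
  intro g hg
  by_contra hn
  have := hg Fᶜ hF.isOpen_compl hn
  exact absurd h this.ne'

lemma one_mem_supp_cvp (μ : Measure SL2) [IsProbabilityMeasure μ] : (1 : SL2) ∈ measSupp (cvp μ 0) := by
  intro U hU h1
  rw [cvp_apply_zero μ hU.measurableSet]
  simp [h1]

lemma mul_mem_supp_cvp (μ : Measure SL2) [IsProbabilityMeasure μ] {n : ℕ} {g h : SL2}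
    (hg : g ∈ measSupp (cvp μ n)) (hh : h ∈ measSupp μ) : g * h ∈ measSupp (cvp μ (n + 1)) := by
  intro U hU hm
  have hc : ContinuousAt (fun p : SL2 × SL2 => p.1 * p.2) (g, h) := continuous_mul.continuousAt
  have := hc.preimage_mem_nhds (hU.mem_nhds hm)
  rw [mem_nhds_prod_iff'] at this
  obtain ⟨V, W, hV, hgV, hW, hhW, hsub⟩ := this
  rw [cvp_apply_succ μ n hU.measurableSet]
  have h1 := hg V hV hgV
  have h2 := hh W hW hhW
  calc (0 : ENNReal) < cvp μ n V * μ W := ENNReal.mul_pos h1.ne' h2.ne'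
    _ = ∫⁻ _ in W, cvp μ n V ∂μ := by rw [setLIntegral_const]
    _ ≤ ∫⁻ h in W, cvp μ n {g | g * h ∈ U} ∂μ := by
        apply setLIntegral_mono' hW.measurableSet
        intro k hk
        apply measure_mono
        intro x hx
        exact hsub (Set.mk_mem_prod hx hk)
    _ ≤ _ := setLIntegral_le_lintegral _ _

lemma submonoid_bdd (μ : Measure SL2) [IsProbabilityMeasure μ] (R : ℝ)
    (hR : ∀ n, cvp μ n {g | R < hs g} = 0) (g : SL2) (hg : g ∈ Submonoid.closure (measSupp μ)) :
    hs g ≤ R := by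
  have : ∃ n, g ∈ measSupp (cvp μ n) := by
    induction hg using Submonoid.closure_induction_right with
    | one => exact ⟨0, one_mem_supp_cvp μ⟩
    | mul_right x hx y hy ih =>
      obtain ⟨n, hn⟩ := ih
      exact ⟨n + 1, mul_mem_supp_cvp μ hn hy⟩
  obtain ⟨n, hn⟩ := this
  have hcl : IsClosed {g | hs g ≤ R} := isClosed_le continuous_hs continuous_const
  refine supp_subset_closed hcl ?_ hn
  have e : {g | hs g ≤ R}ᶜ = {g | R < hs g} := by ext; simp
  rw [e]; exact hR n

lemma isCompact_hs_le (R : ℝ) : IsCompact {g : SL2 | hs g ≤ R} := by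
  have hemb : Topology.IsEmbedding (Subtype.val : SL2 → Matrix (Fin 2) (Fin 2) ℝ) :=
    Topology.IsEmbedding.subtypeVal
  refine hemb.isCompact_iff.2 ?_
  have : (Subtype.val '' {g : SL2 | hs g ≤ R}) = {M : Matrix (Fin 2) (Fin 2) ℝ |
      M.det = 1 ∧ M 0 0 ^ 2 + M 0 1 ^ 2 + M 1 0 ^ 2 + M 1 1 ^ 2 ≤ R} := by
    ext M
    constructor
    · rintro ⟨g, hg, rfl⟩
      exact ⟨g.2, hg⟩
    · rintro ⟨h1, h2⟩
      exact ⟨⟨M, h1⟩, h2, rfl⟩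
  refine (congrArg IsCompact this).mpr ?_
  have hsub : {M : Matrix (Fin 2) (Fin 2) ℝ |
      M.det = 1 ∧ M 0 0 ^ 2 + M 0 1 ^ 2 + M 1 0 ^ 2 + M 1 1 ^ 2 ≤ R} ⊆
      Set.pi Set.univ (fun _ : Fin 2 => Set.pi Set.univ (fun _ : Fin 2 => Set.Icc (-(1 + R)) (1 + R))) := by
    rintro M ⟨_, h2⟩ i _ j _
    have : M i j ^ 2 ≤ R := by
      fin_cases i <;> fin_cases j <;> simp <;>
        nlinarith [sq_nonneg (M 0 0), sq_nonneg (M 0 1), sq_nonneg (M 1 0), sq_nonneg (M 1 1)]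
    constructor <;> nlinarith
  refine IsCompact.of_isClosed_subset ?_ ?_ hsub
  · exact isCompact_univ_pi (fun _ => isCompact_univ_pi (fun _ => isCompact_Icc))
  · apply IsClosed.inter
    · exact isClosed_eq (f := fun M : Matrix (Fin 2) (Fin 2) ℝ => M.det) (by fun_prop) continuous_const
    · exact isClosed_le (f := fun M : Matrix (Fin 2) (Fin 2) ℝ =>
        M 0 0 ^ 2 + M 0 1 ^ 2 + M 1 0 ^ 2 + M 1 1 ^ 2) (by fun_prop) continuous_const

lemma group_bdd (S : Set SL2) (R : ℝ) (hR : ∀ g ∈ Submonoid.closure S, hs g ≤ R) :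
    ∀ g ∈ Subgroup.closure S, hs g ≤ R := by
  let T := (Submonoid.closure S).topologicalClosure
  have hT : ∀ g ∈ T, hs g ≤ R := by
    have hcl : IsClosed {g : SL2 | hs g ≤ R} := isClosed_le continuous_hs continuous_const
    exact fun g hg => closure_minimal (s := (Submonoid.closure S : Set SL2)) hR hcl hg
  have hTc : IsCompact (T : Set SL2) :=
    (isCompact_hs_le R).of_isClosed_subset (Submonoid.isClosed_topologicalClosure _) hT
  have hinv : ∀ g ∈ T, g⁻¹ ∈ T := by
    intro g hg
    obtain ⟨m, ⟨t, ht, rfl⟩, hm⟩ := exists_idempotent_in_compact_subsemigroup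
      (fun r : SL2 => continuous_mul_const r) ((fun t => g * t) '' (T : Set SL2))
      ⟨_, ⟨1, T.one_mem, rfl⟩⟩ (hTc.image (continuous_const_mul g)) (by
        rintro _ ⟨a, ha, rfl⟩ _ ⟨b, hb, rfl⟩
        exact ⟨a * (g * b), T.mul_mem ha (T.mul_mem hg hb), by simp [mul_assoc]⟩)
    have h1 : g * t = 1 := by simpa using hm
    have : g⁻¹ = t := inv_eq_of_mul_eq_one_right h1
    rw [this]; exact ht
  let G : Subgroup SL2 := { T with inv_mem' := fun {x} hx => hinv x hx }
  have : Subgroup.closure S ≤ G := by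
    rw [Subgroup.closure_le]
    intro g hg
    exact Submonoid.le_topologicalClosure _ (Submonoid.subset_closure hg)
  exact fun g hg => hT g (this hg)

/-- If all convolution powers are uniformly bounded then the group is solvable. -/
lemma solv_of_cvp_bdd (μ : Measure SL2) [IsProbabilityMeasure μ] (R : ℝ)
    (hR : ∀ n, cvp μ n {g | R < hs g} = 0) : Group.IsSolvable (Subgroup.closure (measSupp μ)) :=
  solv_bdd _ R (group_bdd _ R (submonoid_bdd μ R hR))

/-- If almost every element preserves a finite set, the group is solvable. -/
lemma solv_of_ae_fin (μ : Measure SL2) (F : Set Sph) (hF : F.Finite)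
    (hne : F.Nonempty) (h : ∀ᵐ g ∂μ, ∀ w ∈ F, sact g w ∈ F) :
    Group.IsSolvable (Subgroup.closure (measSupp μ)) := by
  have hcl : IsClosed {g : SL2 | ∀ w ∈ F, sact g w ∈ F} := by
    have : {g : SL2 | ∀ w ∈ F, sact g w ∈ F} = ⋂ w ∈ F, {g | sact g w ∈ F} := by ext; simp
    rw [this]
    exact isClosed_biInter (fun w _ => hF.isClosed.preimage (by fun_prop : Continuous fun g => sact g w))
  have hsub := supp_subset_closed hcl (by exact h)
  refine solv_fin _ F hF hne (fun g hg => ?_)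
  induction hg using Subgroup.closure_induction with
  | mem x hx => exact hsub hx
  | one => intro w hw; rwa [sact_one]
  | mul x y _ _ hx hy => intro w hw; rw [sact_mul]; exact hx _ (hy w hw)
  | inv x _ hx =>
    intro w hw
    have hb : Set.SurjOn (sact x) F F :=
      ((hF.injOn_iff_bijOn_of_mapsTo hx).1 (fun a _ b _ hab => by
        rw [← sact_inv_sact x a, hab, sact_inv_sact])).surjOn
    obtain ⟨v, hv, rfl⟩ := hb hw
    rwa [sact_inv_sact]



/-! ### Existence of a drift function or of a bad stationary measure -/

lemma riesz_sph (Λ : C(Sph, ℝ) →ₗ[ℝ] ℝ) (hpos : ∀ f : C(Sph, ℝ), (∀ v, 0 ≤ f v) → 0 ≤ Λ f)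
    (h1 : Λ 1 = 1) : ∃ ν : Measure Sph, IsProbabilityMeasure ν ∧ ∀ f : C(Sph, ℝ), ∫ v, f v ∂ν = Λ f := by
  let Λ' : CompactlySupportedContinuousMap Sph ℝ →ₗ[ℝ] ℝ :=
    { toFun := fun f => Λ f.toContinuousMap
      map_add' := fun f g => by
        rw [← map_add]; rfl
      map_smul' := fun c f => by
        rw [RingHom.id_apply, ← map_smul]; rfl }
  let L : CompactlySupportedContinuousMap Sph ℝ →ₚ[ℝ] ℝ := PositiveLinearMap.mk₀ Λ' (fun f hf => hpos _ (fun v => hf v))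
  have key : ∀ f : C(Sph, ℝ), ∫ v, f v ∂(RealRMK.rieszMeasure L) = Λ f := fun f =>
    RealRMK.integral_rieszMeasure L (CompactlySupportedContinuousMap.continuousMapEquiv f)
  refine ⟨RealRMK.rieszMeasure L, ?_, key⟩
  have := key 1
  rw [h1] at this
  simp only [ContinuousMap.one_apply, integral_const, smul_eq_mul, mul_one] at this
  refine ⟨?_⟩
  unfold Measure.real at this
  exact (ENNReal.toReal_eq_one_iff _).1 this

section secP6
variable (μ : Measure SL2) [IsProbabilityMeasure μ]

lemma int_sg (hln : Integrable ln μ) (v : Sph) : Integrable (fun g => sg g v) μ :=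
  hln.mono' (by fun_prop : Measurable fun g => sg g v).aestronglyMeasurable
    (ae_of_all _ fun g => abs_sg_le g v)

lemma int_cont (φ : C(Sph, ℝ)) (v : Sph) : Integrable (fun g => φ (sact g v)) μ := by
  refine Integrable.of_bound (C := ‖φ‖) ?_ (ae_of_all _ fun g => φ.norm_coe_le_norm _)
  exact (φ.continuous.comp (by fun_prop : Continuous fun g => sact g v)).measurable.aestronglyMeasurable

lemma cont_sbar (hln : Integrable ln μ) : Continuous (fun v => ∫ g, sg g v ∂μ) := by
  refine continuous_of_dominated (bound := ln) (fun v => (int_sg μ hln v).aestronglyMeasurable)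
    (fun v => ae_of_all _ fun g => abs_sg_le g v) hln (ae_of_all _ fun g => by fun_prop)

lemma cont_P (φ : C(Sph, ℝ)) : Continuous (fun v => ∫ g, φ (sact g v) ∂μ) := by
  refine continuous_of_dominated (bound := fun _ => ‖φ‖) (fun v => (int_cont μ φ v).aestronglyMeasurable)
    (fun v => ae_of_all _ fun g => φ.norm_coe_le_norm _) (integrable_const _)
    (ae_of_all _ fun g => φ.continuous.comp (by fun_prop))

/-- the operator `φ ↦ Pφ - φ` -/
def Lop : C(Sph, ℝ) →ₗ[ℝ] C(Sph, ℝ) where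
  toFun φ := ⟨fun v => ∫ g, φ (sact g v) ∂μ, cont_P μ φ⟩ - φ
  map_add' φ ψ := by
    ext v
    simp only [ContinuousMap.sub_apply, ContinuousMap.add_apply, ContinuousMap.coe_mk]
    rw [integral_add (int_cont μ φ v) (int_cont μ ψ v)]; ring
  map_smul' c φ := by
    ext v
    simp only [ContinuousMap.sub_apply, ContinuousMap.smul_apply, ContinuousMap.coe_mk,
      smul_eq_mul, RingHom.id_apply]
    rw [integral_const_mul]; ring

def sbarC (hln : Integrable ln μ) : C(Sph, ℝ) := ⟨fun v => ∫ g, sg g v ∂μ, cont_sbar μ hln⟩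

lemma exists_min_sph (f : C(Sph, ℝ)) : ∃ v, ∀ w, f v ≤ f w := by
  obtain ⟨v, _, hv⟩ := isCompact_univ.exists_isMinOn (Set.univ_nonempty (α := Sph)) f.continuous.continuousOn
  exact ⟨v, fun w => hv (Set.mem_univ w)⟩

lemma isOpen_pos : IsOpen {f : C(Sph, ℝ) | ∀ v, 0 < f v} := by
  have := ContinuousMap.isOpen_setOfPred_mapsTo (X := Sph) (Y := ℝ) isCompact_univ (isOpen_Ioi (a := (0:ℝ)))
  convert this using 1
  ext f
  simp [Set.MapsTo]

lemma dichotomy (hln : Integrable ln μ) :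
    (∃ φ : C(Sph, ℝ), ∃ c > 0, ∀ v, c ≤ ∫ g, sg g v ∂μ + ∫ g, φ (sact g v) ∂μ - φ v) ∨
    (∃ ν : Measure Sph, IsProbabilityMeasure ν ∧
      (∀ f : C(Sph, ℝ), ∫ v, ∫ g, f (sact g v) ∂μ ∂ν = ∫ v, f v ∂ν) ∧
      ∫ v, ∫ g, sg g v ∂μ ∂ν ≤ 0) := by
  by_cases hex : ∃ φ : C(Sph, ℝ), ∀ v, 0 < (sbarC μ hln + Lop μ φ) v
  · left
    obtain ⟨φ, hφ⟩ := hex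
    obtain ⟨v0, hv0⟩ := exists_min_sph (sbarC μ hln + Lop μ φ)
    refine ⟨φ, _, hφ v0, fun v => (hv0 v).trans (le_of_eq ?_)⟩
    simp only [sbarC, Lop, ContinuousMap.add_apply, ContinuousMap.coe_mk, LinearMap.coe_mk,
      AddHom.coe_mk, ContinuousMap.sub_apply]
    ring
  right
  push Not at hex
  let s : Set C(Sph, ℝ) := {f | ∀ v, 0 < f v}
  let t : Set C(Sph, ℝ) := Set.range (fun φ => sbarC μ hln + Lop μ φ)
  have hs1 : Convex ℝ s := by
    intro f hf g hg a b ha hb hab v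
    simp only [ContinuousMap.add_apply, ContinuousMap.smul_apply, smul_eq_mul]
    have h1 := hf v
    have h2 := hg v
    rcases ha.eq_or_lt with rfl | ha
    · have : b = 1 := by linarith
      rw [this]; linarith
    · have : 0 ≤ b * g v := by positivity
      have : 0 < a * f v := by positivity
      linarith
  have ht : Convex ℝ t := by
    rintro _ ⟨φ, rfl⟩ _ ⟨ψ, rfl⟩ a b ha hb hab
    refine ⟨a • φ + b • ψ, ?_⟩
    have hb' : b = 1 - a := by linarith
    change sbarC μ hln + Lop μ (a • φ + b • ψ) = _
    rw [map_add, map_smul, map_smul, smul_add, smul_add, hb', sub_smul, sub_smul, one_smul, one_smul]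
    abel
  have hd : Disjoint s t := by
    rw [Set.disjoint_left]
    rintro _ hf ⟨φ, rfl⟩
    obtain ⟨v, hv⟩ := hex φ
    exact absurd (hf v) (not_lt.2 hv)
  obtain ⟨F, u, hu1, hu2⟩ := geometric_hahn_banach_open hs1 isOpen_pos ht hd
  have c1 : ∀ f ∈ s, F f ≤ 0 := by
    intro f hf
    by_contra hc
    push Not at hc
    obtain ⟨n, hn⟩ := exists_nat_gt (u / F f)
    rw [div_lt_iff₀ hc] at hn
    have hmem : ((n : ℝ) + 1) • f ∈ s := fun v => by
      have := hf v
      simp only [ContinuousMap.smul_apply, smul_eq_mul]; positivity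
    have := hu1 _ hmem
    rw [map_smul, smul_eq_mul] at this
    linarith
  have one_s : (1 : C(Sph, ℝ)) ∈ s := fun v => by simp
  have c2 : 0 ≤ u := by
    by_contra hc
    push Not at hc
    -- small multiples of 1
    have h1 := c1 1 one_s
    have h2 := hu1 1 one_s
    have hF : F 1 < 0 := by linarith
    have hpos : 0 < u / F 1 := div_pos_of_neg_of_neg hc hF
    have hmem : (u / F 1) • (1 : C(Sph, ℝ)) ∈ s := fun v => by
      simp only [ContinuousMap.smul_apply, smul_eq_mul, ContinuousMap.one_apply, mul_one]; exact hpos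
    have := hu1 _ hmem
    rw [map_smul, smul_eq_mul, div_mul_cancel₀ _ hF.ne] at this
    exact lt_irrefl _ this
  have cst : ∀ (k : ℝ), F (algebraMap ℝ C(Sph, ℝ) k) = k * F 1 := fun k => by
    rw [Algebra.algebraMap_eq_smul_one, map_smul, smul_eq_mul]
  have c3 : ∀ φ, 0 ≤ F (sbarC μ hln) + F (Lop μ φ) := fun φ => by
    rw [← map_add]; exact c2.trans (hu2 _ ⟨φ, rfl⟩)
  have c4 : F 1 < 0 := by
    refine lt_of_le_of_ne (c1 1 one_s) (fun h0 => ?_)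
    obtain ⟨v0, hv0⟩ := exists_min_sph (sbarC μ hln)
    have hmem : sbarC μ hln + (1 - sbarC μ hln v0) • (1 : C(Sph, ℝ)) ∈ s := fun v => by
      simp only [ContinuousMap.smul_apply, smul_eq_mul, ContinuousMap.one_apply, mul_one,
        ContinuousMap.add_apply]
      linarith [hv0 v]
    have h1 := hu1 _ hmem
    rw [map_add, map_smul, h0] at h1
    have h2 := hu2 (sbarC μ hln) ⟨0, by simp⟩
    simp at h1
    linarith
  have c5 : ∀ φ, F (Lop μ φ) = 0 := by
    intro φ
    have key : ∀ k : ℝ, 0 ≤ F (sbarC μ hln) + k * F (Lop μ φ) := fun k => by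
      have := c3 (k • φ)
      rwa [map_smul, map_smul, smul_eq_mul] at this
    by_contra hne
    have := key (-(F (sbarC μ hln) + 1) / F (Lop μ φ))
    rw [div_mul_cancel₀ _ hne] at this
    linarith
  have c6 : 0 ≤ F (sbarC μ hln) := by simpa using c3 0
  have c7 : ∀ f : C(Sph, ℝ), (∀ v, 0 ≤ f v) → F f ≤ 0 := by
    intro f hf
    by_contra hc
    push Not at hc
    have hk : 0 < F f / (-2 * F 1) := by apply div_pos hc; linarith
    have hmem : f + (F f / (-2 * F 1)) • (1 : C(Sph, ℝ)) ∈ s := fun v => by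
      simp only [ContinuousMap.smul_apply, smul_eq_mul, ContinuousMap.one_apply, mul_one,
        ContinuousMap.add_apply]
      linarith [hf v]
    have := c1 _ hmem
    rw [map_add, map_smul, smul_eq_mul] at this
    have hne := c4.ne
    have e : F f / (-2 * F 1) * F 1 = - (F f / 2) := by
      generalize F 1 = q at *
      field_simp
    rw [e] at this
    linarith
  obtain ⟨ν, hν, hRiesz⟩ := riesz_sph ((F 1)⁻¹ • (F : C(Sph, ℝ) →ₗ[ℝ] ℝ))
    (fun f hf => by
      have := c7 f hf
      simp only [LinearMap.smul_apply, smul_eq_mul, ContinuousLinearMap.coe_coe]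
      exact mul_nonneg_of_nonpos_of_nonpos (inv_nonpos.2 c4.le) this)
    (by simp [c4.ne])
  refine ⟨ν, hν, fun f => ?_, ?_⟩
  · have h1 := hRiesz (Lop μ f)
    simp only [LinearMap.smul_apply, smul_eq_mul, ContinuousLinearMap.coe_coe, c5, mul_zero] at h1
    have e : ∀ v, Lop μ f v = ∫ g, f (sact g v) ∂μ - f v := fun v => rfl
    simp_rw [e] at h1
    rw [integral_sub] at h1
    · linarith
    · exact (cont_P μ f).integrable_of_hasCompactSupport (HasCompactSupport.of_compactSpace _)
    · exact f.continuous.integrable_of_hasCompactSupport (HasCompactSupport.of_compactSpace _)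
  · have h1 := hRiesz (sbarC μ hln)
    have : ∫ v, ∫ g, sg g v ∂μ ∂ν = (F 1)⁻¹ * F (sbarC μ hln) := h1
    rw [this]
    exact mul_nonpos_of_nonpos_of_nonneg (inv_nonpos.2 c4.le) c6

end secP6



/-! ### Stationary measures -/

def Stat (μ : Measure SL2) (ν : Measure Sph) : Prop :=
  (μ.prod ν).map (fun p : SL2 × Sph => sact p.1 p.2) = ν

lemma meas_sact : Measurable (fun p : SL2 × Sph => sact p.1 p.2) := continuous_sact.measurable

lemma stat_of_int (μ : Measure SL2) [IsProbabilityMeasure μ] (ν : Measure Sph) [IsProbabilityMeasure ν]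
    (h : ∀ f : C(Sph, ℝ), ∫ v, ∫ g, f (sact g v) ∂μ ∂ν = ∫ v, f v ∂ν) : Stat μ ν := by
  have : IsProbabilityMeasure ((μ.prod ν).map (fun p : SL2 × Sph => sact p.1 p.2)) :=
    Measure.isProbabilityMeasure_map meas_sact.aemeasurable
  unfold Stat
  apply ext_of_forall_integral_eq_of_IsFiniteMeasure
  intro f
  rw [integral_map meas_sact.aemeasurable f.continuous.aestronglyMeasurable]
  have hi : Integrable (fun p : SL2 × Sph => f (sact p.1 p.2)) (μ.prod ν) :=
    Integrable.of_bound (C := ‖f‖) (f.continuous.comp continuous_sact).aestronglyMeasurable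
      (ae_of_all _ fun p => f.norm_coe_le_norm _)
  rw [integral_prod_symm _ hi]
  exact h f.toContinuousMap

lemma stat_lint {μ : Measure SL2} [IsProbabilityMeasure μ] {ν : Measure Sph} [IsProbabilityMeasure ν]
    (h : Stat μ ν) {f : Sph → ENNReal} (hf : Measurable f) :
    ∫⁻ g, ∫⁻ v, f (sact g v) ∂ν ∂μ = ∫⁻ v, f v ∂ν := by
  conv_rhs => rw [← h]
  rw [lintegral_map hf meas_sact, lintegral_prod _ (by fun_prop : Measurable fun p : SL2 × Sph => f (sact p.1 p.2)).aemeasurable]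

lemma stat_int {μ : Measure SL2} [IsProbabilityMeasure μ] {ν : Measure Sph} [IsProbabilityMeasure ν]
    (h : Stat μ ν) {f : Sph → ℝ} (hf : Continuous f) :
    ∫ g, ∫ v, f (sact g v) ∂ν ∂μ = ∫ v, f v ∂ν := by
  conv_rhs => rw [← h]
  rw [integral_map meas_sact.aemeasurable hf.aestronglyMeasurable]
  obtain ⟨C, hC⟩ := isCompact_univ.exists_bound_of_continuousOn (f := f) hf.continuousOn
  have hi : Integrable (fun p : SL2 × Sph => f (sact p.1 p.2)) (μ.prod ν) :=
    Integrable.of_bound (C := C) (hf.comp continuous_sact).aestronglyMeasurable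
      (ae_of_all _ fun p => hC _ (Set.mem_univ _))
  rw [integral_prod _ hi]

lemma stat_nonatomic {μ : Measure SL2} [IsProbabilityMeasure μ] {ν : Measure Sph}
    [IsProbabilityMeasure ν] (h : Stat μ ν)
    (hns : ¬ Group.IsSolvable (Subgroup.closure (measSupp μ))) (w : Sph) : ν {w} = 0 := by
  by_contra hw
  have fin0 : {v : Sph | ν {w} ≤ ν {v}}.Finite :=
    Measure.finite_const_le_meas_of_disjoint_iUnion ν (pos_iff_ne_zero.2 hw)
      (fun v => measurableSet_singleton v)
      (fun a b hab => Set.disjoint_singleton.2 hab) (measure_ne_top _ _)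
  obtain ⟨w1, hw1, hmax⟩ := Set.exists_max_image _ (fun v => ν {v}) fin0 ⟨w, (le_refl (ν {w}) : ν {w} ≤ ν {w})⟩
  have hle : ∀ v, ν {v} ≤ ν {w1} := by
    intro v
    by_cases hv : ν {w} ≤ ν {v}
    · exact hmax v hv
    · exact (not_le.1 hv).le.trans hw1
  let F : Set Sph := {v | ν {v} = ν {w1}}
  have hF : F.Finite := fin0.subset (fun v hv => by
    change ν {w} ≤ ν {v}; rw [show ν {v} = ν {w1} from hv]; exact hw1)
  have key : ∀ v ∈ F, ∀ᵐ g ∂μ, sact g⁻¹ v ∈ F := by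
    intro v hv
    have e : ∀ g, {u | sact g u = v} = {sact g⁻¹ v} := fun g => by
      ext u
      constructor
      · rintro rfl; rw [sact_inv_sact]; rfl
      · rintro rfl; exact sact_sact_inv g v
    have hm := stat_lint h (f := ({v} : Set Sph).indicator 1)
      (measurable_one.indicator (measurableSet_singleton v))
    have e2 : ∀ g, ∫⁻ u, ({v} : Set Sph).indicator (1 : Sph → ENNReal) (sact g u) ∂ν
        = ν {sact g⁻¹ v} := by
      intro g
      rw [← e g, ← lintegral_indicator_one]
      · rfl
      · rw [e g]; exact measurableSet_singleton _
    simp_rw [e2] at hm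
    rw [lintegral_indicator_one (measurableSet_singleton v), show ν {v} = ν {w1} from hv] at hm
    have := ae_eq_of_ae_le_of_lintegral_le (μ := μ) (f := fun g => ν {sact g⁻¹ v})
      (g := fun _ => ν {w1}) (ae_of_all _ fun g => hle _) (by rw [hm]; exact measure_ne_top _ _)
      aemeasurable_const (by rw [hm]; simp)
    filter_upwards [this] with g hg
    exact hg
  have hall : ∀ᵐ g ∂μ, ∀ v ∈ F, sact g⁻¹ v ∈ F := by
    rw [ae_ball_iff hF.countable]; exact key
  refine hns (solv_of_ae_fin μ F hF ⟨w1, rfl⟩ ?_)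
  filter_upwards [hall] with g hg
  intro u hu
  have hb : Set.SurjOn (sact g⁻¹) F F :=
    ((hF.injOn_iff_bijOn_of_mapsTo hg).1 (fun a _ b _ hab => by
      rw [← sact_sact_inv g a, hab, sact_sact_inv])).surjOn
  obtain ⟨v, hv, rfl⟩ := hb hu
  rwa [sact_sact_inv]

/-! ### convolution powers as images of products -/

lemma cvp_succ_map (μ : Measure SL2) [IsProbabilityMeasure μ] (n : ℕ) :
    cvp μ (n + 1) = ((cvp μ n).prod μ).map (fun p : SL2 × SL2 => p.1 * p.2) := by
  ext A hA
  rw [← lintegral_indicator_one hA, ← lintegral_indicator_one hA]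
  generalize hf0 : (A.indicator (1 : SL2 → ENNReal)) = f
  have hf : Measurable f := by rw [← hf0]; exact measurable_one.indicator hA
  rw [lintegral_cvp_succ μ n hf, lintegral_map hf measurable_mul,
    lintegral_prod_symm _ (by fun_prop : Measurable fun p : SL2 × SL2 => f (p.1 * p.2)).aemeasurable]

lemma cvp_zero_dirac (μ : Measure SL2) [IsProbabilityMeasure μ] : cvp μ 0 = Measure.dirac 1 := by
  ext A hA
  rw [cvp_apply_zero μ hA, Measure.dirac_apply' _ hA]

lemma int_ln_cvp (μ : Measure SL2) [IsProbabilityMeasure μ] (hln : Integrable ln μ) (n : ℕ) :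
    Integrable ln (cvp μ n) := by
  induction n with
  | zero => rw [cvp_zero_dirac]; exact integrable_dirac (by simp)
  | succ n ih =>
    rw [cvp_succ_map, integrable_map_measure measurable_ln.aestronglyMeasurable
      measurable_mul.aemeasurable]
    have h1 : Integrable (fun p : SL2 × SL2 => ln p.1 + ln p.2) ((cvp μ n).prod μ) :=
      (ih.comp_fst μ).add (hln.comp_snd _)
    refine h1.mono' (measurable_ln.comp measurable_mul).aestronglyMeasurable (ae_of_all _ fun p => ?_)
    simp only [Function.comp]
    rw [Real.norm_of_nonneg (ln_nonneg _)]
    exact ln_mul_le _ _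

lemma stat_cvp {μ : Measure SL2} [IsProbabilityMeasure μ] {ν : Measure Sph} [IsProbabilityMeasure ν]
    (h : Stat μ ν) (n : ℕ) : Stat (cvp μ n) ν := by
  unfold Stat
  ext A hA
  rw [← lintegral_indicator_one hA, ← lintegral_indicator_one hA]
  generalize hf0 : (A.indicator (1 : Sph → ENNReal)) = f
  have hf : Measurable f := by rw [← hf0]; exact measurable_one.indicator hA
  rw [lintegral_map hf meas_sact, lintegral_prod _ (by fun_prop : Measurable fun p : SL2 × Sph => f (sact p.1 p.2)).aemeasurable]
  dsimp only
  have hm : Measurable fun g : SL2 => ∫⁻ v, f (sact g v) ∂ν :=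
    Measurable.lintegral_prod_right' (f := fun p : SL2 × Sph => f (sact p.1 p.2)) (by fun_prop)
  induction n with
  | zero =>
    rw [lintegral_cvp_zero μ hm]
    simp [sact_one]
  | succ n ih =>
    rw [lintegral_cvp_succ μ n hm]
    rw [← ih, lintegral_lintegral_swap]
    · apply lintegral_congr
      intro g
      simp only [sact_mul]
      exact stat_lint h (f := fun v => f (sact g v)) (by fun_prop)
    · have : Measurable (fun p : (SL2 × SL2) × Sph => f (sact (p.1.2 * p.1.1) p.2)) := by fun_prop
      exact (Measurable.lintegral_prod_right' this).aemeasurable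

lemma int_sg_prod {μ : Measure SL2} [IsProbabilityMeasure μ] (ν : Measure Sph) [IsProbabilityMeasure ν]
    (hln : Integrable ln μ) : Integrable (fun p : SL2 × Sph => sg p.1 p.2) (μ.prod ν) := by
  refine (hln.comp_fst ν).mono' ?_ (ae_of_all _ fun p => abs_sg_le _ _)
  exact (by fun_prop : Measurable fun p : SL2 × Sph => sg p.1 p.2).aestronglyMeasurable

lemma sg_cvp {μ : Measure SL2} [IsProbabilityMeasure μ] {ν : Measure Sph} [IsProbabilityMeasure ν]
    (h : Stat μ ν) (hln : Integrable ln μ) (n : ℕ) :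
    ∫ g, ∫ v, sg g v ∂ν ∂(cvp μ n) = n * ∫ g, ∫ v, sg g v ∂ν ∂μ := by
  induction n with
  | zero => rw [cvp_zero_dirac, integral_dirac]; simp [sg_one]
  | succ n ih =>
    have hlnn := int_ln_cvp μ hln n
    have i0 := int_ln_cvp μ hln (n + 1)
    have hI : ∀ g, Integrable (fun v => sg g v) ν := fun g =>
      (by fun_prop : Continuous fun v => sg g v).integrable_of_hasCompactSupport
        (HasCompactSupport.of_compactSpace _)
    have hI2 : ∀ g h, Integrable (fun v => sg g (sact h v)) ν := fun g h =>
      (by fun_prop : Continuous fun v => sg g (sact h v)).integrable_of_hasCompactSupport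
        (HasCompactSupport.of_compactSpace _)
    have m1 : AEStronglyMeasurable (fun g => ∫ v, sg g v ∂ν) (cvp μ (n + 1)) :=
      (int_sg_prod ν i0).aestronglyMeasurable.integral_prod_right'
    rw [cvp_succ_map, integral_map measurable_mul.aemeasurable (by rw [← cvp_succ_map]; exact m1)]
    have e : ∀ p : SL2 × SL2, ∫ v, sg (p.1 * p.2) v ∂ν
        = ∫ v, sg p.1 (sact p.2 v) ∂ν + ∫ v, sg p.2 v ∂ν := fun p => by
      simp_rw [sg_mul]
      rw [integral_add (hI2 _ _) (hI _)]
    simp_rw [e]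
    have j1 : Integrable (fun p : SL2 × SL2 => ∫ v, sg p.1 (sact p.2 v) ∂ν) ((cvp μ n).prod μ) := by
      refine (hlnn.comp_fst μ).mono' ?_ (ae_of_all _ fun p => ?_)
      · have : Measurable (fun p : (SL2 × SL2) × Sph => sg p.1.1 (sact p.1.2 p.2)) := by fun_prop
        exact this.aestronglyMeasurable.integral_prod_right'
      · refine (norm_integral_le_of_norm_le_const (C := ln p.1) (ae_of_all _ fun v => abs_sg_le _ _)).trans ?_
        simp
    have j2 : Integrable (fun p : SL2 × SL2 => ∫ v, sg p.2 v ∂ν) ((cvp μ n).prod μ) :=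
      (int_sg_prod ν hln).integral_prod_left.comp_snd _
    rw [integral_add j1 j2, integral_prod _ j1, integral_prod _ j2]
    have e2 : ∀ g, ∫ h, ∫ v, sg g (sact h v) ∂ν ∂μ = ∫ v, sg g v ∂ν := fun g =>
      stat_int h (f := fun v => sg g v) (by fun_prop)
    simp only [e2]
    rw [ih]
    simp
    ring



/-! ### Energy of a stationary measure -/

def mj (n j : ℕ) (v : Sph) : ℝ := sx v ^ j * sy v ^ (n - j)

lemma continuous_mj (n j : ℕ) : Continuous (mj n j) := by unfold mj; fun_prop

lemma dp_pow (n : ℕ) (v w : Sph) :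
    dp v w ^ n = ∑ j ∈ Finset.range (n + 1), (n.choose j : ℝ) * (mj n j v * mj n j w) := by
  unfold dp mj
  rw [add_pow]
  refine Finset.sum_congr rfl fun j _ => ?_
  rw [mul_pow, mul_pow]; ring

lemma cont_int {ν : Measure Sph} [IsProbabilityMeasure ν] {f : Sph → ℝ} (hf : Continuous f) :
    Integrable f ν := hf.integrable_of_hasCompactSupport (HasCompactSupport.of_compactSpace _)

lemma int_dp_pow (ν : Measure Sph) [IsProbabilityMeasure ν] {k : Sph → Sph} (hk : Continuous k)
    (n : ℕ) : ∫ p, dp (k p.1) (k p.2) ^ n ∂(ν.prod ν)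
      = ∑ j ∈ Finset.range (n + 1), (n.choose j : ℝ) * (∫ v, mj n j (k v) ∂ν) ^ 2 := by
  simp_rw [dp_pow]
  have hi : ∀ j, Integrable (fun v => mj n j (k v)) ν := fun j =>
    cont_int ((continuous_mj n j).comp hk)
  rw [integral_finsetSum]
  · refine Finset.sum_congr rfl fun j _ => ?_
    rw [integral_const_mul, integral_prod_mul (fun v => mj n j (k v)) (fun v => mj n j (k v)), sq]
  · intro j _
    exact ((hi j).mul_prod (hi j)).const_mul _

lemma abs_sx_le (v : Sph) : |sx v| ≤ 1 := by
  rw [← sq_le_one_iff_abs_le_one]; nlinarith [s_eq v, sq_nonneg (sy v)]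
lemma abs_sy_le (v : Sph) : |sy v| ≤ 1 := by
  rw [← sq_le_one_iff_abs_le_one]; nlinarith [s_eq v, sq_nonneg (sx v)]
lemma abs_mj_le (n j : ℕ) (v : Sph) : |mj n j v| ≤ 1 := by
  unfold mj
  rw [abs_mul, abs_pow, abs_pow]
  exact mul_le_one₀ (pow_le_one₀ (abs_nonneg _) (abs_sx_le v)) (by positivity)
    (pow_le_one₀ (abs_nonneg _) (abs_sy_le v))
lemma abs_dp_le (v w : Sph) : |dp v w| ≤ 1 := by
  rw [← sq_le_one_iff_abs_le_one]; nlinarith [dt_dp v w, sq_nonneg (dt v w)]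
lemma abs_dt_le (v w : Sph) : |dt v w| ≤ 1 := by
  rw [← sq_le_one_iff_abs_le_one]; nlinarith [dt_dp v w, sq_nonneg (dp v w)]

section energy
variable {η : Measure SL2} [IsProbabilityMeasure η] {ν : Measure Sph} [IsProbabilityMeasure ν]

lemma int_Aj (n j : ℕ) : Integrable (fun g => ∫ v, mj n j (sact g v) ∂ν) η := by
  have h : Integrable (fun p : SL2 × Sph => mj n j (sact p.1 p.2)) (η.prod ν) :=
    Integrable.of_bound (C := 1) ((continuous_mj n j).comp continuous_sact).aestronglyMeasurable
      (ae_of_all _ fun p => abs_mj_le _ _ _)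
  exact h.integral_prod_left

lemma abs_Aj (n j : ℕ) (g : SL2) : |∫ v, mj n j (sact g v) ∂ν| ≤ 1 := by
  refine (norm_integral_le_of_norm_le_const (f := fun v => mj n j (sact g v)) (C := 1) (ae_of_all _ fun v => abs_mj_le _ _ _)).trans ?_
  simp

lemma int_Asq (n j : ℕ) :
    Integrable (fun g => (∫ v, mj n j (sact g v) ∂ν - ∫ v, mj n j v ∂ν) ^ 2) η := by
  have h1 := (int_Aj (η := η) (ν := ν) n j).sub (integrable_const (∫ v, mj n j v ∂ν))
  refine Integrable.of_bound (C := 4) (h1.aestronglyMeasurable.pow 2) (ae_of_all _ fun g => ?_)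
  have a1 := abs_le.1 (abs_Aj (ν := ν) n j g)
  have a2 := abs_le.1 (abs_Aj (ν := ν) n j 1)
  simp_rw [sact_one] at a2
  rw [Real.norm_of_nonneg (sq_nonneg _)]
  nlinarith

lemma D_eq (h : Stat η ν) (n : ℕ) :
    ∫ g, (∫ p, dp (sact g p.1) (sact g p.2) ^ n ∂(ν.prod ν) - ∫ p, dp p.1 p.2 ^ n ∂(ν.prod ν)) ∂η
      = ∑ j ∈ Finset.range (n + 1), (n.choose j : ℝ) *
        ∫ g, (∫ v, mj n j (sact g v) ∂ν - ∫ v, mj n j v ∂ν) ^ 2 ∂η := by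
  have e : ∀ g, ∫ p, dp (sact g p.1) (sact g p.2) ^ n ∂(ν.prod ν) - ∫ p, dp p.1 p.2 ^ n ∂(ν.prod ν)
      = ∑ j ∈ Finset.range (n + 1), (n.choose j : ℝ) *
        ((∫ v, mj n j (sact g v) ∂ν - ∫ v, mj n j v ∂ν) ^ 2
          + 2 * (∫ v, mj n j v ∂ν) * (∫ v, mj n j (sact g v) ∂ν - ∫ v, mj n j v ∂ν)) := by
    intro g
    rw [int_dp_pow ν (k := fun v => sact g v) (by fun_prop) n, int_dp_pow ν (k := fun v => v) continuous_id n,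
      ← Finset.sum_sub_distrib]
    refine Finset.sum_congr rfl fun j _ => ?_
    ring
  simp_rw [e]
  have i2 : ∀ j, Integrable (fun g => 2 * (∫ v, mj n j v ∂ν) *
      (∫ v, mj n j (sact g v) ∂ν - ∫ v, mj n j v ∂ν)) η := fun j =>
    ((int_Aj n j).sub (integrable_const _)).const_mul _
  rw [integral_finsetSum]
  · refine Finset.sum_congr rfl fun j _ => ?_
    rw [integral_const_mul, integral_add (int_Asq n j) (i2 j), integral_const_mul,
      integral_sub (int_Aj n j) (integrable_const _), stat_int h (continuous_mj n j)]
    simp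
  · intro j _
    exact ((int_Asq n j).add (i2 j)).const_mul _

lemma D_nonneg (h : Stat η ν) (n : ℕ) : 0 ≤
    ∫ g, (∫ p, dp (sact g p.1) (sact g p.2) ^ n ∂(ν.prod ν) - ∫ p, dp p.1 p.2 ^ n ∂(ν.prod ν)) ∂η := by
  rw [D_eq h]
  exact Finset.sum_nonneg fun j _ => mul_nonneg (by positivity) (integral_nonneg fun g => sq_nonneg _)

lemma D_zero (h : Stat η ν) (n : ℕ)
    (h0 : ∫ g, (∫ p, dp (sact g p.1) (sact g p.2) ^ n ∂(ν.prod ν) - ∫ p, dp p.1 p.2 ^ n ∂(ν.prod ν)) ∂η ≤ 0) :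
    ∀ᵐ g ∂η, ∫ p, dp (sact g p.1) (sact g p.2) ^ n ∂(ν.prod ν) = ∫ p, dp p.1 p.2 ^ n ∂(ν.prod ν) := by
  rw [D_eq h] at h0
  have nn : ∀ j ∈ Finset.range (n + 1), 0 ≤ (n.choose j : ℝ) *
        ∫ g, (∫ v, mj n j (sact g v) ∂ν - ∫ v, mj n j v ∂ν) ^ 2 ∂η := fun j _ =>
    mul_nonneg (by positivity) (integral_nonneg fun g => sq_nonneg _)
  have h1 := (Finset.sum_eq_zero_iff_of_nonneg nn).1 (le_antisymm h0 (Finset.sum_nonneg nn))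
  have h2 : ∀ j ∈ Finset.range (n + 1), ∀ᵐ g ∂η, ∫ v, mj n j (sact g v) ∂ν = ∫ v, mj n j v ∂ν := by
    intro j hj
    have h3 := h1 j hj
    have hc : (n.choose j : ℝ) ≠ 0 := by
      have := Nat.choose_pos (n := n) (k := j) (by have := Finset.mem_range.1 hj; omega)
      positivity
    have h4 := (mul_eq_zero.1 h3).resolve_left hc
    rw [integral_eq_zero_iff_of_nonneg (fun g => sq_nonneg _) (int_Asq n j)] at h4
    filter_upwards [h4] with g hg
    have := pow_eq_zero_iff (two_ne_zero) |>.1 hg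
    linarith
  have h5 : ∀ᵐ g ∂η, ∀ j ∈ Finset.range (n + 1), ∫ v, mj n j (sact g v) ∂ν = ∫ v, mj n j v ∂ν :=
    (ae_ball_iff (Finset.range (n+1)).countable_toSet).2 h2
  filter_upwards [h5] with g hg
  rw [int_dp_pow ν (k := fun v => sact g v) (by fun_prop) n, int_dp_pow ν (k := fun v => v) continuous_id n]
  refine Finset.sum_congr rfl fun j hj => ?_
  rw [hg j hj]

end energy



def lq (c : ℝ) (g : SL2) (p : Sph × Sph) : ℝ :=
  Real.log (1 - c * dp p.1 p.2 ^ 2) - Real.log (1 - c * dp (sact g p.1) (sact g p.2) ^ 2)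

lemma lq_bound {c : ℝ} (h0 : 0 < c) (h1 : c < 1) (g : SL2) (p : Sph × Sph) : |lq c g p| ≤ 4 * ln g := by
  unfold lq
  set d := dt p.1 p.2 with hd
  set e := dt (sact g p.1) (sact g p.2) with he
  have a1 : dp p.1 p.2 ^ 2 = 1 - d ^ 2 := by linarith [dt_dp p.1 p.2]
  have a2 : dp (sact g p.1) (sact g p.2) ^ 2 = 1 - e ^ 2 := by linarith [dt_dp (sact g p.1) (sact g p.2)]
  have hr : e * (nv g p.1 * nv g p.2) = d := dt_sact g p.1 p.2
  rw [a1, a2]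
  set N := (nv g p.1 * nv g p.2) ^ 2 with hN
  have hdN : d ^ 2 = e ^ 2 * N := by rw [← hr]; ring
  have p1 := nv_pos g p.1
  have p2 := nv_pos g p.2
  have u1 := nv_sq_le g p.1
  have u2 := nv_sq_le g p.2
  have l1 := one_le_hs_mul_nv g p.1
  have l2 := one_le_hs_mul_nv g p.2
  have hp := one_le_hs g
  have hNu : N ≤ hs g ^ 2 := by
    rw [hN, mul_pow, sq (hs g)]; exact mul_le_mul u1 u2 (by positivity) (by positivity)
  have hNl : 1 ≤ hs g ^ 2 * N := by
    have := one_le_mul_of_one_le_of_one_le l1 l2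
    calc (1:ℝ) ≤ _ := this
      _ = _ := by rw [hN]; ring
  have hs2 : 1 ≤ hs g ^ 2 := one_le_pow₀ hp
  have e2 : 0 ≤ e ^ 2 := sq_nonneg e
  have b1 : 0 < 1 - c * (1 - d ^ 2) := by nlinarith [sq_nonneg d]
  have b2 : 0 < 1 - c * (1 - e ^ 2) := by nlinarith
  have hl : 4 * ln g = Real.log (hs g ^ 2) := by
    rw [Real.log_pow]; unfold ln; push_cast; ring
  rw [hl, abs_le]
  have ce : 0 ≤ c * e ^ 2 := by positivity
  constructor
  · have : 1 - c * (1 - e ^ 2) ≤ hs g ^ 2 * (1 - c * (1 - d ^ 2)) := by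
      rw [hdN]; nlinarith [mul_le_mul_of_nonneg_left hNl ce]
    have := Real.log_le_log b2 this
    rw [Real.log_mul (by positivity) b1.ne'] at this
    linarith
  · have : 1 - c * (1 - d ^ 2) ≤ hs g ^ 2 * (1 - c * (1 - e ^ 2)) := by
      rw [hdN]; nlinarith [mul_le_mul_of_nonneg_left hNu ce]
    have := Real.log_le_log b1 this
    rw [Real.log_mul (by positivity) b2.ne'] at this
    linarith

lemma lq_one (g : SL2) (p : Sph × Sph) (hp : dt p.1 p.2 ≠ 0) :
    lq 1 g p = 2 * (sg g p.1 + sg g p.2) := by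
  unfold lq
  have hr : dt (sact g p.1) (sact g p.2) * (nv g p.1 * nv g p.2) = dt p.1 p.2 := dt_sact g p.1 p.2
  have a1 : 1 - 1 * dp p.1 p.2 ^ 2 = dt p.1 p.2 ^ 2 := by linarith [dt_dp p.1 p.2]
  have a2 : 1 - 1 * dp (sact g p.1) (sact g p.2) ^ 2 = dt (sact g p.1) (sact g p.2) ^ 2 := by
    linarith [dt_dp (sact g p.1) (sact g p.2)]
  have hne : dt (sact g p.1) (sact g p.2) ≠ 0 := by
    intro h; rw [h, zero_mul] at hr; exact hp hr.symm
  rw [a1, a2, ← hr, Real.log_pow, Real.log_pow, Real.log_mul hne (mul_ne_zero (nv_ne _ _) (nv_ne _ _)),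
    Real.log_mul (nv_ne _ _) (nv_ne _ _)]
  unfold sg
  push_cast
  ring

lemma lq_tendsto (g : SL2) (p : Sph × Sph) (hp : dt p.1 p.2 ≠ 0) :
    Tendsto (fun n : ℕ => lq (1 - 1 / ((n : ℝ) + 2)) g p) atTop (nhds (2 * (sg g p.1 + sg g p.2))) := by
  rw [← lq_one g p hp]
  have hr : dt (sact g p.1) (sact g p.2) * (nv g p.1 * nv g p.2) = dt p.1 p.2 := dt_sact g p.1 p.2
  have hne : dt (sact g p.1) (sact g p.2) ≠ 0 := by
    intro h; rw [h, zero_mul] at hr; exact hp hr.symm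
  have a1 : 1 - 1 * dp p.1 p.2 ^ 2 = dt p.1 p.2 ^ 2 := by linarith [dt_dp p.1 p.2]
  have a2 : 1 - 1 * dp (sact g p.1) (sact g p.2) ^ 2 = dt (sact g p.1) (sact g p.2) ^ 2 := by
    linarith [dt_dp (sact g p.1) (sact g p.2)]
  have hc : Tendsto (fun n : ℕ => 1 - 1 / ((n : ℝ) + 2)) atTop (nhds 1) := by
    have h1 : Tendsto (fun n : ℕ => 1 / ((n : ℝ) + 2)) atTop (nhds 0) := by
      have := (tendsto_one_div_add_atTop_nhds_zero_nat (𝕜 := ℝ)).comp (tendsto_add_atTop_nat 1)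
      refine this.congr fun n => ?_
      simp; ring
    simpa using h1.const_sub 1
  have hcont : ContinuousAt (fun c : ℝ => lq c g p) 1 := by
    unfold lq
    refine ContinuousAt.sub (ContinuousAt.log (by fun_prop) ?_) (ContinuousAt.log (by fun_prop) ?_)
    · rw [a1]; exact pow_ne_zero 2 hp
    · rw [a2]; exact pow_ne_zero 2 hne
  exact hcont.tendsto.comp hc

section energy
variable {η : Measure SL2} [IsProbabilityMeasure η] {ν : Measure Sph} [IsProbabilityMeasure ν]

lemma int_dpd (n : ℕ) : Integrable (fun q : SL2 × (Sph × Sph) =>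
    dp (sact q.1 q.2.1) (sact q.1 q.2.2) ^ n - dp q.2.1 q.2.2 ^ n) (η.prod (ν.prod ν)) := by
  refine Integrable.of_bound (C := 2) (by fun_prop : Continuous _).aestronglyMeasurable
    (ae_of_all _ fun q => ?_)
  have a : ∀ v w : Sph, |dp v w ^ n| ≤ 1 := fun v w => by
    rw [abs_pow]; exact pow_le_one₀ (abs_nonneg _) (abs_dp_le v w)
  have a1 := abs_le.1 (a (sact q.1 q.2.1) (sact q.1 q.2.2))
  have a2 := abs_le.1 (a q.2.1 q.2.2)
  rw [Real.norm_eq_abs, abs_le]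
  constructor <;> linarith

lemma int_dpd_eq (n : ℕ) : ∫ q : SL2 × (Sph × Sph),
    (dp (sact q.1 q.2.1) (sact q.1 q.2.2) ^ n - dp q.2.1 q.2.2 ^ n) ∂(η.prod (ν.prod ν))
    = ∫ g, (∫ p, dp (sact g p.1) (sact g p.2) ^ n ∂(ν.prod ν) - ∫ p, dp p.1 p.2 ^ n ∂(ν.prod ν)) ∂η := by
  rw [integral_prod _ (int_dpd n)]
  congr 1; ext g
  rw [integral_sub]
  · exact (by fun_prop : Continuous fun p : Sph × Sph => dp (sact g p.1) (sact g p.2) ^ n).integrable_of_hasCompactSupport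
      (HasCompactSupport.of_compactSpace _)
  · exact (by fun_prop : Continuous fun p : Sph × Sph => dp p.1 p.2 ^ n).integrable_of_hasCompactSupport
      (HasCompactSupport.of_compactSpace _)

lemma lq_ge (h : Stat η ν) {c : ℝ} (h0 : 0 < c) (h1 : c < 1) :
    c * ∫ g, (∫ p, dp (sact g p.1) (sact g p.2) ^ 2 ∂(ν.prod ν) - ∫ p, dp p.1 p.2 ^ 2 ∂(ν.prod ν)) ∂η
      ≤ ∫ q : SL2 × (Sph × Sph), lq c q.1 q.2 ∂(η.prod (ν.prod ν)) := by
  let F : ℕ → SL2 × (Sph × Sph) → ℝ := fun k q => c ^ (k + 1) / (k + 1) *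
    (dp (sact q.1 q.2.1) (sact q.1 q.2.2) ^ (2 * (k + 1)) - dp q.2.1 q.2.2 ^ (2 * (k + 1)))
  have hF : ∀ k, Integrable (F k) (η.prod (ν.prod ν)) := fun k => (int_dpd _).const_mul _
  have hb : ∀ k q, ‖F k q‖ ≤ 2 * c ^ (k + 1) := by
    intro k q
    have a : ∀ v w : Sph, |dp v w ^ (2 * (k + 1))| ≤ 1 := fun v w => by
      rw [abs_pow]; exact pow_le_one₀ (abs_nonneg _) (abs_dp_le v w)
    have a1 := abs_le.1 (a (sact q.1 q.2.1) (sact q.1 q.2.2))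
    have a2 := abs_le.1 (a q.2.1 q.2.2)
    simp only [F]
    rw [norm_mul, Real.norm_of_nonneg (by positivity), mul_comm (2:ℝ) (c ^ (k + 1))]
    refine mul_le_mul ?_ ?_ (norm_nonneg _) (by positivity)
    · exact div_le_self (by positivity) (by linarith [(Nat.cast_nonneg k : (0:ℝ) ≤ k)])
    · rw [Real.norm_eq_abs, abs_le]; constructor <;> linarith
  have hS : Summable fun k => ∫ q, ‖F k q‖ ∂(η.prod (ν.prod ν)) := by
    refine Summable.of_nonneg_of_le (fun k => integral_nonneg fun q => norm_nonneg _) (fun k => ?_)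
      (((summable_geometric_of_lt_one h0.le h1).mul_left c).mul_left 2)
    calc ∫ q, ‖F k q‖ ∂(η.prod (ν.prod ν)) ≤ ∫ q, 2 * c ^ (k + 1) ∂(η.prod (ν.prod ν)) :=
          integral_mono (hF k).norm (integrable_const _) (hb k)
      _ = 2 * (c * c ^ k) := by simp [pow_succ]; ring
  have hs := hasSum_integral_of_summable_integral_norm hF hS
  have hsum : ∀ q : SL2 × (Sph × Sph), ∑' k, F k q = lq c q.1 q.2 := by
    intro q
    have key : ∀ v w : Sph, HasSum (fun k : ℕ => c ^ (k + 1) / (k + 1) * dp v w ^ (2 * (k + 1)))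
        (-Real.log (1 - c * dp v w ^ 2)) := by
      intro v w
      have hd : dp v w ^ 2 ≤ 1 := by nlinarith [dt_dp v w, sq_nonneg (dt v w)]
      have := Real.hasSum_pow_div_log_of_abs_lt_one (x := c * dp v w ^ 2) (by
        rw [abs_of_nonneg (by positivity)]; nlinarith [sq_nonneg (dp v w)])
      convert this using 1
      ext k
      rw [mul_pow, ← pow_mul]; ring
    have := (key (sact q.1 q.2.1) (sact q.1 q.2.2)).sub (key q.2.1 q.2.2)
    rw [show lq c q.1 q.2 = (-Real.log (1 - c * dp (sact q.1 q.2.1) (sact q.1 q.2.2) ^ 2)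
      - -Real.log (1 - c * dp q.2.1 q.2.2 ^ 2)) by unfold lq; ring, ← this.tsum_eq]
    refine tsum_congr fun k => ?_
    simp only [F]; ring
  simp_rw [hsum] at hs
  have h2 := le_hasSum hs 0 (fun k _ => by
    simp only [F]
    rw [integral_const_mul, int_dpd_eq]
    exact mul_nonneg (by positivity) (D_nonneg h _))
  simp only [F] at h2
  rw [integral_const_mul, int_dpd_eq] at h2
  simpa using h2

lemma D2_le (h : Stat η ν) (hln : Integrable ln η) (hna : ∀ w, ν {w} = 0) :
    ∫ g, (∫ p, dp (sact g p.1) (sact g p.2) ^ 2 ∂(ν.prod ν) - ∫ p, dp p.1 p.2 ^ 2 ∂(ν.prod ν)) ∂η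
      ≤ 4 * ∫ g, ∫ v, sg g v ∂ν ∂η := by
  have hz : ∀ᵐ p ∂(ν.prod ν), dt p.1 p.2 ≠ 0 := by
    rw [ae_iff]
    have hm : MeasurableSet {p : Sph × Sph | ¬ dt p.1 p.2 ≠ 0} := by
      simp only [not_not]
      exact (isClosed_eq (by fun_prop : Continuous fun p : Sph × Sph => dt p.1 p.2) continuous_const).measurableSet
    rw [Measure.prod_apply hm, lintegral_eq_zero_iff (measurable_measure_prodMk_left hm)]
    refine ae_of_all _ fun v => ?_
    refine measure_mono_null (t := {v} ∪ {sneg v}) (fun w hw => ?_) (measure_union_null (hna _) (hna _))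
    have : dt w v = 0 := by
      rw [dt_comm']; simp at hw; rw [hw]; simp
    rcases dt_eq_zero _ _ this with rfl | rfl
    · left; rfl
    · right; rfl
  have hz2 : ∀ᵐ q ∂(η.prod (ν.prod ν)), dt q.2.1 q.2.2 ≠ 0 :=
    Measure.quasiMeasurePreserving_snd.ae hz
  have hc : ∀ n : ℕ, 0 < 1 - 1 / ((n:ℝ) + 2) ∧ 1 - 1 / ((n:ℝ) + 2) < 1 := by
    intro n
    have : (0:ℝ) < 1 / ((n:ℝ) + 2) := by positivity
    have : 1 / ((n:ℝ) + 2) < 1 := by rw [div_lt_one (by positivity)]; linarith [(Nat.cast_nonneg n : (0:ℝ) ≤ n)]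
    constructor <;> linarith
  have hlim := tendsto_integral_of_dominated_convergence (μ := η.prod (ν.prod ν))
    (F := fun (n : ℕ) q => lq (1 - 1 / ((n : ℝ) + 2)) q.1 q.2)
    (f := fun q => 2 * (sg q.1 q.2.1 + sg q.1 q.2.2)) (fun q => 4 * ln q.1)
    (fun n => by
      unfold lq
      have m1 : Measurable fun q : SL2 × (Sph × Sph) => dp q.2.1 q.2.2 :=
        (by fun_prop : Continuous fun q : SL2 × (Sph × Sph) => dp q.2.1 q.2.2).measurable
      have m2 : Measurable fun q : SL2 × (Sph × Sph) => dp (sact q.1 q.2.1) (sact q.1 q.2.2) :=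
        (by fun_prop : Continuous fun q : SL2 × (Sph × Sph) => dp (sact q.1 q.2.1) (sact q.1 q.2.2)).measurable
      exact ((((m1.pow_const 2).const_mul _).const_sub _).log.sub
        (((m2.pow_const 2).const_mul _).const_sub _).log).aestronglyMeasurable)
    ((hln.comp_fst _).const_mul 4)
    (fun n => ae_of_all _ fun q => lq_bound (hc n).1 (hc n).2 _ _)
    (by filter_upwards [hz2] with q hq using lq_tendsto _ _ hq)
  have hS : ∫ q : SL2 × (Sph × Sph), 2 * (sg q.1 q.2.1 + sg q.1 q.2.2) ∂(η.prod (ν.prod ν))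
      = 4 * ∫ g, ∫ v, sg g v ∂ν ∂η := by
    have i1 : Integrable (fun q : SL2 × (Sph × Sph) => 2 * (sg q.1 q.2.1 + sg q.1 q.2.2)) (η.prod (ν.prod ν)) := by
      refine ((hln.comp_fst _).const_mul 4).mono' (by fun_prop : Continuous _).aestronglyMeasurable
        (ae_of_all _ fun q => ?_)
      have a1 := abs_le.1 (abs_sg_le q.1 q.2.1)
      have a2 := abs_le.1 (abs_sg_le q.1 q.2.2)
      rw [Real.norm_eq_abs, abs_le]
      constructor <;> linarith
    rw [integral_prod _ i1, ← integral_const_mul]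
    congr 1; ext g
    have hI : Integrable (fun v => sg g v) ν := cont_int (by fun_prop)
    rw [integral_const_mul, integral_add (hI.comp_fst ν) (hI.comp_snd ν), integral_fun_fst (f := fun v => sg g v), integral_fun_snd (f := fun v => sg g v)]
    simp
    ring
  rw [hS] at hlim
  have hc1 : Tendsto (fun n : ℕ => 1 - 1 / ((n : ℝ) + 2)) atTop (nhds 1) := by
    have h1 : Tendsto (fun n : ℕ => 1 / ((n : ℝ) + 2)) atTop (nhds 0) := by
      have := (tendsto_one_div_add_atTop_nhds_zero_nat (𝕜 := ℝ)).comp (tendsto_add_atTop_nat 1)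
      refine this.congr fun n => ?_
      simp; ring
    simpa using h1.const_sub 1
  have h3 := le_of_tendsto_of_tendsto' (hc1.mul_const _) hlim (fun n => lq_ge h (hc n).1 (hc n).2)
  rwa [one_mul] at h3

end energy



lemma ae_dt_ne {ν : Measure Sph} [IsProbabilityMeasure ν] (hna : ∀ w, ν {w} = 0) :
    (ν.prod ν) {p : Sph × Sph | dt p.1 p.2 = 0} = 0 := by
  have hm : MeasurableSet {p : Sph × Sph | dt p.1 p.2 = 0} :=
    (isClosed_eq (by fun_prop : Continuous fun p : Sph × Sph => dt p.1 p.2) continuous_const).measurableSet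
  rw [Measure.prod_apply hm, lintegral_eq_zero_iff (measurable_measure_prodMk_left hm)]
  refine ae_of_all _ fun v => ?_
  refine measure_mono_null (t := {v} ∪ {sneg v}) (fun w hw => ?_) (measure_union_null (hna _) (hna _))
  have : dt w v = 0 := by
    rw [dt_comm']; simp at hw; rw [hw]; simp
  rcases dt_eq_zero _ _ this with rfl | rfl
  · left; rfl
  · right; rfl

lemma hs_dt_le (g : SL2) (v w : Sph) : hs g * dt v w ^ 2 ≤ 2 * nv g v ^ 2 + 2 * nv g w ^ 2 := by
  have q1 := s_eq v
  have q2 := s_eq w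
  have aux : ∀ a b x y x' y' : ℝ, x ^ 2 + y ^ 2 = 1 → x' ^ 2 + y' ^ 2 = 1 →
      (a ^ 2 + b ^ 2) * (x * y' - y * x') ^ 2 ≤ 2 * (a * x + b * y) ^ 2 + 2 * (a * x' + b * y') ^ 2 := by
    intro a b x y x' y' h h'
    set s := a * x + b * y
    set r := a * x' + b * y'
    have e1 : a * (x * y' - y * x') = s * y' - r * y := by simp only [s, r]; ring
    have e2 : b * (x * y' - y * x') = r * x - s * x' := by simp only [s, r]; ring
    calc (a ^ 2 + b ^ 2) * (x * y' - y * x') ^ 2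
        = (s * y' - r * y) ^ 2 + (r * x - s * x') ^ 2 := by rw [← e1, ← e2]; ring
      _ ≤ 2 * (s * y') ^ 2 + 2 * (r * y) ^ 2 + (2 * (r * x) ^ 2 + 2 * (s * x') ^ 2) := by
          nlinarith [sq_nonneg (s * y' + r * y), sq_nonneg (r * x + s * x')]
      _ = 2 * s ^ 2 * (x' ^ 2 + y' ^ 2) + 2 * r ^ 2 * (x ^ 2 + y ^ 2) := by ring
      _ = _ := by rw [h, h']; ring
  have k1 := aux (eA g) (eB g) _ _ _ _ q1 q2
  have k2 := aux (eC g) (eD g) _ _ _ _ q1 q2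
  rw [nv_sq, nv_sq]
  unfold hs dt lx ly
  linarith

lemma exists_R (ν : Measure Sph) [IsProbabilityMeasure ν] (hna : ∀ w, ν {w} = 0) :
    ∃ R : ℝ, ∀ g, R < hs g → ∫ p, dt (sact g p.1) (sact g p.2) ^ 2 ∂(ν.prod ν)
      < ∫ p, dt p.1 p.2 ^ 2 ∂(ν.prod ν) := by
  set κ := ∫ p, dt p.1 p.2 ^ 2 ∂(ν.prod ν) with hκ
  have hi : Integrable (fun p : Sph × Sph => dt p.1 p.2 ^ 2) (ν.prod ν) :=
    (by fun_prop : Continuous fun p : Sph × Sph => dt p.1 p.2 ^ 2).integrable_of_hasCompactSupport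
      (HasCompactSupport.of_compactSpace _)
  have κpos : 0 < κ := by
    rw [hκ, integral_pos_iff_support_of_nonneg (fun p => sq_nonneg _) hi]
    by_contra hc
    have hc : (ν.prod ν) (Function.support fun p : Sph × Sph => dt p.1 p.2 ^ 2) = 0 := by simpa using hc
    have h1 := measure_union_null hc (ae_dt_ne hna)
    have h2 : (Function.support fun p : Sph × Sph => dt p.1 p.2 ^ 2) ∪ {p : Sph × Sph | dt p.1 p.2 = 0} = Set.univ := by
      ext p
      simp only [Set.mem_union, Function.mem_support, Set.mem_ofPred_eq, Set.mem_univ, iff_true]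
      by_cases h : dt p.1 p.2 = 0
      · right; exact h
      · left; exact pow_ne_zero 2 h
    rw [h2] at h1
    simp at h1
  have κle : κ ≤ 1 := by
    calc κ ≤ ∫ p : Sph × Sph, (1:ℝ) ∂(ν.prod ν) := integral_mono hi (integrable_const _)
          (fun p => (sq_le_one_iff_abs_le_one _).2 (abs_dt_le _ _))
      _ = 1 := by simp
  -- small balls
  have hlim : Tendsto (fun n : ℕ => (ν.prod ν) {p : Sph × Sph | dt p.1 p.2 ^ 2 ≤ 1 / ((n:ℝ) + 1)}) atTop (nhds 0) := by
    have hinter : (⋂ n : ℕ, {p : Sph × Sph | dt p.1 p.2 ^ 2 ≤ 1 / ((n:ℝ) + 1)}) = {p : Sph × Sph | dt p.1 p.2 = 0} := by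
      ext p
      simp only [Set.mem_iInter, Set.mem_ofPred_eq]
      constructor
      · intro h
        have := ge_of_tendsto' (tendsto_one_div_add_atTop_nhds_zero_nat (𝕜 := ℝ)) h
        exact pow_eq_zero_iff two_ne_zero |>.1 (le_antisymm this (sq_nonneg _))
      · intro h n; rw [h, zero_pow two_ne_zero]; positivity
    rw [← ae_dt_ne hna, ← hinter]
    apply tendsto_measure_iInter_atTop
    · intro n
      exact (isClosed_le (by fun_prop : Continuous fun p : Sph × Sph => dt p.1 p.2 ^ 2) continuous_const).measurableSet.nullMeasurableSet
    · intro n m hnm p hp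
      have hp : dt p.1 p.2 ^ 2 ≤ 1 / ((m:ℝ) + 1) := hp
      show dt p.1 p.2 ^ 2 ≤ 1 / ((n:ℝ) + 1)
      have hnm' : (n:ℝ) ≤ m := by exact_mod_cast hnm
      exact le_trans hp (one_div_le_one_div_of_le (by positivity) (by linarith))
    · exact ⟨0, measure_ne_top _ _⟩
  have hev := hlim.eventually_lt_const (show (0:ENNReal) < ENNReal.ofReal ((κ / 8) ^ 2) by
    rw [ENNReal.ofReal_pos]; positivity)
  obtain ⟨n, hn⟩ := hev.exists
  set δ : ℝ := 1 / ((n:ℝ) + 1) with hδ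
  have δpos : 0 < δ := by positivity
  set t : ℝ := 4 / κ with ht
  have tpos : 0 < t := by positivity
  have t1 : 1 ≤ t := by rw [ht, le_div_iff₀ κpos]; linarith
  refine ⟨4 * t / δ, fun g hg => ?_⟩
  rw [div_lt_iff₀ δpos] at hg
  let B : Set Sph := {v | nv g v ^ 2 ≤ t}
  have hBm : MeasurableSet B :=
    (isClosed_le (by fun_prop : Continuous fun v => nv g v ^ 2) continuous_const).measurableSet
  have hBB : ν B * ν B < ENNReal.ofReal ((κ / 8) ^ 2) := by
    rw [← Measure.prod_prod]
    refine lt_of_le_of_lt (measure_mono ?_) hn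
    rintro ⟨v, w⟩ ⟨hv, hw⟩
    have hv : nv g v ^ 2 ≤ t := hv
    have hw : nv g w ^ 2 ≤ t := hw
    show dt v w ^ 2 ≤ δ
    have := hs_dt_le g v w
    by_contra hc
    push Not at hc
    have : hs g * δ < hs g * dt v w ^ 2 := mul_lt_mul_of_pos_left hc (hs_pos g)
    linarith
  have hB : ν.real B < κ / 8 := by
    by_contra hc
    push Not at hc
    have h1 : ENNReal.ofReal (κ / 8) ≤ ν B := by
      rw [ENNReal.ofReal_le_iff_le_toReal (measure_ne_top _ _)]; exact hc
    have h2 := mul_le_mul' h1 h1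
    rw [← ENNReal.ofReal_mul (by positivity), ← sq] at h2
    exact absurd hBB (not_lt.2 h2)
  have hi2 : Integrable (fun p : Sph × Sph => dt (sact g p.1) (sact g p.2) ^ 2) (ν.prod ν) :=
    (by fun_prop : Continuous fun p : Sph × Sph => dt (sact g p.1) (sact g p.2) ^ 2).integrable_of_hasCompactSupport
      (HasCompactSupport.of_compactSpace _)
  have hBi : Integrable (B.indicator (fun _ => (1:ℝ))) ν := (integrable_const _).indicator hBm
  have i1 := hBi.comp_fst ν
  have i2 := hBi.comp_snd ν
  have i12 : Integrable (fun p : Sph × Sph => B.indicator (fun _ => (1:ℝ)) p.1 + B.indicator (fun _ => (1:ℝ)) p.2) (ν.prod ν) := i1.add i2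
  have i3 : Integrable (fun p : Sph × Sph => κ / 4 + (B.indicator (fun _ => (1:ℝ)) p.1 + B.indicator (fun _ => (1:ℝ)) p.2)) (ν.prod ν) :=
    (integrable_const _).add (i1.add i2)
  have hle : ∀ p : Sph × Sph, dt (sact g p.1) (sact g p.2) ^ 2 ≤
      κ / 4 + (B.indicator (fun _ => (1:ℝ)) p.1 + B.indicator (fun _ => (1:ℝ)) p.2) := by
    rintro ⟨v, w⟩
    have d1 : dt (sact g v) (sact g w) ^ 2 ≤ 1 := (sq_le_one_iff_abs_le_one _).2 (abs_dt_le _ _)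
    have n1 : 0 ≤ B.indicator (fun _ => (1:ℝ)) v := Set.indicator_nonneg (fun _ _ => zero_le_one) _
    have n2 : 0 ≤ B.indicator (fun _ => (1:ℝ)) w := Set.indicator_nonneg (fun _ _ => zero_le_one) _
    by_cases hv : v ∈ B
    · have : B.indicator (fun _ => (1:ℝ)) v = 1 := Set.indicator_of_mem hv _
      simp only; linarith
    · by_cases hw : w ∈ B
      · have : B.indicator (fun _ => (1:ℝ)) w = 1 := Set.indicator_of_mem hw _
        simp only; linarith
      · have hv : t < nv g v ^ 2 := not_le.1 hv
        have hw : t < nv g w ^ 2 := not_le.1 hw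
        have hr := dt_sact g v w
        have e : dt (sact g v) (sact g w) ^ 2 * (nv g v ^ 2 * nv g w ^ 2) = dt v w ^ 2 := by rw [← hr]; ring
        have d2 : dt v w ^ 2 ≤ 1 := (sq_le_one_iff_abs_le_one _).2 (abs_dt_le _ _)
        have h5 : t * 1 ≤ nv g v ^ 2 * nv g w ^ 2 := mul_le_mul hv.le (t1.trans hw.le) zero_le_one (by positivity)
        have h6 : dt (sact g v) (sact g w) ^ 2 * t ≤ 1 := by
          nlinarith [sq_nonneg (dt (sact g v) (sact g w))]
        have h7 : dt (sact g v) (sact g w) ^ 2 ≤ κ / 4 := by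
          rw [← le_div_iff₀ tpos] at h6
          refine h6.trans (le_of_eq ?_)
          rw [ht]; field_simp
        simp only; linarith
  calc ∫ p, dt (sact g p.1) (sact g p.2) ^ 2 ∂(ν.prod ν)
      ≤ ∫ p : Sph × Sph, (κ / 4 + (B.indicator (fun _ => (1:ℝ)) p.1 + B.indicator (fun _ => (1:ℝ)) p.2)) ∂(ν.prod ν) :=
        integral_mono hi2 i3 hle
    _ = κ / 4 + (ν.real B + ν.real B) := by
        rw [integral_add (integrable_const _) i12, integral_add i1 i2,
          integral_fun_fst (f := B.indicator (fun _ => (1:ℝ))), integral_fun_snd (f := B.indicator (fun _ => (1:ℝ))),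
          integral_indicator_const _ hBm]
        simp
    _ < κ := by linarith

lemma drift (μ : Measure SL2) [IsProbabilityMeasure μ] (hln : Integrable ln μ)
    (hns : ¬ Group.IsSolvable (Subgroup.closure (measSupp μ))) :
    ∃ φ : C(Sph, ℝ), ∃ c > 0, ∀ v, c ≤ ∫ g, sg g v ∂μ + ∫ g, φ (sact g v) ∂μ - φ v := by
  rcases dichotomy μ hln with h | ⟨ν, hν, hst, hle⟩
  · exact h
  exfalso
  have S : Stat μ ν := stat_of_int μ ν hst
  have hna : ∀ w, ν {w} = 0 := stat_nonatomic S hns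
  have hsw : ∫ g, ∫ v, sg g v ∂ν ∂μ ≤ 0 := by
    have h1 := integral_prod _ (int_sg_prod ν hln)
    have h2 := integral_prod_symm _ (int_sg_prod ν hln)
    rw [← h1, h2]; exact hle
  obtain ⟨R, hR⟩ := exists_R ν hna
  refine hns (solv_of_cvp_bdd μ R fun n => ?_)
  have Sn := stat_cvp S n
  have h1 := D2_le Sn (int_ln_cvp μ hln n) hna
  rw [sg_cvp S hln n] at h1
  have h2 : (n:ℝ) * ∫ g, ∫ v, sg g v ∂ν ∂μ ≤ 0 := mul_nonpos_of_nonneg_of_nonpos (by positivity) hsw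
  have h3 := D_zero Sn 2 (h1.trans (by linarith))
  rw [measure_eq_zero_iff_ae_notMem]
  filter_upwards [h3] with g hg hg2
  have h4 := hR g hg2
  have e : ∀ k : Sph → Sph, Continuous k → ∫ p, dt (k p.1) (k p.2) ^ 2 ∂(ν.prod ν) = 1 - ∫ p, dp (k p.1) (k p.2) ^ 2 ∂(ν.prod ν) := by
    intro k hk
    have e1 : ∀ p : Sph × Sph, dt (k p.1) (k p.2) ^ 2 = 1 - dp (k p.1) (k p.2) ^ 2 := fun p => by
      linarith [dt_dp (k p.1) (k p.2)]
    simp_rw [e1]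
    rw [integral_sub (integrable_const _) ((by fun_prop : Continuous fun p : Sph × Sph => dp (k p.1) (k p.2) ^ 2).integrable_of_hasCompactSupport
      (HasCompactSupport.of_compactSpace _))]
    simp
  rw [e (fun v => sact g v) (by fun_prop), e (fun v => v) continuous_id, hg] at h4
  exact lt_irrefl _ h4



lemma exp_le_quad (y : ℝ) : Real.exp y ≤ 1 + y + y ^ 2 * Real.exp |y| := by
  have h1 : 1 ≤ Real.exp |y| := Real.one_le_exp (abs_nonneg y)
  by_cases h : |y| ≤ 1
  · have := (abs_le.1 (Real.abs_exp_sub_one_sub_id_le h)).2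
    nlinarith [sq_nonneg y]
  · push Not at h
    rcases lt_abs.1 h with h2 | h2
    · rw [abs_of_pos (by linarith)]
      have := Real.exp_pos y
      have : 1 ≤ y ^ 2 := by nlinarith
      nlinarith
    · have : Real.exp y ≤ 1 := Real.exp_le_one_iff.2 (by linarith)
      nlinarith [sq_nonneg y]

lemma int_exp_ln {μ : Measure SL2} {ε : ℝ}
    (h : ∫⁻ g, ENNReal.ofReal (Real.exp (ε * ln g)) ∂μ < ⊤) :
    Integrable (fun g => Real.exp (ε * ln g)) μ := by
  refine ⟨(by fun_prop : Continuous fun g => Real.exp (ε * ln g)).aestronglyMeasurable, ?_⟩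
  rw [hasFiniteIntegral_iff_ofReal (ae_of_all _ fun g => (Real.exp_pos _).le)]
  exact h

lemma int_ln {μ : Measure SL2} {ε : ℝ} (hε : 0 < ε)
    (h : Integrable (fun g => Real.exp (ε * ln g)) μ) : Integrable ln μ := by
  refine (h.const_mul (1 / ε)).mono' measurable_ln.aestronglyMeasurable (ae_of_all _ fun g => ?_)
  rw [Real.norm_of_nonneg (ln_nonneg g)]
  have := Real.add_one_le_exp (ε * ln g)
  rw [one_div, inv_mul_eq_div, le_div_iff₀ hε]
  linarith

/-- uniform contraction from the drift condition -/
lemma contr (μ : Measure SL2) [IsProbabilityMeasure μ] {ε : ℝ} (hε : 0 < ε)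
    (hexp : Integrable (fun g => Real.exp (ε * ln g)) μ)
    (φ : C(Sph, ℝ)) (c : ℝ) (hc : 0 < c)
    (hφ : ∀ v, c ≤ ∫ g, sg g v ∂μ + ∫ g, φ (sact g v) ∂μ - φ v) :
    ∃ δ > 0, ∃ ρ : ℝ, 0 < ρ ∧ ρ < 1 ∧ ∀ v,
      ∫⁻ g, ENNReal.ofReal (Real.exp (-δ * (sg g v + φ (sact g v)))) ∂μ
        ≤ ENNReal.ofReal (ρ * Real.exp (-δ * φ v)) := by
  set M := ‖φ‖ with hM
  have hMb : ∀ v, |φ v| ≤ M := fun v => φ.norm_coe_le_norm v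
  have hM0 : 0 ≤ M := norm_nonneg _
  set E := ∫ g, Real.exp (ε * ln g) ∂μ with hE
  set K := 8 / ε ^ 2 * Real.exp (2 * ε * M) with hK
  have K0 : 0 < K := by positivity
  have E0 : 0 ≤ E := integral_nonneg fun g => (Real.exp_pos _).le
  have hlni := int_ln hε hexp
  set δ := min (ε / 2) (min (c / (2 * (K * E + 1))) (1 / c)) with hδ
  have KE : 0 < 2 * (K * E + 1) := by positivity
  have δ0 : 0 < δ := lt_min (by positivity) (lt_min (by positivity) (by positivity))
  have δ1 : δ ≤ ε / 2 := min_le_left _ _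
  have δ2 : δ * (2 * (K * E + 1)) ≤ c := by
    rw [← le_div_iff₀ KE]; exact (min_le_right _ _).trans (min_le_left _ _)
  have δ3 : δ * c ≤ 1 := by
    rw [← le_div_iff₀ hc]; exact (min_le_right _ _).trans (min_le_right _ _)
  refine ⟨δ, δ0, 1 - δ * c / 2, by linarith, by nlinarith, fun v => ?_⟩
  let Y : SL2 → ℝ := fun g => sg g v + φ (sact g v) - φ v
  have Ycont : Continuous Y := by simp only [Y]; fun_prop
  have Yb : ∀ g, |Y g| ≤ ln g + 2 * M := by
    intro g
    have a1 := abs_le.1 (abs_sg_le g v)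
    have a2 := abs_le.1 (hMb v)
    have a3 := abs_le.1 (hMb (sact g v))
    simp only [Y]; rw [abs_le]; constructor <;> linarith
  have i1 : Integrable (fun g => sg g v) μ :=
    hlni.mono' (by fun_prop : Continuous fun g => sg g v).aestronglyMeasurable
      (ae_of_all _ fun g => abs_sg_le g v)
  have i2 : Integrable (fun g => φ (sact g v)) μ :=
    Integrable.of_bound (C := M) (by fun_prop : Continuous fun g => φ (sact g v)).aestronglyMeasurable
      (ae_of_all _ fun g => hMb _)
  have i12 : Integrable (fun g => sg g v + φ (sact g v)) μ := i1.add i2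
  have iY : Integrable Y μ := i12.sub (integrable_const _)
  have IY : c ≤ ∫ g, Y g ∂μ := by
    simp only [Y]
    rw [integral_sub i12 (integrable_const _), integral_add i1 i2]
    simpa using hφ v
  have pt : ∀ g, Real.exp (-δ * Y g) ≤ 1 - δ * Y g + δ ^ 2 * (K * Real.exp (ε * ln g)) := by
    intro g
    have h1 := exp_le_quad (-δ * Y g)
    have h2 : |(-δ * Y g)| = δ * |Y g| := by rw [abs_mul, abs_neg, abs_of_pos δ0]
    rw [h2] at h1
    have h3 : Y g ^ 2 * Real.exp (δ * |Y g|) ≤ K * Real.exp (ε * ln g) := by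
      have a1 := Real.quadratic_le_exp_of_nonneg (x := ε * |Y g| / 2) (by positivity)
      have a2 : Y g ^ 2 ≤ 8 / ε ^ 2 * Real.exp (ε * |Y g| / 2) := by
        rw [div_mul_eq_mul_div, le_div_iff₀ (by positivity), ← sq_abs (Y g)]
        have : 0 ≤ ε * |Y g| / 2 := by positivity
        nlinarith
      calc Y g ^ 2 * Real.exp (δ * |Y g|)
          ≤ (8 / ε ^ 2 * Real.exp (ε * |Y g| / 2)) * Real.exp (ε * |Y g| / 2) := by
            refine mul_le_mul a2 (Real.exp_le_exp.2 ?_) (Real.exp_pos _).le (by positivity)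
            nlinarith [abs_nonneg (Y g)]
        _ = 8 / ε ^ 2 * Real.exp (ε * |Y g|) := by
            rw [mul_assoc, ← Real.exp_add]; congr 2; ring
        _ ≤ 8 / ε ^ 2 * Real.exp (2 * ε * M + ε * ln g) := by
            refine mul_le_mul_of_nonneg_left (Real.exp_le_exp.2 ?_) (by positivity)
            nlinarith [Yb g]
        _ = _ := by rw [Real.exp_add, hK]; ring
    nlinarith [sq_nonneg δ, mul_le_mul_of_nonneg_left h3 (sq_nonneg δ)]
  have iR : Integrable (fun g => 1 - δ * Y g + δ ^ 2 * (K * Real.exp (ε * ln g))) μ :=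
    ((integrable_const _).sub (iY.const_mul δ)).add ((hexp.const_mul K).const_mul _)
  have iE : Integrable (fun g => Real.exp (-δ * Y g)) μ :=
    iR.mono' (by fun_prop : Continuous fun g => Real.exp (-δ * Y g)).aestronglyMeasurable
      (ae_of_all _ fun g => by rw [Real.norm_of_nonneg (Real.exp_pos _).le]; exact pt g)
  have main : ∫ g, Real.exp (-δ * Y g) ∂μ ≤ 1 - δ * c / 2 := by
    refine (integral_mono iE iR pt).trans ?_
    have j1 : Integrable (fun g => 1 - δ * Y g) μ := (integrable_const _).sub (iY.const_mul δ)
    rw [integral_add j1 ((hexp.const_mul K).const_mul _),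
      integral_sub (integrable_const _) (iY.const_mul δ), integral_const_mul, integral_const_mul, integral_const_mul]
    simp only [integral_const, probReal_univ, smul_eq_mul, mul_one]
    rw [← hE]
    nlinarith [mul_le_mul_of_nonneg_left IY δ0.le, mul_le_mul_of_nonneg_left δ2 δ0.le, sq_nonneg δ]
  have e : ∀ g, ENNReal.ofReal (Real.exp (-δ * (sg g v + φ (sact g v))))
      = ENNReal.ofReal (Real.exp (-δ * φ v)) * ENNReal.ofReal (Real.exp (-δ * Y g)) := by
    intro g
    rw [← ENNReal.ofReal_mul (Real.exp_pos _).le, ← Real.exp_add]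
    congr 2; simp only [Y]; ring
  simp_rw [e]
  rw [lintegral_const_mul' _ _ ENNReal.ofReal_ne_top,
    ← ofReal_integral_eq_lintegral_ofReal iE (ae_of_all _ fun g => (Real.exp_pos _).le),
    ← ENNReal.ofReal_mul (Real.exp_pos _).le, mul_comm]
  exact ENNReal.ofReal_le_ofReal (mul_le_mul_of_nonneg_right main (Real.exp_pos _).le)

lemma ofReal_exp_add (a b : ℝ) : ENNReal.ofReal (Real.exp (a + b))
    = ENNReal.ofReal (Real.exp a) * ENNReal.ofReal (Real.exp b) := by
  rw [← ENNReal.ofReal_mul (Real.exp_pos _).le, ← Real.exp_add]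

lemma iter_right (μ : Measure SL2) [IsProbabilityMeasure μ] (φ : C(Sph, ℝ)) {δ ρ : ℝ} (hρ : 0 < ρ)
    (h : ∀ v, ∫⁻ g, ENNReal.ofReal (Real.exp (-δ * (sg g v + φ (sact g v)))) ∂μ
        ≤ ENNReal.ofReal (ρ * Real.exp (-δ * φ v))) (n : ℕ) (v : Sph) :
    ∫⁻ g, ENNReal.ofReal (Real.exp (-δ * (sg g v + φ (sact g v)))) ∂(cvp μ n)
        ≤ ENNReal.ofReal (ρ ^ n * Real.exp (-δ * φ v)) := by
  induction n generalizing v with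
  | zero =>
    rw [cvp_zero_dirac, lintegral_dirac' _ (by fun_prop)]
    rw [sg_one, sact_one]; simp
  | succ n ih =>
    rw [lintegral_cvp_succ μ n (by fun_prop)]
    have e : ∀ h g, ENNReal.ofReal (Real.exp (-δ * (sg (g * h) v + φ (sact (g * h) v))))
        = ENNReal.ofReal (Real.exp (-δ * sg h v)) *
          ENNReal.ofReal (Real.exp (-δ * (sg g (sact h v) + φ (sact g (sact h v))))) := by
      intro h g
      rw [← ofReal_exp_add, sg_mul, sact_mul]; congr 2; ring
    simp_rw [e]
    calc _ ≤ ∫⁻ h, ENNReal.ofReal (ρ ^ n) * ENNReal.ofReal (Real.exp (-δ * (sg h v + φ (sact h v)))) ∂μ := by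
          refine lintegral_mono fun h => ?_
          rw [lintegral_const_mul' _ _ ENNReal.ofReal_ne_top]
          refine (mul_le_mul_right (ih _) _).trans (le_of_eq ?_)
          rw [ENNReal.ofReal_mul (by positivity), mul_left_comm, ← ofReal_exp_add]
          congr 3; ring
      _ ≤ ENNReal.ofReal (ρ ^ n) * ENNReal.ofReal (ρ * Real.exp (-δ * φ v)) := by
          rw [lintegral_const_mul' _ _ ENNReal.ofReal_ne_top]
          exact mul_le_mul_right (h v) _
      _ = _ := by rw [← ENNReal.ofReal_mul (by positivity)]; congr 1; ring

lemma iter_left (μ : Measure SL2) [IsProbabilityMeasure μ] (φ : C(Sph, ℝ)) {δ ρ : ℝ} (hρ : 0 < ρ)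
    (h : ∀ v, ∫⁻ g, ENNReal.ofReal (Real.exp (-δ * (sg g⁻¹ v + φ (sact g⁻¹ v)))) ∂μ
        ≤ ENNReal.ofReal (ρ * Real.exp (-δ * φ v))) (n : ℕ) (v : Sph) :
    ∫⁻ g, ENNReal.ofReal (Real.exp (-δ * (sg g⁻¹ v + φ (sact g⁻¹ v)))) ∂(cvp μ n)
        ≤ ENNReal.ofReal (ρ ^ n * Real.exp (-δ * φ v)) := by
  induction n generalizing v with
  | zero =>
    rw [cvp_zero_dirac, lintegral_dirac' _ (by fun_prop), inv_one]
    rw [sg_one, sact_one]; simp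
  | succ n ih =>
    rw [lintegral_cvp_succ μ n (by fun_prop), lintegral_lintegral_swap (by fun_prop)]
    have e : ∀ h g : SL2, ENNReal.ofReal (Real.exp (-δ * (sg (g * h)⁻¹ v + φ (sact (g * h)⁻¹ v))))
        = ENNReal.ofReal (Real.exp (-δ * sg g⁻¹ v)) *
          ENNReal.ofReal (Real.exp (-δ * (sg h⁻¹ (sact g⁻¹ v) + φ (sact h⁻¹ (sact g⁻¹ v))))) := by
      intro h g
      rw [← ofReal_exp_add, mul_inv_rev, sg_mul, sact_mul]; congr 2; ring
    simp_rw [e]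
    calc _ ≤ ∫⁻ g, ENNReal.ofReal ρ * ENNReal.ofReal (Real.exp (-δ * (sg g⁻¹ v + φ (sact g⁻¹ v)))) ∂(cvp μ n) := by
          refine lintegral_mono fun g => ?_
          rw [lintegral_const_mul' _ _ ENNReal.ofReal_ne_top]
          refine (mul_le_mul_right (h _) _).trans (le_of_eq ?_)
          rw [ENNReal.ofReal_mul hρ.le, mul_left_comm, ← ofReal_exp_add]
          congr 3; ring
      _ ≤ ENNReal.ofReal ρ * ENNReal.ofReal (ρ ^ n * Real.exp (-δ * φ v)) := by
          rw [lintegral_const_mul' _ _ ENNReal.ofReal_ne_top]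
          exact mul_le_mul_right (ih v) _
      _ = _ := by rw [← ENNReal.ofReal_mul (by positivity)]; congr 1; ring

/-- from weighted exponential moments to tail bounds -/
lemma tail_of_int {P : Measure SL2} (φ : C(Sph, ℝ)) {δ q : ℝ} (hδ : 0 < δ) (hq : 0 ≤ q) (v : Sph)
    (S : SL2 → ℝ) (T : SL2 → Sph) (hS : Measurable S) (hT : Measurable T)
    (h : ∫⁻ g, ENNReal.ofReal (Real.exp (-δ * (S g + φ (T g)))) ∂P
        ≤ ENNReal.ofReal (q * Real.exp (-δ * φ v))) (r : ℝ) :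
    P {g | S g ≤ r} ≤ ENNReal.ofReal (Real.exp (2 * δ * ‖φ‖) * Real.exp (δ * r) * q) := by
  have hMb : ∀ v, |φ v| ≤ ‖φ‖ := fun v => φ.norm_coe_le_norm v
  have h1 := mul_meas_ge_le_lintegral (μ := P) (f := fun g => ENNReal.ofReal (Real.exp (-δ * (S g + φ (T g)))))
    (by fun_prop) (ENNReal.ofReal (Real.exp (-δ * (r + ‖φ‖))))
  have hsub : {g | S g ≤ r} ⊆ {g | ENNReal.ofReal (Real.exp (-δ * (r + ‖φ‖))) ≤ ENNReal.ofReal (Real.exp (-δ * (S g + φ (T g))))} := by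
    intro g hg
    have hg : S g ≤ r := hg
    refine ENNReal.ofReal_le_ofReal (Real.exp_le_exp.2 ?_)
    have := (abs_le.1 (hMb (T g))).2
    nlinarith
  have h2 := (mul_le_mul_right (measure_mono (μ := P) hsub) (ENNReal.ofReal (Real.exp (-δ * (r + ‖φ‖))))).trans (h1.trans h)
  have hpos : ENNReal.ofReal (Real.exp (-δ * (r + ‖φ‖))) ≠ 0 := by simp [Real.exp_pos]
  rw [mul_comm, ← ENNReal.le_div_iff_mul_le (Or.inl hpos) (Or.inl ENNReal.ofReal_ne_top),
    ← ENNReal.ofReal_div_of_pos (Real.exp_pos _)] at h2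
  refine h2.trans (ENNReal.ofReal_le_ofReal ?_)
  rw [div_le_iff₀ (Real.exp_pos _)]
  have e : Real.exp (2 * δ * ‖φ‖) * Real.exp (δ * r) * q * Real.exp (-δ * (r + ‖φ‖)) = q * Real.exp (δ * ‖φ‖) := by
    rw [mul_right_comm, ← Real.exp_add, ← Real.exp_add, mul_comm]; congr 2; ring
  rw [e]
  refine mul_le_mul_of_nonneg_left (Real.exp_le_exp.2 ?_) hq
  have := (abs_le.1 (hMb v)).1
  nlinarith

lemma not_solv_inv (μ : Measure SL2) [IsProbabilityMeasure μ]
    (hns : ¬ Group.IsSolvable (Subgroup.closure (measSupp μ))) :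
    ¬ Group.IsSolvable (Subgroup.closure (measSupp (μ.map (fun g => g⁻¹)))) := by
  intro hs
  apply hns
  have hle : Subgroup.closure (measSupp μ) ≤ Subgroup.closure (measSupp (μ.map (fun g => g⁻¹))) := by
    rw [Subgroup.closure_le]
    intro g hg
    have : g⁻¹ ∈ measSupp (μ.map (fun g => g⁻¹)) := by
      intro U hU hgU
      rw [Measure.map_apply measurable_inv hU.measurableSet]
      exact hg _ (hU.preimage continuous_inv) hgU
    have h2 := Subgroup.inv_mem _ (Subgroup.subset_closure this)
    simpa using h2
  exact Group.isSolvable_of_isSolvable_injective (Subgroup.inclusion_injective hle)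

lemma moment_cvp (μ : Measure SL2) [IsProbabilityMeasure μ] {ε : ℝ} (hε : 0 < ε)
    (hexp : Integrable (fun g => Real.exp (ε * ln g)) μ) (n : ℕ) :
    ∫⁻ g, ENNReal.ofReal (Real.exp (ε * ln g)) ∂(cvp μ n)
      ≤ ENNReal.ofReal ((∫ g, Real.exp (ε * ln g) ∂μ + Real.exp (ε * ln 1)) ^ (n + 1)) := by
  set B := ∫ g, Real.exp (ε * ln g) ∂μ
  have hB : 0 ≤ B := integral_nonneg fun g => (Real.exp_pos _).le
  have h1 : ∫⁻ g, ENNReal.ofReal (Real.exp (ε * ln g)) ∂μ = ENNReal.ofReal B :=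
    (ofReal_integral_eq_lintegral_ofReal hexp (ae_of_all _ fun g => (Real.exp_pos _).le)).symm
  have hpos := Real.exp_pos (ε * ln 1)
  induction n with
  | zero =>
    rw [cvp_zero_dirac, lintegral_dirac' _ (by fun_prop)]
    exact ENNReal.ofReal_le_ofReal (by rw [zero_add, pow_one]; linarith)
  | succ n ih =>
    rw [lintegral_cvp_succ μ n (by fun_prop)]
    calc _ ≤ ∫⁻ h, ∫⁻ g, ENNReal.ofReal (Real.exp (ε * ln h)) * ENNReal.ofReal (Real.exp (ε * ln g)) ∂(cvp μ n) ∂μ := by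
          refine lintegral_mono fun h => lintegral_mono fun g => ?_
          rw [← ofReal_exp_add]
          refine ENNReal.ofReal_le_ofReal (Real.exp_le_exp.2 ?_)
          have := ln_mul_le g h
          nlinarith
      _ = ENNReal.ofReal B * ∫⁻ g, ENNReal.ofReal (Real.exp (ε * ln g)) ∂(cvp μ n) := by
          simp_rw [lintegral_const_mul' _ _ ENNReal.ofReal_ne_top]
          rw [lintegral_mul_const _ (by fun_prop), h1]
      _ ≤ ENNReal.ofReal B * ENNReal.ofReal ((B + Real.exp (ε * ln 1)) ^ (n + 1)) := mul_le_mul_right ih _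
      _ ≤ _ := by
          rw [← ENNReal.ofReal_mul hB]
          refine ENNReal.ofReal_le_ofReal ?_
          rw [pow_succ _ (n + 1), mul_comm]
          exact mul_le_mul_of_nonneg_left (by linarith) (by positivity)

/-- The three basic large deviation estimates. -/
theorem factA (μ : Measure SL2) [IsProbabilityMeasure μ] (hmom : HasExpMoment μ)
    (hns : ¬ Group.IsSolvable (Subgroup.closure (measSupp μ))) :
    ∃ δ ρ C ε B : ℝ, 0 < δ ∧ 0 < ρ ∧ ρ < 1 ∧ 1 ≤ C ∧ 0 < ε ∧ 1 ≤ B ∧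
      (∀ n v r, cvp μ n {g | sg g v ≤ r} ≤ ENNReal.ofReal (C * Real.exp (δ * r) * ρ ^ n)) ∧
      (∀ n w, cvp μ n {g | sg g⁻¹ w ≤ 1} ≤ ENNReal.ofReal (C * ρ ^ n)) ∧
      (∀ n x, cvp μ n {g | x ≤ ln g} ≤ ENNReal.ofReal (B ^ (n + 1) * Real.exp (-(ε * x)))) := by
  obtain ⟨ε, hε, hfin⟩ := exists_moment μ hmom
  have hexp := int_exp_ln hfin
  obtain ⟨φ, c, hc, hφ⟩ := drift μ (int_ln hε hexp) hns
  obtain ⟨δ, hδ, ρ, hρ, hρ1, hcon⟩ := contr μ hε hexp φ c hc hφ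
  have : IsProbabilityMeasure (μ.map (fun g => g⁻¹)) := Measure.isProbabilityMeasure_map measurable_inv.aemeasurable
  have hexp' : Integrable (fun g => Real.exp (ε * ln g)) (μ.map (fun g => g⁻¹)) := by
    rw [integrable_map_measure (by fun_prop : Continuous fun g => Real.exp (ε * ln g)).aestronglyMeasurable measurable_inv.aemeasurable]
    refine hexp.congr (ae_of_all _ fun g => ?_)
    simp [ln_inv]
  obtain ⟨φ', c', hc', hφ'⟩ := drift _ (int_ln hε hexp') (not_solv_inv μ hns)
  obtain ⟨δ', hδ', ρ', hρ', hρ1', hcon'⟩ := contr _ hε hexp' φ' c' hc' hφ'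
  have hcon2 : ∀ v, ∫⁻ g, ENNReal.ofReal (Real.exp (-δ' * (sg g⁻¹ v + φ' (sact g⁻¹ v)))) ∂μ
        ≤ ENNReal.ofReal (ρ' * Real.exp (-δ' * φ' v)) := by
    intro v
    have := hcon' v
    rwa [lintegral_map (by fun_prop) measurable_inv] at this
  set C1 := Real.exp (2 * δ * ‖φ‖)
  set C2 := Real.exp (2 * δ' * ‖φ'‖) * Real.exp δ'
  have hC1 : 1 ≤ C1 := Real.one_le_exp (by positivity)
  have hC2 : 0 < C2 := by positivity
  set B := ∫ g, Real.exp (ε * ln g) ∂μ + Real.exp (ε * ln 1)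
  refine ⟨δ, max ρ ρ', max C1 C2, ε, B, hδ, lt_max_of_lt_left hρ, max_lt hρ1 hρ1',
    hC1.trans (le_max_left _ _), hε, ?_, ?_, ?_, ?_⟩
  · have h1 : 1 ≤ Real.exp (ε * ln 1) := Real.one_le_exp (mul_nonneg hε.le (ln_nonneg _))
    have h2 : 0 ≤ ∫ g, Real.exp (ε * ln g) ∂μ := integral_nonneg fun g => (Real.exp_pos _).le
    linarith
  · intro n v r
    refine (tail_of_int φ hδ (pow_nonneg hρ.le n) v (fun g => sg g v) (fun g => sact g v) (by fun_prop) (by fun_prop)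
      (iter_right μ φ hρ hcon n v) r).trans (ENNReal.ofReal_le_ofReal ?_)
    gcongr
    · exact le_max_left _ _
    · exact le_max_left _ _
  · intro n w
    refine (tail_of_int φ' hδ' (pow_nonneg hρ'.le n) w (fun g => sg g⁻¹ w) (fun g => sact g⁻¹ w) (by fun_prop) (by fun_prop)
      (iter_left μ φ' hρ' hcon2 n w) 1).trans (ENNReal.ofReal_le_ofReal ?_)
    rw [mul_one]
    gcongr
    · exact le_max_right _ _
    · exact le_max_right _ _
  · intro n x
    have h1 := mul_meas_ge_le_lintegral (μ := cvp μ n) (f := fun g => ENNReal.ofReal (Real.exp (ε * ln g)))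
      (by fun_prop) (ENNReal.ofReal (Real.exp (ε * x)))
    have hsub : {g | x ≤ ln g} ⊆ {g | ENNReal.ofReal (Real.exp (ε * x)) ≤ ENNReal.ofReal (Real.exp (ε * ln g))} := by
      intro g hg
      have hg : x ≤ ln g := hg
      exact ENNReal.ofReal_le_ofReal (Real.exp_le_exp.2 (by nlinarith))
    have h2 := (mul_le_mul_right (measure_mono (μ := cvp μ n) hsub) (ENNReal.ofReal (Real.exp (ε * x)))).trans
      (h1.trans (moment_cvp μ hε hexp n))
    have hpos : ENNReal.ofReal (Real.exp (ε * x)) ≠ 0 := by simp [Real.exp_pos]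
    rw [mul_comm, ← ENNReal.le_div_iff_mul_le (Or.inl hpos) (Or.inl ENNReal.ofReal_ne_top),
      ← ENNReal.ofReal_div_of_pos (Real.exp_pos _)] at h2
    refine h2.trans (le_of_eq ?_)
    rw [Real.exp_neg]; rfl



/-! ### Renewal sums -/

def Vr (μ : Measure SL2) (F : Sph → ℝ → ENNReal) (K : ℕ) (v : Sph) (t : ℝ) : ENNReal :=
  ∑ n ∈ Finset.range K, ∫⁻ g, F (sact g v) (t - sg g v) ∂(cvp μ n)

lemma meas_Vterm (μ : Measure SL2) [IsProbabilityMeasure μ] {F : Sph → ℝ → ENNReal}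
    (hF : Measurable (Function.uncurry F)) (n : ℕ) :
    Measurable (fun p : Sph × ℝ => ∫⁻ g, F (sact g p.1) (p.2 - sg g p.1) ∂(cvp μ n)) := by
  have : Measurable (fun q : (Sph × ℝ) × SL2 => F (sact q.2 q.1.1) (q.1.2 - sg q.2 q.1.1)) := by
    have h : Measurable (fun q : (Sph × ℝ) × SL2 => (sact q.2 q.1.1, q.1.2 - sg q.2 q.1.1)) := by fun_prop
    exact hF.comp h
  exact this.lintegral_prod_right'

lemma Vr_succ (μ : Measure SL2) [IsProbabilityMeasure μ] {F : Sph → ℝ → ENNReal}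
    (hF : Measurable (Function.uncurry F)) (K : ℕ) (v : Sph) (t : ℝ) :
    Vr μ F (K + 1) v t = F v t + ∫⁻ h, Vr μ F K (sact h v) (t - sg h v) ∂μ := by
  unfold Vr
  have hm : ∀ v t, Measurable (fun g : SL2 => F (sact g v) (t - sg g v)) := fun v t => by
    have h : Measurable (fun g : SL2 => (sact g v, t - sg g v)) := by fun_prop
    exact hF.comp h
  rw [Finset.sum_range_succ', add_comm, lintegral_finsetSum]
  · congr 1
    · rw [cvp_zero_dirac, lintegral_dirac' _ (hm v t), sact_one, sg_one, sub_zero]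
    · refine Finset.sum_congr rfl fun n _ => ?_
      rw [lintegral_cvp_succ μ n (hm v t)]
      refine lintegral_congr fun h => lintegral_congr fun g => ?_
      rw [sact_mul, sg_mul]; congr 1; ring
  · intro n _
    have h : Measurable (fun h : SL2 => (sact h v, t - sg h v)) := by fun_prop
    exact (meas_Vterm μ hF n).comp h

lemma meas_Vr (μ : Measure SL2) [IsProbabilityMeasure μ] {F : Sph → ℝ → ENNReal}
    (hF : Measurable (Function.uncurry F)) (K : ℕ) (v : Sph) (t : ℝ) :
    Measurable (fun h : SL2 => Vr μ F K (sact h v) (t - sg h v)) := by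
  unfold Vr
  refine Finset.measurable_fun_sum _ fun n _ => ?_
  have h : Measurable (fun h : SL2 => (sact h v, t - sg h v)) := by fun_prop
  exact (meas_Vterm μ hF n).comp h

lemma Vr_mono (μ : Measure SL2) {F G : Sph → ℝ → ENNReal} (h : ∀ u r, F u r ≤ G u r) (K : ℕ) (v : Sph) (t : ℝ) :
    Vr μ F K v t ≤ Vr μ G K v t :=
  Finset.sum_le_sum fun _ _ => lintegral_mono fun _ => h _ _

def FA (A : Set Sph) : Sph → ℝ → ENNReal := fun u r =>
  (A ×ˢ Set.Icc (-1 : ℝ) 0).indicator 1 (u, r)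

lemma meas_FA {A : Set Sph} (hA : MeasurableSet A) : Measurable (Function.uncurry (FA A)) :=
  measurable_one.indicator (hA.prod measurableSet_Icc)

lemma FA_le (A : Set Sph) (u : Sph) (r : ℝ) : FA A u r ≤ FA Set.univ u r :=
  Set.indicator_le_indicator_of_subset (Set.prod_mono (Set.subset_univ _) subset_rfl) (fun _ => zero_le) _

lemma FA_zero (A : Set Sph) (u : Sph) (r : ℝ) (h : r < -1 ∨ 0 < r) : FA A u r = 0 := by
  unfold FA
  refine Set.indicator_of_notMem ?_ _
  rintro ⟨_, h1, h2⟩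
  simp only at h1 h2
  rcases h with h | h <;> linarith

lemma FA_term (μ : Measure SL2) [IsProbabilityMeasure μ] {A : Set Sph} (hA : MeasurableSet A) (n : ℕ) (v : Sph) (t : ℝ) :
    ∫⁻ g, FA A (sact g v) (t - sg g v) ∂(cvp μ n)
      = cvp μ n {g | sact g v ∈ A ∧ t ≤ sg g v ∧ sg g v ≤ t + 1} := by
  have e : {g | sact g v ∈ A ∧ t ≤ sg g v ∧ sg g v ≤ t + 1}
      = (fun g => (sact g v, t - sg g v)) ⁻¹' (A ×ˢ Set.Icc (-1 : ℝ) 0) := by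
    ext g
    simp only [Set.mem_ofPred_eq, Set.mem_preimage, Set.mem_prod, Set.mem_Icc]
    constructor
    · rintro ⟨h1, h2, h3⟩; exact ⟨h1, by linarith, by linarith⟩
    · rintro ⟨h1, h2, h3⟩; exact ⟨h1, by linarith, by linarith⟩
  have h : Measurable (fun g : SL2 => (sact g v, t - sg g v)) := by fun_prop
  rw [e, ← lintegral_indicator_one (h (hA.prod measurableSet_Icc))]
  rfl

lemma Vr_FA (μ : Measure SL2) [IsProbabilityMeasure μ] {A : Set Sph} (hA : MeasurableSet A) (K : ℕ) (v : Sph) (t : ℝ) :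
    Vr μ (FA A) K v t
      = ∑ n ∈ Finset.range K, cvp μ n {g | sact g v ∈ A ∧ t ≤ sg g v ∧ sg g v ≤ t + 1} :=
  Finset.sum_congr rfl fun n _ => FA_term μ hA n v t

lemma geom_sum_le {D q : ℝ} (hD : 0 ≤ D) (h0 : 0 ≤ q) (h1 : q < 1) (x : ℕ → ENNReal)
    (hx : ∀ n, x n ≤ ENNReal.ofReal (D * q ^ n)) (K : ℕ) :
    ∑ n ∈ Finset.range K, x n ≤ ENNReal.ofReal (D * (1 - q)⁻¹) := by
  calc ∑ n ∈ Finset.range K, x n ≤ ∑ n ∈ Finset.range K, ENNReal.ofReal (D * q ^ n) := Finset.sum_le_sum fun n _ => hx n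
    _ = ENNReal.ofReal (∑ n ∈ Finset.range K, D * q ^ n) := (ENNReal.ofReal_sum_of_nonneg fun n _ => by positivity).symm
    _ ≤ _ := by
      refine ENNReal.ofReal_le_ofReal ?_
      rw [← Finset.mul_sum, ← tsum_geometric_of_lt_one h0 h1]
      exact mul_le_mul_of_nonneg_left ((summable_geometric_of_lt_one h0 h1).sum_le_tsum _ (fun n _ => by positivity)) hD

/-- uniform bound for the renewal measure of a unit interval -/
lemma renewal_unit (μ : Measure SL2) [IsProbabilityMeasure μ] {δ ρ C : ℝ} (hδ : 0 < δ) (hρ : 0 < ρ) (hρ1 : ρ < 1) (hC : 1 ≤ C)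
    (h1 : ∀ n v r, cvp μ n {g | sg g v ≤ r} ≤ ENNReal.ofReal (C * Real.exp (δ * r) * ρ ^ n))
    (K : ℕ) (v : Sph) (t : ℝ) :
    Vr μ (FA Set.univ) K v t ≤ ENNReal.ofReal (C * Real.exp δ * (1 - ρ)⁻¹) := by
  induction K generalizing v t with
  | zero => simp [Vr]
  | succ K ih =>
    by_cases ht : t < -1 ∨ 0 < t
    · rw [Vr_succ μ (meas_FA MeasurableSet.univ), FA_zero _ _ _ ht, zero_add]
      refine (lintegral_mono fun h => ih _ _).trans ?_
      simp
    · push Not at ht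
      rw [Vr_FA μ MeasurableSet.univ]
      refine geom_sum_le (by positivity) hρ.le hρ1 _ (fun n => ?_) _
      refine (measure_mono ?_).trans ((h1 n v 1).trans (le_of_eq (by rw [mul_one])))
      rintro g ⟨_, _, hg⟩
      show sg g v ≤ 1
      linarith [ht.2]

lemma sum_split {D κ η lam : ℝ} (hD : 0 < D) (hη : 0 < η) (hκ : 0 < κ) (hl : 0 < lam) :
    ∃ D' η' : ℝ, 0 < D' ∧ 0 < η' ∧ ∀ (s : ℝ) (x : ℕ → ENNReal), 0 < s →
      (∀ n, x n ≤ ENNReal.ofReal (D * Real.exp (-(η * s)))) →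
      (∀ n, x n ≤ ENNReal.ofReal (D * Real.exp (κ * s) * Real.exp (-(lam * n)))) →
      ∀ K, ∑ n ∈ Finset.range K, x n ≤ ENNReal.ofReal (D' * Real.exp (-(η' * s))) := by
  set θ := η / (2 * (η + κ)) with hθ
  have θ0 : 0 < θ := by positivity
  have θe : θ * (η + κ) = η / 2 := by rw [hθ]; field_simp
  set q := Real.exp (-(θ * lam)) with hq
  have q0 : 0 < q := Real.exp_pos _
  have q1 : q < 1 := Real.exp_lt_one_iff.2 (by have := mul_pos θ0 hl; linarith)
  refine ⟨D * (1 - q)⁻¹, η / 2, mul_pos hD (inv_pos.2 (by linarith)), by positivity, ?_⟩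
  intro s x hs h1 h2 K
  refine (geom_sum_le (D := D * Real.exp (-(η / 2 * s))) (by positivity) q0.le q1 x (fun n => ?_) K).trans (le_of_eq ?_)
  · have hqn : q ^ n = Real.exp (-(θ * lam * n)) := by rw [hq, ← Real.exp_nat_mul]; congr 1; ring
    rw [hqn, mul_assoc, ← Real.exp_add]
    by_cases hc : θ * lam * n ≤ η / 2 * s
    · refine (h1 n).trans (ENNReal.ofReal_le_ofReal (mul_le_mul_of_nonneg_left (Real.exp_le_exp.2 ?_) hD.le))
      linarith
    · push Not at hc
      refine (h2 n).trans (ENNReal.ofReal_le_ofReal ?_)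
      rw [mul_assoc, ← Real.exp_add]
      refine mul_le_mul_of_nonneg_left (Real.exp_le_exp.2 ?_) hD.le
      have h3 : (η + κ) * s < lam * n := by
        rw [← θe] at hc
        have : θ * ((η + κ) * s) < θ * (lam * n) := by linarith
        exact lt_of_mul_lt_mul_left this θ0.le
      have θ1 : θ < 1 := by rw [hθ, div_lt_one (by positivity)]; linarith
      have h4 : (1 - θ) * ((η + κ) * s) ≤ (1 - θ) * (lam * n) := mul_le_mul_of_nonneg_left h3.le (by linarith)
      have h5 : (1 - θ) * ((η + κ) * s) = (η + κ) * s - η / 2 * s := by rw [← θe]; ring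
      linarith
  · congr 1; ring



/-! ### Non-concentration, and the conclusion -/

lemma cvp_sup_mono (μ : Measure SL2) [IsProbabilityMeasure μ] {S : Set Sph} (hS : MeasurableSet S) {m : ℕ} {q : ENNReal}
    (h : ∀ v, cvp μ m {g | sact g v ∈ S} ≤ q) (k : ℕ) (v : Sph) : cvp μ (m + k) {g | sact g v ∈ S} ≤ q := by
  induction k generalizing v with
  | zero => exact h v
  | succ k ih =>
    have hm : Measurable (fun g : SL2 => sact g v) := by fun_prop
    rw [← add_assoc, cvp_apply_succ μ (m + k) (A := {g | sact g v ∈ S}) (hm hS)]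
    calc ∫⁻ h, cvp μ (m + k) {g | g * h ∈ {g | sact g v ∈ S}} ∂μ ≤ ∫⁻ _, q ∂μ := by
          refine lintegral_mono fun h => ?_
          have := ih (sact h v)
          simp only [← sact_mul] at this
          exact this
      _ = q := by simp

lemma meas_near (w : Sph) (r : ℝ) : MeasurableSet {u : Sph | |dt u w| ≤ r} :=
  measurableSet_le (by fun_prop : Measurable fun u : Sph => |dt u w|) measurable_const

lemma near_core (μ : Measure SL2) [IsProbabilityMeasure μ] {δ ρ C ε B A : ℝ} (hρ : 0 < ρ) (hC : 1 ≤ C)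
    (hB : 1 ≤ B) (hA : B = ρ * Real.exp (ε * A))
    (h1 : ∀ n v r, cvp μ n {g | sg g v ≤ r} ≤ ENNReal.ofReal (C * Real.exp (δ * r) * ρ ^ n))
    (h2 : ∀ n w, cvp μ n {g | sg g⁻¹ w ≤ 1} ≤ ENNReal.ofReal (C * ρ ^ n))
    (h3 : ∀ n x, cvp μ n {g | x ≤ ln g} ≤ ENNReal.ofReal (B ^ (n + 1) * Real.exp (-(ε * x))))
    (m : ℕ) (v w : Sph) :
    cvp μ m {g | |dt (sact g v) w| ≤ Real.exp (-(A * m))} ≤ ENNReal.ofReal ((B + C * Real.exp δ + C) * ρ ^ m) := by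
  have hsub : {g | |dt (sact g v) w| ≤ Real.exp (-(A * m))} ⊆
      ({g | A * m ≤ ln g} ∪ {g | sg g v ≤ 1}) ∪ {g | sg g⁻¹ w ≤ 1} := by
    intro g hg
    have hg : |dt (sact g v) w| ≤ Real.exp (-(A * m)) := hg
    by_contra hcon
    simp only [Set.mem_union, Set.mem_ofPred_eq, not_or, not_le] at hcon
    obtain ⟨⟨ha, hb⟩, hc⟩ := hcon
    have h4 := nv_inv_le g v w
    rw [← exp_sg, ← exp_sg] at h4
    have h5 : Real.exp (ln g) * |dt (sact g v) w| ≤ 1 := by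
      calc Real.exp (ln g) * |dt (sact g v) w| ≤ Real.exp (A * m) * Real.exp (-(A * m)) := by gcongr
        _ = 1 := by rw [← Real.exp_add]; simp
    have e1 := Real.exp_one_gt_d9
    have h6 : Real.exp 1 < Real.exp (sg g v) := Real.exp_lt_exp.2 hb
    have h7 : Real.exp 1 < Real.exp (sg g⁻¹ w) := Real.exp_lt_exp.2 hc
    have h8 : 1 / Real.exp (sg g v) ≤ 1 / 2 := by
      apply one_div_le_one_div_of_le <;> linarith
    linarith
  have hp : 0 ≤ ρ ^ m := by positivity
  have hC0 : 0 ≤ C := by linarith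
  refine (measure_mono hsub).trans ((measure_union_le _ _).trans ?_)
  rw [add_mul, add_mul, ENNReal.ofReal_add (by positivity) (by positivity), ENNReal.ofReal_add (by positivity) (by positivity)]
  refine add_le_add ((measure_union_le _ _).trans (add_le_add ?_ ?_)) (h2 m w)
  · refine (h3 m _).trans (ENNReal.ofReal_le_ofReal (le_of_eq ?_))
    have : B ^ m * Real.exp (-(ε * (A * m))) = ρ ^ m := by
      rw [hA, mul_pow, ← Real.exp_nat_mul, mul_assoc, ← Real.exp_add]
      have : (m : ℝ) * (ε * A) + -(ε * (A * m)) = 0 := by ring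
      rw [this]; simp
    rw [pow_succ, mul_right_comm, this, mul_comm]
  · simpa using h1 m v 1

lemma near_decay (μ : Measure SL2) [IsProbabilityMeasure μ] {δ ρ C ε B : ℝ} (hρ : 0 < ρ) (hρ1 : ρ < 1) (hC : 1 ≤ C)
    (hε : 0 < ε) (hB : 1 ≤ B)
    (h1 : ∀ n v r, cvp μ n {g | sg g v ≤ r} ≤ ENNReal.ofReal (C * Real.exp (δ * r) * ρ ^ n))
    (h2 : ∀ n w, cvp μ n {g | sg g⁻¹ w ≤ 1} ≤ ENNReal.ofReal (C * ρ ^ n))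
    (h3 : ∀ n x, cvp μ n {g | x ≤ ln g} ≤ ENNReal.ofReal (B ^ (n + 1) * Real.exp (-(ε * x)))) :
    ∃ D η : ℝ, 0 < D ∧ 0 < η ∧ ∀ (s : ℝ) (n : ℕ) (v w : Sph), 0 < s →
      cvp μ n {g | |dt (sact g v) w| ≤ Real.exp (-s) ∧ s ≤ sg g v} ≤ ENNReal.ofReal (D * Real.exp (-(η * s))) := by
  set A := Real.log (B / ρ) / ε with hAdef
  have hBρ : 1 < B / ρ := by rw [lt_div_iff₀ hρ]; linarith
  have hA0 : 0 < A := div_pos (Real.log_pos hBρ) hε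
  have hεA : ε * A = Real.log (B / ρ) := by rw [hAdef]; field_simp
  have hexp : Real.exp (ε * A) = B / ρ := by rw [hεA, Real.exp_log (by linarith)]
  have hA : B = ρ * Real.exp (ε * A) := by rw [hexp]; field_simp
  have hBe : B ≤ Real.exp (ε * A) := by
    rw [hexp, le_div_iff₀ hρ]; nlinarith
  set lam := -Real.log ρ with hlam
  have hl : 0 < lam := by have := Real.log_neg hρ hρ1; linarith
  have hρe : ρ = Real.exp (-lam) := by rw [hlam, neg_neg, Real.exp_log hρ]
  set C3 := B + C * Real.exp δ + C
  have hC3 : 0 < C3 := by have : 0 < C := by linarith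
                          positivity
  refine ⟨C3 * Real.exp lam + 1, min (lam / (2 * A)) (ε / 2), by positivity, by positivity, ?_⟩
  intro s n v w hs
  by_cases hc : s < 2 * A * (n + 1)
  · set m := ⌊s / (2 * A)⌋₊ with hm
    have m1 : (m : ℝ) ≤ s / (2 * A) := Nat.floor_le (by positivity)
    have m2 : s / (2 * A) < m + 1 := Nat.lt_floor_add_one _
    have hsn : s / (2 * A) < n + 1 := by rw [div_lt_iff₀ (by positivity)]; linarith
    have mn : m ≤ n := by
      have : (m : ℝ) < n + 1 := by linarith
      have : m < n + 1 := by exact_mod_cast this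
      omega
    have m3 : A * m ≤ s := by
      rw [le_div_iff₀ (by positivity)] at m1
      have : 0 ≤ A * m := by positivity
      linarith
    obtain ⟨k, rfl⟩ := Nat.exists_eq_add_of_le mn
    refine (measure_mono ?_).trans ((cvp_sup_mono μ (meas_near w (Real.exp (-(A * m))))
      (fun v => near_core μ hρ hC hB hA h1 h2 h3 m v w) k v).trans (ENNReal.ofReal_le_ofReal ?_))
    · rintro g ⟨hg, _⟩
      exact hg.trans (Real.exp_le_exp.2 (by linarith))
    · have : ρ ^ m ≤ Real.exp lam * Real.exp (-(min (lam / (2 * A)) (ε / 2) * s)) := by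
        rw [hρe, ← Real.exp_nat_mul, ← Real.exp_add]
        refine Real.exp_le_exp.2 ?_
        have h5 : min (lam / (2 * A)) (ε / 2) * s ≤ lam / (2 * A) * s := mul_le_mul_of_nonneg_right (min_le_left _ _) hs.le
        have h6 : lam / (2 * A) * s = lam * (s / (2 * A)) := by ring
        have h7 : lam * (s / (2 * A)) ≤ lam * (m + 1) := mul_le_mul_of_nonneg_left m2.le hl.le
        linarith
      have h8 := mul_le_mul_of_nonneg_left this hC3.le
      have := Real.exp_pos (-(min (lam / (2 * A)) (ε / 2) * s))
      linarith
  · push Not at hc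
    refine (measure_mono (t := {g | s ≤ ln g}) ?_).trans ((h3 n s).trans (ENNReal.ofReal_le_ofReal ?_))
    · rintro g ⟨_, hg⟩
      exact hg.trans (sg_le g v)
    · have h5 : B ^ (n + 1) ≤ Real.exp (ε * (s / 2)) := by
        calc B ^ (n + 1) ≤ Real.exp (ε * A) ^ (n + 1) := by gcongr
          _ = Real.exp (ε * (A * (n + 1))) := by rw [← Real.exp_nat_mul]; congr 1; push_cast; ring
          _ ≤ _ := by refine Real.exp_le_exp.2 (mul_le_mul_of_nonneg_left (by linarith) hε.le)
      calc B ^ (n + 1) * Real.exp (-(ε * s)) ≤ Real.exp (ε * (s / 2)) * Real.exp (-(ε * s)) := by gcongr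
        _ = 1 * Real.exp (-(ε / 2 * s)) := by rw [← Real.exp_add, one_mul]; congr 1; ring
        _ ≤ _ := by
          gcongr
          · have : 0 ≤ C3 * Real.exp lam := by positivity
            linarith
          · exact min_le_right _ _

lemma near_sum (μ : Measure SL2) [IsProbabilityMeasure μ] {δ ρ C ε B : ℝ} (hδ : 0 < δ) (hρ : 0 < ρ) (hρ1 : ρ < 1) (hC : 1 ≤ C)
    (hε : 0 < ε) (hB : 1 ≤ B)
    (h1 : ∀ n v r, cvp μ n {g | sg g v ≤ r} ≤ ENNReal.ofReal (C * Real.exp (δ * r) * ρ ^ n))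
    (h2 : ∀ n w, cvp μ n {g | sg g⁻¹ w ≤ 1} ≤ ENNReal.ofReal (C * ρ ^ n))
    (h3 : ∀ n x, cvp μ n {g | x ≤ ln g} ≤ ENNReal.ofReal (B ^ (n + 1) * Real.exp (-(ε * x)))) :
    ∃ D η : ℝ, 0 < D ∧ 0 < η ∧ ∀ (s t : ℝ) (K : ℕ) (v w : Sph), 0 < s → s ≤ t → t ≤ 2 * s →
      Vr μ (FA {u | |dt u w| ≤ Real.exp (-s)}) K v t ≤ ENNReal.ofReal (D * Real.exp (-(η * s))) := by
  obtain ⟨D, η, hD, hη, hd⟩ := near_decay μ hρ hρ1 hC hε hB h1 h2 h3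
  set lam := -Real.log ρ with hlam
  have hl : 0 < lam := by have := Real.log_neg hρ hρ1; linarith
  have hρe : ρ = Real.exp (-lam) := by rw [hlam, neg_neg, Real.exp_log hρ]
  have hC0 : 0 < C := by linarith
  have hCe : 0 < C * Real.exp δ := by positivity
  obtain ⟨D', η', hD', hη', hsum⟩ := sum_split (D := D + C * Real.exp δ) (κ := 2 * δ) (by positivity) hη (by positivity) hl
  refine ⟨D', η', hD', hη', fun s t K v w hs hst hts => ?_⟩
  rw [Vr_FA μ (meas_near _ _)]
  refine hsum s _ hs (fun n => ?_) (fun n => ?_) K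
  · refine (measure_mono ?_).trans ((hd s n v w hs).trans (ENNReal.ofReal_le_ofReal ?_))
    · rintro g ⟨ha, hb, _⟩
      exact ⟨ha, hst.trans hb⟩
    · gcongr; linarith
  · refine (measure_mono (t := {g | sg g v ≤ 2 * s + 1}) ?_).trans ((h1 n v _).trans (ENNReal.ofReal_le_ofReal ?_))
    · rintro g ⟨_, _, hb⟩
      show sg g v ≤ 2 * s + 1
      linarith
    · have e1 : ρ ^ n = Real.exp (-(lam * n)) := by rw [hρe, ← Real.exp_nat_mul]; congr 1; ring
      have e2 : Real.exp (δ * (2 * s + 1)) = Real.exp δ * Real.exp (2 * δ * s) := by rw [← Real.exp_add]; congr 1; ring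
      rw [e1, e2, ← mul_assoc]
      gcongr; linarith



def ees (θ s : ℝ) : Sph → ℝ → ENNReal := fun _ r => if s ≤ r then ENNReal.ofReal (Real.exp (-(θ * (r - s)))) else 0

lemma meas_ees (θ s : ℝ) : Measurable (Function.uncurry (ees θ s)) := by
  unfold ees
  refine Measurable.ite (measurableSet_le measurable_const measurable_snd) ?_ measurable_const
  fun_prop

lemma cvp_one (μ : Measure SL2) [IsProbabilityMeasure μ] : cvp μ 1 = μ := by
  rw [cvp_succ_map, cvp_zero_dirac, Measure.dirac_prod, Measure.map_map (by fun_prop) (by fun_prop)]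
  have : ((fun p : SL2 × SL2 => p.1 * p.2) ∘ Prod.mk (1 : SL2)) = id := by
    funext g; simp
  rw [this, Measure.map_id]

lemma ees_le {θ : ℝ} (hθ : 0 < θ) (s : ℝ) (u : Sph) (r : ℝ) :
    ees θ s u r ≤ ∑' i : ℕ, ENNReal.ofReal (Real.exp (-θ) ^ i) * FA Set.univ u (r - (s + i + 1)) := by
  unfold ees
  split_ifs with h
  · refine le_trans ?_ (ENNReal.le_tsum ⌊r - s⌋₊)
    have m1 : ((⌊r - s⌋₊ : ℕ) : ℝ) ≤ r - s := Nat.floor_le (by linarith)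
    have m2 : r - s < (⌊r - s⌋₊ : ℕ) + 1 := Nat.lt_floor_add_one _
    have : FA Set.univ u (r - (s + (⌊r - s⌋₊ : ℕ) + 1)) = 1 := by
      unfold FA
      rw [Set.indicator_of_mem]
      · rfl
      · exact ⟨Set.mem_univ _, by simp only; linarith, by simp only; linarith⟩
    rw [this, mul_one, ← Real.exp_nat_mul]
    refine ENNReal.ofReal_le_ofReal (Real.exp_le_exp.2 ?_)
    nlinarith
  · exact zero_le

lemma Vr_ees (μ : Measure SL2) [IsProbabilityMeasure μ] {θ M : ℝ} (hθ : 0 < θ) (hM : 0 ≤ M)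
    (h : ∀ K v t, Vr μ (FA Set.univ) K v t ≤ ENNReal.ofReal M) (s : ℝ) (K : ℕ) (v : Sph) (t : ℝ) :
    Vr μ (ees θ s) K v t ≤ ENNReal.ofReal ((1 - Real.exp (-θ))⁻¹ * M) := by
  have q1 : Real.exp (-θ) < 1 := Real.exp_lt_one_iff.2 (by linarith)
  have hmeas : ∀ i : ℕ, Measurable fun g => ENNReal.ofReal (Real.exp (-θ) ^ i) *
      FA Set.univ (sact g v) (t - sg g v - (s + i + 1)) := fun i => by
    refine Measurable.const_mul ?_ _
    have h : Measurable (fun g : SL2 => (sact g v, t - sg g v - (s + i + 1))) := by fun_prop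
    exact (meas_FA MeasurableSet.univ).comp h
  have hmeas2 : ∀ i : ℕ, Measurable fun g => FA Set.univ (sact g v) (t - sg g v - (s + i + 1)) := fun i => by
    have h : Measurable (fun g : SL2 => (sact g v, t - sg g v - (s + i + 1))) := by fun_prop
    exact (meas_FA MeasurableSet.univ).comp h
  calc Vr μ (ees θ s) K v t
      ≤ ∑ n ∈ Finset.range K, ∑' i : ℕ, ENNReal.ofReal (Real.exp (-θ) ^ i) *
          ∫⁻ g, FA Set.univ (sact g v) (t - (s + i + 1) - sg g v) ∂(cvp μ n) := by
        refine Finset.sum_le_sum fun n _ => ?_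
        refine (lintegral_mono fun g => ees_le hθ s _ _).trans (le_of_eq ?_)
        rw [lintegral_tsum fun i => (hmeas i).aemeasurable]
        refine tsum_congr fun i => ?_
        rw [lintegral_const_mul _ (hmeas2 i)]
        congr 1
        refine lintegral_congr fun g => ?_
        congr 1; ring
    _ = ∑' i : ℕ, ENNReal.ofReal (Real.exp (-θ) ^ i) * Vr μ (FA Set.univ) K v (t - (s + i + 1)) := by
        rw [← Summable.tsum_finsetSum fun _ _ => ENNReal.summable]
        refine tsum_congr fun i => ?_
        rw [Vr, Finset.mul_sum]
    _ ≤ ∑' i : ℕ, ENNReal.ofReal (Real.exp (-θ) ^ i) * ENNReal.ofReal M :=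
        ENNReal.tsum_le_tsum fun i => by gcongr; exact h _ _ _
    _ = ENNReal.ofReal ((1 - Real.exp (-θ))⁻¹ * M) := by
        rw [ENNReal.tsum_mul_right, ← ENNReal.ofReal_tsum_of_nonneg (fun i => by positivity)
          (summable_geometric_of_lt_one (Real.exp_pos _).le q1),
          tsum_geometric_of_lt_one (Real.exp_pos _).le q1, ENNReal.ofReal_mul (inv_nonneg.2 (by linarith))]

lemma Vr_near (μ : Measure SL2) [IsProbabilityMeasure μ] {D η ε B M θ s : ℝ} {A : Set Sph} (hA : MeasurableSet A)
    (hD : 0 < D) (hM : 0 ≤ M) (hθ : 0 < θ) (hθη : 2 * θ ≤ η) (hθε : 2 * θ ≤ ε) (hs : 0 < s)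
    (hU : ∀ K v t, Vr μ (FA Set.univ) K v t ≤ ENNReal.ofReal M)
    (hN : ∀ K v t, s ≤ t → t ≤ 2 * s → Vr μ (FA A) K v t ≤ ENNReal.ofReal (D * Real.exp (-(η * s))))
    (h3 : ∀ n x, cvp μ n {g | x ≤ ln g} ≤ ENNReal.ofReal (B ^ (n + 1) * Real.exp (-(ε * x))))
    (K : ℕ) (v : Sph) (t : ℝ) (hst : s ≤ t) :
    Vr μ (FA A) K v t ≤ ENNReal.ofReal ((D + M * B ^ 2) * Real.exp (-(θ * s))) * Vr μ (ees θ s) K v t := by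
  have hB2 : 0 ≤ M * B ^ 2 := by positivity
  induction K generalizing v t with
  | zero => simp [Vr]
  | succ K ih =>
    have hees : ees θ s v t = ENNReal.ofReal (Real.exp (-(θ * (t - s)))) := if_pos hst
    rw [Vr_succ μ (meas_ees θ s), hees, mul_add, ← ENNReal.ofReal_mul (by positivity), mul_assoc, ← Real.exp_add]
    by_cases hc : t ≤ 2 * s
    · refine (hN _ v t hst hc).trans (le_trans (ENNReal.ofReal_le_ofReal ?_) le_self_add)
      refine mul_le_mul (by linarith) (Real.exp_le_exp.2 ?_) (Real.exp_pos _).le (by positivity)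
      nlinarith
    · push Not at hc
      rw [Vr_succ μ (meas_FA hA), FA_zero _ _ _ (Or.inr (by linarith)), zero_add,
        ← lintegral_const_mul _ (meas_Vr μ (meas_ees θ s) K v t), add_comm]
      have hms : MeasurableSet {g | t - s ≤ ln g} := measurableSet_le measurable_const (by fun_prop)
      have htail : μ {g | t - s ≤ ln g} ≤ ENNReal.ofReal (B ^ 2 * Real.exp (-(ε * (t - s)))) := by
        have := h3 1 (t - s)
        rwa [cvp_one] at this
      have hpt : ∀ h : SL2, Vr μ (FA A) K (sact h v) (t - sg h v) ≤
          ENNReal.ofReal ((D + M * B ^ 2) * Real.exp (-(θ * s))) * Vr μ (ees θ s) K (sact h v) (t - sg h v)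
          + {g | t - s ≤ ln g}.indicator (fun _ => ENNReal.ofReal M) h := by
        intro h
        by_cases hh : s ≤ t - sg h v
        · exact (ih _ _ hh).trans le_self_add
        · push Not at hh
          have : h ∈ {g | t - s ≤ ln g} := by
            have := sg_le h v
            show t - s ≤ ln h
            linarith
          rw [Set.indicator_of_mem this]
          exact ((Vr_mono μ (FA_le A) K _ _).trans (hU _ _ _)).trans le_add_self
      refine (lintegral_mono hpt).trans ?_
      rw [lintegral_add_right _ (measurable_const.indicator hms), lintegral_indicator_const hms]
      gcongr
      refine (mul_le_mul_right htail _).trans ?_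
      rw [← ENNReal.ofReal_mul hM, ← mul_assoc]
      refine ENNReal.ofReal_le_ofReal (mul_le_mul (by linarith) (Real.exp_le_exp.2 ?_) (Real.exp_pos _).le (by positivity))
      nlinarith

theorem main_aux (μ : Measure SL2) [IsProbabilityMeasure μ] (hmom : HasExpMoment μ)
    (hns : ¬ Group.IsSolvable (Subgroup.closure (measSupp μ))) :
    ∃ C > 0, ∃ θ > 0, ∀ (s t : ℝ) (K : ℕ) (v w : Sph), 0 < s → s ≤ t →
      Vr μ (FA {u | |dt u w| ≤ Real.exp (-s)}) K v t ≤ ENNReal.ofReal (C * Real.exp (-(θ * s))) := by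
  obtain ⟨δ, ρ, C, ε, B, hδ, hρ, hρ1, hC, hε, hB, h1, h2, h3⟩ := factA μ hmom hns
  obtain ⟨D, η, hD, hη, hN⟩ := near_sum μ hδ hρ hρ1 hC hε hB h1 h2 h3
  have hU := renewal_unit μ hδ hρ hρ1 hC h1
  set M := C * Real.exp δ * (1 - ρ)⁻¹
  have hM : 0 < M := by
    have : 0 < 1 - ρ := by linarith
    have : 0 < C := by linarith
    positivity
  set θ := min (η / 2) (ε / 2)
  have hθ : 0 < θ := by positivity
  have q1 : Real.exp (-θ) < 1 := Real.exp_lt_one_iff.2 (by linarith)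
  have q2 : 0 < (1 - Real.exp (-θ))⁻¹ := inv_pos.2 (by linarith)
  refine ⟨(D + M * B ^ 2) * ((1 - Real.exp (-θ))⁻¹ * M), by positivity, θ, hθ, ?_⟩
  intro s t K v w hs hst
  have := Vr_near μ (θ := θ) (s := s) (meas_near w (Real.exp (-s))) hD hM.le hθ
    (by have : θ ≤ η / 2 := min_le_left _ _
        linarith) (by have : θ ≤ ε / 2 := min_le_right _ _
                      linarith) hs hU (fun K v t a b => hN s t K v w hs a b) h3 K v t hst
  refine this.trans ((mul_le_mul_right (Vr_ees μ hθ hM.le hU s K v t) _).trans (le_of_eq ?_))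
  rw [← ENNReal.ofReal_mul (by positivity)]
  congr 1; ring

theorem main_final (μ : Measure SL2) [IsProbabilityMeasure μ] (hmom : HasExpMoment μ)
    (hns : ¬ Group.IsSolvable (Subgroup.closure (measSupp μ))) :
    ∃ C > 0, ∃ ε' > 0, ∀ (s a t : ℝ) (x x' : PX), 0 < s → 0 < a → 5 * s < t →
      (∑' n, μpi μ n {g | projDist (act (word g) x) x' ≤ Real.exp (-s) ∧ cocycle (word g) x - t ∈ Set.Icc 0 a})
        ≤ ENNReal.ofReal (C * (1 + a) ^ 2 * Real.exp (-(ε' * s))) := by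
  obtain ⟨C, hC, θ, hθ, hm⟩ := main_aux μ hmom hns
  refine ⟨C, hC, θ, hθ, fun s a t x x' hs ha hst => ?_⟩
  refine ENNReal.tsum_le_of_sum_range_le fun K => ?_
  set J := ⌊a⌋₊ + 1 with hJ
  have j1 : ((⌊a⌋₊ : ℕ) : ℝ) ≤ a := Nat.floor_le ha.le
  have j2 : a < (⌊a⌋₊ : ℕ) + 1 := Nat.lt_floor_add_one _
  calc _ ≤ ∑ n ∈ Finset.range K, ∑ j ∈ Finset.range J,
        cvp μ n {g | sact g (toS x) ∈ {u | |dt u (toS x')| ≤ Real.exp (-s)} ∧ t + j ≤ sg g (toS x) ∧ sg g (toS x) ≤ t + j + 1} := by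
        refine Finset.sum_le_sum fun n _ => ?_
        rw [event_eq μ n s a t x x']
        refine (measure_mono ?_).trans (measure_biUnion_finset_le (Finset.range J) _)
        rintro g ⟨ha1, ha2, ha3⟩
        have k1 : ((⌊sg g (toS x) - t⌋₊ : ℕ) : ℝ) ≤ sg g (toS x) - t := Nat.floor_le (by linarith)
        have k2 : sg g (toS x) - t < (⌊sg g (toS x) - t⌋₊ : ℕ) + 1 := Nat.lt_floor_add_one _
        have k3 : ⌊sg g (toS x) - t⌋₊ ≤ ⌊a⌋₊ := Nat.floor_le_floor (by linarith)
        simp only [Set.mem_iUnion, Finset.mem_range]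
        exact ⟨⌊sg g (toS x) - t⌋₊, by omega, ha1, by linarith, by linarith⟩
    _ = ∑ j ∈ Finset.range J, Vr μ (FA {u | |dt u (toS x')| ≤ Real.exp (-s)}) K (toS x) (t + j) := by
        rw [Finset.sum_comm]
        refine Finset.sum_congr rfl fun j _ => ?_
        rw [Vr_FA μ (meas_near _ _)]
    _ ≤ ∑ j ∈ Finset.range J, ENNReal.ofReal (C * Real.exp (-(θ * s))) :=
        Finset.sum_le_sum fun j _ => hm s (t + j) K _ _ hs (by have : (0 : ℝ) ≤ j := by positivity
                                                               linarith)
    _ = ENNReal.ofReal (J * (C * Real.exp (-(θ * s)))) := by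
        rw [Finset.sum_const, Finset.card_range, nsmul_eq_mul, ENNReal.ofReal_mul (p := (J : ℝ)) (by positivity), ENNReal.ofReal_natCast]
    _ ≤ _ := by
        refine ENNReal.ofReal_le_ofReal ?_
        have e : (J : ℝ) ≤ (1 + a) ^ 2 := by rw [hJ]; push_cast; nlinarith
        calc (J : ℝ) * (C * Real.exp (-(θ * s))) ≤ (1 + a) ^ 2 * (C * Real.exp (-(θ * s))) := by gcongr
          _ = _ := by ring


theorem renewal_independence_cocycle
    (μ : Measure SL2) [IsProbabilityMeasure μ]
    (hmom : HasExpMoment μ) (hzd : ZariskiDense μ) :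
    ∃ C > (0 : ℝ), ∃ ε' > (0 : ℝ), ∀ (s a t : ℝ) (x x' : PX),
      0 < s → 0 < a → 5 * s < t →
      (∑' n : ℕ, μpi μ n {g | projDist (act (word g) x) x' ≤ Real.exp (-s) ∧
          cocycle (word g) x - t ∈ Set.Icc 0 a}) ≤
        ENNReal.ofReal (C * (1 + a) ^ 2 * Real.exp (-(ε' * s))) := by
  exact main_final μ hmom hzd

end
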